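/- arXiv:2402.09647 — 2 statements merged into one kernel-verified Lean document; each statement's English description precedes it below -/
import Mathlib

section
/- Let α, β ∈ ℝ with β ≠ 0 and such that 1, α, α² are linearly independent over ℚ, and let g : ℤ → ℤ be given by g(n) = ⌊β·n·⌊α·n⌉⌉. Then the first-order theory of the structure (ℤ; <, +, g) is undecidable; that is, the set of sentences of the first-order language with one binary relation symbol <, one binary function symbol +, and one unary function symbol g that are true in ℤ (with the standard order and addition, and g interpreted as above) is not a computable set of sentences (under an effective encoding of sentences). -/
/-!
STATEMENT 0: Let α, β ∈ ℝ with β ≠ 0 and 1, α, α² linearly independent over ℚ, and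
g : ℤ → ℤ given by g(n) = ⌊β·n·⌊α·n⌉⌉ (nearest integers). Then the first-order theory
of (ℤ; <, +, g) is undecidable.
-/

open FirstOrder Language

namespace Stmt0

/-- The language with one binary relation `<`, one binary function `+`,
and one unary function `g`. -/
def L : Language :=
  ⟨fun n => match n with | 1 => Unit | 2 => Unit | _ => Empty,
   fun n => match n with | 2 => Unit | _ => Empty⟩

instance instEncF : (n : ℕ) → Encodable (L.Functions n)
  | 0 => inferInstanceAs (Encodable Empty)
  | 1 => inferInstanceAs (Encodable Unit)
  | 2 => inferInstanceAs (Encodable Unit)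
  | (_ + 3) => inferInstanceAs (Encodable Empty)

instance instEncR : (n : ℕ) → Encodable (L.Relations n)
  | 0 => inferInstanceAs (Encodable Empty)
  | 1 => inferInstanceAs (Encodable Empty)
  | 2 => inferInstanceAs (Encodable Unit)
  | (_ + 3) => inferInstanceAs (Encodable Empty)

/-- Partial inverse to `BoundedFormula.listEncode` on sentences. -/
def decodeSentence
    (l : List ((Σ k, L.Term (Empty ⊕ Fin k)) ⊕ ((Σ n, L.Relations n) ⊕ ℕ))) :
    Option L.Sentence :=
  (BoundedFormula.listDecode l)[0]?.bind
    (fun x => if h : x.1 = 0 then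
      some (cast (congrArg (L.BoundedFormula Empty) h) x.2) else none)

/-- An effective encoding of sentences (via their encodings as lists of symbols). -/
instance instEncSentence : Encodable L.Sentence :=
  Encodable.ofLeftInjection
    (fun φ => BoundedFormula.listEncode φ)
    decodeSentence
    (fun φ => by
      have h := BoundedFormula.listDecode_encode_list (L := L) (α := Empty) [⟨0, φ⟩]
      rw [List.flatMap_singleton] at h
      have h' : BoundedFormula.listDecode (BoundedFormula.listEncode φ) =
          [⟨0, φ⟩] := h
      simp [decodeSentence, h'])

/-- The structure on ℤ interpreting `<`, `+` and `g`. -/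
def S (g : ℤ → ℤ) : L.Structure ℤ where
  funMap {n} f x :=
    match n, f with
    | 1, _ => g (x 0)
    | 2, _ => x 0 + x 1
  RelMap {n} r x :=
    match n, r with
    | 2, _ => x 0 < x 1

/-- The first-order theory of (ℤ; <, +, g), as a set of codes of sentences. -/
def theoryCodes (g : ℤ → ℤ) : Set ℕ :=
  {c | ∃ φ : L.Sentence, Encodable.encode φ = c ∧ @Sentence.Realize L ℤ (S g) φ}

/-!
Write `e(n) = α n - ⌊α n⌉`, and `≈` for equality up to a bounded error. If
`⌊α (m + n)⌉ = ⌊α m⌉ + ⌊α n⌉ + c`, then the additive defect `D(m, n) = g (m + n) - g m - g n`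
satisfies `D(m, n) ≈ β (m ⌊α n⌉ + n ⌊α m⌉ + c (m + n))`. For fixed `n = j` with `e(j) ≥ 0` it grows
linearly in `m`, with a slope that depends only on the carry `c ∈ {0, 1}`. Comparing slopes makes
the set of `m` with a carry definable, hence also a condition `|e(m)| < θ`, and multiplication by
`α` and by `β` is definable up to a bounded error.

If `e(m)` and `e(n)` are small, then `D(m, n) ≈ β (2 α m n - n e(m) - m e(n))`, so it remains to
define `n e(m)` up to a bounded error. By Kronecker's theorem for `1, α, α²` there is an `x` such
that `e(x)` and `e(⌊α x⌉) - e(m)` are smaller in absolute value than every `e(k)` with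
`0 < k ≤ |n|`. By Dirichlet's theorem they stay bounded when multiplied by `n`, which gives
`D(n, ⌊α x⌉) - α D(n, x) ≈ -β n e(m)`. A function at bounded distance from multiplication defines
multiplication exactly, by scaling one factor and rounding, so the halting problem is reducible to
the theory.
-/

section Definability

open Set

variable {𝓛 : Language} {M : Type*} [𝓛.Structure M] {ι : Type}

/-- Definability without parameters of a predicate on tuples. It is stated for predicates rather
than sets so that `fun_prop` can follow the shape of the defining formula. -/
@[fun_prop]
def DefinablePred (𝓛 : Language) [𝓛.Structure M] (P : (ι → M) → Prop) : Prop :=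
  (∅ : Set M).Definable 𝓛 {v | P v}

variable {P Q : (ι → M) → Prop}

@[fun_prop]
theorem DefinablePred.not (hP : DefinablePred 𝓛 P) : DefinablePred 𝓛 fun v => ¬ P v :=
  hP.compl

@[fun_prop]
theorem DefinablePred.and (hP : DefinablePred 𝓛 P) (hQ : DefinablePred 𝓛 Q) :
    DefinablePred 𝓛 fun v => P v ∧ Q v :=
  hP.inter hQ

@[fun_prop]
theorem DefinablePred.or (hP : DefinablePred 𝓛 P) (hQ : DefinablePred 𝓛 Q) :
    DefinablePred 𝓛 fun v => P v ∨ Q v :=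
  hP.union hQ

@[fun_prop]
theorem DefinablePred.imp (hP : DefinablePred 𝓛 P) (hQ : DefinablePred 𝓛 Q) :
    DefinablePred 𝓛 fun v => P v → Q v := by
  simpa only [imp_iff_not_or] using hP.not.or hQ

@[fun_prop]
theorem DefinablePred.exists {R : (ι → M) → M → Prop}
    (hR : DefinablePred 𝓛 fun w : Option ι → M => R (fun i => w (some i)) (w none)) :
    DefinablePred 𝓛 fun v => ∃ x, R v x := by
  have h := (hR.preimage_comp
    (fun o : Option ι => (o.elim (Sum.inr ()) Sum.inl : ι ⊕ Unit))).exists_of_finite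
  refine (congrArg _ (Set.ext fun v => ?_)).mp h
  exact ⟨fun ⟨u, hu⟩ => ⟨u (), hu⟩, fun ⟨x, hx⟩ => ⟨fun _ => x, hx⟩⟩

@[fun_prop]
theorem DefinablePred.forall {R : (ι → M) → M → Prop}
    (hR : DefinablePred 𝓛 fun w : Option ι → M => R (fun i => w (some i)) (w none)) :
    DefinablePred 𝓛 fun v => ∀ x, R v x := by
  simpa only [not_exists, not_not] using (DefinablePred.exists (R := fun v x => ¬ R v x) hR.not).not

@[fun_prop]
theorem DefinablePred.eq {f g : (ι → M) → M} (hf : DefinableFun 𝓛 ∅ f) (hg : DefinableFun 𝓛 ∅ g) :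
    DefinablePred 𝓛 fun v => f v = g v :=
  hf.ofPred_eq hg

theorem DefinablePred.comp₂ {R : M → M → Prop}
    (hR : DefinablePred 𝓛 fun v : Fin 2 → M => R (v 0) (v 1)) {f g : (ι → M) → M}
    (hf : DefinableFun 𝓛 ∅ f) (hg : DefinableFun 𝓛 ∅ g) :
    DefinablePred 𝓛 fun v => R (f v) (g v) := by
  have hfg : DefinableMap 𝓛 ∅ fun v => ![f v, g v] := by simp [DefinableMap, hf, hg]
  exact Definable.preimage_map hfg hR

theorem DefinablePred.relabel {κ : Type} (hP : DefinablePred 𝓛 P) (σ : ι → κ) :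
    DefinablePred 𝓛 fun w : κ → M => P fun i => w (σ i) :=
  hP.preimage_comp σ

theorem definableFun_of_graph {f : (ι → M) → M}
    (hf : DefinablePred 𝓛 fun w : Option ι → M => f (fun i => w (some i)) = w none) :
    DefinableFun 𝓛 ∅ f :=
  hf

end Definability

section Presburger

open Set

/-- The structures on `ℤ` in which the order and the addition are definable. -/
class ExpandsPresburger (𝓛 : Language) [𝓛.Structure ℤ] : Prop where
  definablePred_lt : DefinablePred 𝓛 fun v : Fin 2 → ℤ => v 0 < v 1
  definableFun_add : DefinableFun 𝓛 ∅ fun v : Fin 2 → ℤ => v 0 + v 1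

variable {𝓛 : Language} [𝓛.Structure ℤ] {ι : Type} {f g : (ι → ℤ) → ℤ}

/-- Definability of a predicate of one variable. -/
@[fun_prop]
def DefinablePred₁ (𝓛 : Language) [𝓛.Structure ℤ] (P : ℤ → Prop) : Prop :=
  DefinablePred 𝓛 fun v : Fin 1 → ℤ => P (v 0)

/-- Definability of a function of one variable. -/
@[fun_prop]
def DefinableFun₁ (𝓛 : Language) [𝓛.Structure ℤ] (F : ℤ → ℤ) : Prop :=
  DefinableFun 𝓛 ∅ fun v : Fin 1 → ℤ => F (v 0)

@[fun_prop]
theorem DefinablePred₁.comp {P : ℤ → Prop} (hP : DefinablePred₁ 𝓛 P) (hf : DefinableFun 𝓛 ∅ f) :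
    DefinablePred 𝓛 fun v => P (f v) :=
  Definable.preimage_map (F := fun v (_ : Fin 1) => f v) (fun _ => hf) hP

theorem DefinablePred₁.not {P : ℤ → Prop} (hP : DefinablePred₁ 𝓛 P) :
    DefinablePred₁ 𝓛 fun x => ¬ P x :=
  DefinablePred.not hP

@[fun_prop]
theorem DefinableFun₁.comp {F : ℤ → ℤ} (hF : DefinableFun₁ 𝓛 F) (hf : DefinableFun 𝓛 ∅ f) :
    DefinableFun 𝓛 ∅ fun v => F (f v) :=
  DefinableFun.comp (g := fun v (_ : Fin 1) => f v) (fun _ => hf) hF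

theorem definableFun_comp₂ {F : ℤ → ℤ → ℤ}
    (hF : DefinableFun 𝓛 ∅ fun v : Fin 2 → ℤ => F (v 0) (v 1))
    (hf : DefinableFun 𝓛 ∅ f) (hg : DefinableFun 𝓛 ∅ g) :
    DefinableFun 𝓛 ∅ fun v => F (f v) (g v) := by
  have hfg : DefinableMap 𝓛 ∅ fun v => ![f v, g v] := by simp [DefinableMap, hf, hg]
  exact hF.comp hfg

variable [ExpandsPresburger 𝓛]

@[fun_prop]
theorem DefinablePred.lt (hf : DefinableFun 𝓛 ∅ f) (hg : DefinableFun 𝓛 ∅ g) :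
    DefinablePred 𝓛 fun v => f v < g v :=
  ExpandsPresburger.definablePred_lt.comp₂ hf hg

@[fun_prop]
theorem DefinablePred.le (hf : DefinableFun 𝓛 ∅ f) (hg : DefinableFun 𝓛 ∅ g) :
    DefinablePred 𝓛 fun v => f v ≤ g v := by
  simpa only [not_lt] using (DefinablePred.lt hg hf).not

@[fun_prop]
theorem definableFun_add (hf : DefinableFun 𝓛 ∅ f) (hg : DefinableFun 𝓛 ∅ g) :
    DefinableFun 𝓛 ∅ fun v => f v + g v :=
  definableFun_comp₂ ExpandsPresburger.definableFun_add hf hg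

@[fun_prop]
theorem definableFun_sub (hf : DefinableFun 𝓛 ∅ f) (hg : DefinableFun 𝓛 ∅ g) :
    DefinableFun 𝓛 ∅ fun v => f v - g v := by
  refine definableFun_comp₂ (F := fun x y => x - y) (definableFun_of_graph ?_) hf hg
  simp only [sub_eq_iff_eq_add]
  fun_prop

theorem definableFun_zero : DefinableFun 𝓛 ∅ fun _ : ι → ℤ => 0 := by
  have h : DefinablePred 𝓛 fun w : Option ι → ℤ => w none + w none = w none := by fun_prop
  refine definableFun_of_graph ?_
  convert h using 2
  omega

theorem definableFun_one : DefinableFun 𝓛 ∅ fun _ : ι → ℤ => 1 := by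
  have hpos : DefinablePred₁ 𝓛 fun x => 0 < x := DefinablePred.lt definableFun_zero (by fun_prop)
  have h : DefinablePred 𝓛 fun w : Option ι → ℤ => 0 < w none ∧ ∀ y, 0 < y → w none ≤ y := by
    fun_prop
  refine definableFun_of_graph ?_
  convert h using 2
  exact ⟨fun h => by grind, fun ⟨h, h'⟩ => (h' 1 one_pos).antisymm' h⟩

@[fun_prop]
theorem definableFun_neg (hf : DefinableFun 𝓛 ∅ f) : DefinableFun 𝓛 ∅ fun v => -f v := by
  simpa only [zero_sub] using definableFun_sub definableFun_zero hf

@[fun_prop]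
theorem definableFun_const_mul (n : ℤ) (hf : DefinableFun 𝓛 ∅ f) :
    DefinableFun 𝓛 ∅ fun v => n * f v := by
  induction n with
  | zero => simpa only [zero_mul] using definableFun_zero
  | succ n ih => simpa only [add_mul, one_mul] using definableFun_add ih hf
  | pred n ih => simpa only [sub_mul, one_mul] using definableFun_sub ih hf

@[fun_prop]
theorem definableFun_int (n : ℤ) : DefinableFun 𝓛 ∅ fun _ : ι → ℤ => n := by
  simpa only [mul_one] using definableFun_const_mul n definableFun_one

@[fun_prop]
theorem definableFun_abs (hf : DefinableFun 𝓛 ∅ f) : DefinableFun 𝓛 ∅ fun v => |f v| := by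
  have h : DefinableFun 𝓛 ∅ fun v => if 0 ≤ f v then f v else -f v :=
    .ite (DefinablePred.le (definableFun_int 0) hf) hf (definableFun_neg hf)
  convert h using 2
  grind

theorem definableFun_ediv_const {N : ℤ} (hN : 0 < N) (hf : DefinableFun 𝓛 ∅ f) :
    DefinableFun 𝓛 ∅ fun v => f v / N := by
  have h : DefinableFun₁ 𝓛 fun x => x / N := by
    refine definableFun_of_graph ?_
    simp only [Int.ediv_eq_iff_of_pos hN, mul_comm _ N]
    fun_prop
  exact h.comp hf

theorem definableFun_sum {κ : Type*} (s : Finset κ) {F : κ → (ι → ℤ) → ℤ}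
    (hF : ∀ k, DefinableFun 𝓛 ∅ (F k)) : DefinableFun 𝓛 ∅ fun v => ∑ k ∈ s, F k v := by
  classical
  induction s using Finset.induction_on with
  | empty => simpa only [Finset.sum_empty] using definableFun_int 0
  | insert k s hk ih => simpa only [Finset.sum_insert hk] using definableFun_add (hF k) ih

theorem definableFun_mul_of_bounded {K : ℤ} (hf : DefinableFun 𝓛 ∅ f) (hK : ∀ v, |f v| ≤ K)
    (hg : DefinableFun 𝓛 ∅ g) : DefinableFun 𝓛 ∅ fun v => f v * g v := by
  have h : DefinableFun 𝓛 ∅ fun v => ∑ k ∈ Finset.Icc (-K) K, if f v = k then k * g v else 0 :=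
    definableFun_sum _ fun k => .ite (DefinablePred.eq hf (definableFun_int k))
      (definableFun_const_mul k hg) (definableFun_int 0)
  convert h using 2 with v
  rw [Finset.sum_ite_eq, if_pos (Finset.mem_Icc.2 (abs_le.1 (hK v)))]

theorem exists_definableFun_choice {R : (ι → ℤ) → ℤ → Prop}
    (hR : DefinablePred 𝓛 fun w : Option ι → ℤ => R (fun i => w (some i)) (w none)) :
    ∃ h : (ι → ℤ) → ℤ, DefinableFun 𝓛 ∅ h ∧ ∀ v, (∃ y, R v y) → R v (h v) := by
  classical
  -- The values of `|4 * y - 1|` are distinct, so the choice minimizing it is unique.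
  let IsChoice (v : ι → ℤ) (x : ℤ) : Prop := R v x ∧ ∀ y, R v y → |4 * x - 1| ≤ |4 * y - 1|
  have exists_isChoice (v) (hv : ∃ y, R v y) : ∃ x, IsChoice v x :=
    ⟨Function.argminOn (fun y => (4 * y - 1).natAbs) {y | R v y} hv,
      Function.argminOn_mem _ {y | R v y} hv, fun y hy => by
        simpa only [Int.abs_eq_natAbs, Nat.cast_le] using
          Function.argminOn_le (fun y : ℤ => (4 * y - 1).natAbs) {y | R v y} hy⟩
  have eq_of_isChoice {v x y} (hx : IsChoice v x) (hy : IsChoice v y) : x = y := by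
    have h := (hx.2 y hy.1).antisymm (hy.2 x hx.1)
    rcases abs_eq_abs.1 h with h | h <;> omega
  choose! h hh using exists_isChoice
  refine ⟨fun v => if ∃ y, R v y then h v else 0, definableFun_of_graph ?_, fun v hv => ?_⟩
  · have hR' := hR.relabel (Option.map some : Option ι → Option (Option ι))
    have hdef : DefinablePred 𝓛 fun w : Option ι → ℤ => IsChoice (fun i => w (some i)) (w none) ∨
        (¬ ∃ y, R (fun i => w (some i)) y) ∧ w none = 0 :=
      (hR.and (.forall (hR'.imp (by fun_prop)))).or
        ((DefinablePred.exists hR').not.and (by fun_prop))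
    convert hdef with w
    split_ifs with hw
    · exact ⟨fun e => .inl (e ▸ hh _ hw), fun hc => eq_of_isChoice (hh _ hw) (by tauto)⟩
    · exact ⟨fun e => .inr ⟨hw, e.symm⟩, fun hc => (hc.resolve_left fun hc => hw ⟨_, hc.1⟩).2.symm⟩
  · simpa only [if_pos hv] using (hh v hv).1

end Presburger

section Arithmetic

open Set

/-- The structures on `ℤ` in which order, addition and multiplication are definable. -/
class ExpandsArithmetic (𝓛 : Language) [𝓛.Structure ℤ] : Prop extends ExpandsPresburger 𝓛 where
  definableFun_mul : DefinableFun 𝓛 ∅ fun v : Fin 2 → ℤ => v 0 * v 1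

/-- Definability of a natural number depending on a tuple of integers. Natural number variables are
encoded as `Int.toNat` of integer variables. -/
@[fun_prop]
def DefinableNat (𝓛 : Language) [𝓛.Structure ℤ] {ι : Type} (f : (ι → ℤ) → ℕ) : Prop :=
  DefinableFun 𝓛 ∅ fun v => (f v : ℤ)

variable {𝓛 : Language} [𝓛.Structure ℤ] {ι : Type} {f g : (ι → ℤ) → ℕ}

@[fun_prop]
theorem DefinablePred.nat_eq (hf : DefinableNat 𝓛 f) (hg : DefinableNat 𝓛 g) :
    DefinablePred 𝓛 fun v => f v = g v := by
  simpa only [Nat.cast_inj] using DefinablePred.eq hf hg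

theorem DefinableNat.comp {F : ℕ → ℕ} (hF : DefinableNat 𝓛 fun v : Fin 1 → ℤ => F (v 0).toNat)
    (hf : DefinableNat 𝓛 f) : DefinableNat 𝓛 fun v => F (f v) := by
  simpa using! DefinableFun₁.comp (F := fun x => (F x.toNat : ℤ)) hF hf

theorem DefinableNat.ite {P : (ι → ℤ) → Prop} [DecidablePred P] (hP : DefinablePred 𝓛 P)
    (hf : DefinableNat 𝓛 f) (hg : DefinableNat 𝓛 g) :
    DefinableNat 𝓛 fun v => if P v then f v else g v := by
  simpa only [DefinableNat, apply_ite (Nat.cast : ℕ → ℤ)] using DefinableFun.ite hP hf hg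

@[fun_prop]
theorem DefinablePred.exists_nat {R : (ι → ℤ) → ℕ → Prop}
    (hR : DefinablePred 𝓛 fun w : Option ι → ℤ => R (fun i => w (some i)) (w none).toNat) :
    DefinablePred 𝓛 fun v => ∃ n, R v n := by
  convert DefinablePred.exists (R := fun v x => R v x.toNat) hR using 2 with v
  exact (Function.RightInverse.surjective Int.toNat_natCast).exists

@[fun_prop]
theorem DefinablePred.forall_nat {R : (ι → ℤ) → ℕ → Prop}
    (hR : DefinablePred 𝓛 fun w : Option ι → ℤ => R (fun i => w (some i)) (w none).toNat) :
    DefinablePred 𝓛 fun v => ∀ n, R v n := by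
  convert DefinablePred.forall (R := fun v x => R v x.toNat) hR using 2 with v
  exact (Function.RightInverse.surjective Int.toNat_natCast).forall

/-- Definability of the graph of a partial function on the natural numbers. -/
def DefinablePartrec (𝓛 : Language) [𝓛.Structure ℤ] (F : ℕ →. ℕ) : Prop :=
  DefinablePred 𝓛 fun v : Fin 2 → ℤ => (v 1).toNat ∈ F (v 0).toNat

@[fun_prop]
theorem DefinablePartrec.comp {F : ℕ →. ℕ} (hF : DefinablePartrec 𝓛 F)
    (hf : DefinableNat 𝓛 f) (hg : DefinableNat 𝓛 g) : DefinablePred 𝓛 fun v => g v ∈ F (f v) := by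
  have h : DefinablePred 𝓛 fun v => (g v : ℤ).toNat ∈ F (f v : ℤ).toNat :=
    DefinablePred.comp₂ (R := fun x y : ℤ => y.toNat ∈ F x.toNat) hF hf hg
  simpa only [Int.toNat_natCast] using h

section Presburger

variable [ExpandsPresburger 𝓛]

@[fun_prop]
theorem DefinablePred.nat_lt (hf : DefinableNat 𝓛 f) (hg : DefinableNat 𝓛 g) :
    DefinablePred 𝓛 fun v => f v < g v := by
  simpa only [Nat.cast_lt] using DefinablePred.lt hf hg

@[fun_prop]
theorem definableNat_toNat {f : (ι → ℤ) → ℤ} (hf : DefinableFun 𝓛 ∅ f) :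
    DefinableNat 𝓛 fun v => (f v).toNat := by
  have h : DefinableFun 𝓛 ∅ fun v => if 0 ≤ f v then f v else 0 :=
    .ite (DefinablePred.le (definableFun_int 0) hf) hf (definableFun_int 0)
  unfold DefinableNat
  convert h using 2
  grind

@[fun_prop]
theorem definableNat_const (n : ℕ) : DefinableNat 𝓛 fun _ : ι → ℤ => n :=
  definableFun_int n

@[fun_prop]
theorem definableNat_add (hf : DefinableNat 𝓛 f) (hg : DefinableNat 𝓛 g) :
    DefinableNat 𝓛 fun v => f v + g v := by
  simpa only [DefinableNat, Nat.cast_add] using definableFun_add hf hg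

theorem definableNat_of_graph {f : (ι → ℤ) → ℕ}
    (hf : DefinablePred 𝓛 fun w : Option ι → ℤ => f (fun i => w (some i)) = (w none).toNat) :
    DefinableNat 𝓛 f := by
  refine definableFun_of_graph ?_
  have h : DefinablePred 𝓛 fun w : Option ι → ℤ => 0 ≤ w none := by fun_prop
  convert hf.and h using 2
  omega

end Presburger

variable [ExpandsArithmetic 𝓛]

@[fun_prop]
theorem definableNat_mul (hf : DefinableNat 𝓛 f) (hg : DefinableNat 𝓛 g) :
    DefinableNat 𝓛 fun v => f v * g v := by
  simpa only [DefinableNat, Nat.cast_mul] using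
    definableFun_comp₂ ExpandsArithmetic.definableFun_mul hf hg

@[fun_prop]
theorem definableNat_pair (hf : DefinableNat 𝓛 f) (hg : DefinableNat 𝓛 g) :
    DefinableNat 𝓛 fun v => Nat.pair (f v) (g v) := by
  unfold Nat.pair
  exact .ite (.nat_lt hf hg) (by fun_prop) (by fun_prop)

@[fun_prop]
theorem definableNat_unpair_fst (hf : DefinableNat 𝓛 f) :
    DefinableNat 𝓛 fun v => (f v).unpair.1 := by
  refine DefinableNat.comp (F := fun n => n.unpair.1) (definableNat_of_graph ?_) hf
  have h : DefinablePred 𝓛 fun w : Option (Fin 1) → ℤ =>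
      ∃ y, Nat.pair (w none).toNat y = (w (some 0)).toNat := by fun_prop
  convert h with w
  exact ⟨fun e => ⟨_, e ▸ Nat.pair_unpair _⟩, fun ⟨y, e⟩ => by rw [← e, Nat.unpair_pair]⟩

@[fun_prop]
theorem definableNat_unpair_snd (hf : DefinableNat 𝓛 f) :
    DefinableNat 𝓛 fun v => (f v).unpair.2 := by
  refine DefinableNat.comp (F := fun n => n.unpair.2) (definableNat_of_graph ?_) hf
  have h : DefinablePred 𝓛 fun w : Option (Fin 1) → ℤ =>
      ∃ y, Nat.pair y (w none).toNat = (w (some 0)).toNat := by fun_prop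
  convert h with w
  exact ⟨fun e => ⟨_, e ▸ Nat.pair_unpair _⟩, fun ⟨y, e⟩ => by rw [← e, Nat.unpair_pair]⟩

@[fun_prop]
theorem definableNat_mod_succ (hf : DefinableNat 𝓛 f) (hg : DefinableNat 𝓛 g) :
    DefinableNat 𝓛 fun v => f v % (g v + 1) := by
  have h : DefinableNat 𝓛 fun v : Fin 2 → ℤ => (v 0).toNat % ((v 1).toNat + 1) := by
    refine definableNat_of_graph ?_
    have h : DefinablePred 𝓛 fun w : Option (Fin 2) → ℤ => (w none).toNat < (w (some 1)).toNat + 1 ∧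
        ∃ q, ((w (some 1)).toNat + 1) * q + (w none).toNat = (w (some 0)).toNat := by fun_prop
    convert h with w
    refine ⟨fun e => e ▸ ⟨Nat.mod_lt _ (Nat.succ_pos _), _, Nat.div_add_mod _ _⟩, ?_⟩
    rintro ⟨hlt, q, hq⟩
    rw [← hq, Nat.mul_add_mod, Nat.mod_eq_of_lt hlt]
  simpa using! definableFun_comp₂ (F := fun x y => (x.toNat % (y.toNat + 1) : ℕ)) h hf hg

@[fun_prop]
theorem definableNat_beta (hf : DefinableNat 𝓛 f) (hg : DefinableNat 𝓛 g) :
    DefinableNat 𝓛 fun v => Nat.beta (f v) (g v) := by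
  unfold Nat.beta
  fun_prop

theorem exists_beta_eq (s : ℕ → ℕ) (n : ℕ) : ∃ c, ∀ k ≤ n, Nat.beta c k = s k := by
  refine ⟨Nat.unbeta ((List.range (n + 1)).map s), fun k hk => ?_⟩
  simpa using Nat.beta_unbeta_coe ((List.range (n + 1)).map s) ⟨k, by simp; omega⟩

theorem mem_prec_iff_exists_beta (f h : ℕ →. ℕ) (a n z : ℕ) :
    z ∈ (Nat.rec (f a) (fun y IH => IH.bind fun i => h (Nat.pair a (Nat.pair y i))) n : Part ℕ) ↔
      ∃ c, Nat.beta c 0 ∈ f a ∧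
        (∀ y < n, Nat.beta c (y + 1) ∈ h (Nat.pair a (Nat.pair y (Nat.beta c y)))) ∧
        Nat.beta c n = z := by
  constructor
  · intro hz
    obtain ⟨s, h0, hsucc, hn⟩ : ∃ s : ℕ → ℕ, s 0 ∈ f a ∧
        (∀ y < n, s (y + 1) ∈ h (Nat.pair a (Nat.pair y (s y)))) ∧ s n = z := by
      induction n generalizing z with
      | zero => exact ⟨fun _ => z, hz, by simp, rfl⟩
      | succ n ih =>
        obtain ⟨i, hi, hz⟩ := Part.mem_bind_iff.1 hz
        obtain ⟨s, h0, hsucc, rfl⟩ := ih i hi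
        refine ⟨Function.update s (n + 1) z, by simpa using h0, fun y hy => ?_, by simp⟩
        rcases Nat.lt_succ_iff_lt_or_eq.1 hy with hy | rfl
        · simpa [Function.update_of_ne, hy.ne, (hy.trans n.lt_succ_self).ne] using hsucc y hy
        · simpa using hz
    obtain ⟨c, hc⟩ := exists_beta_eq s n
    refine ⟨c, by rwa [hc 0 n.zero_le], fun y hy => ?_, (hc n le_rfl).trans hn⟩
    rw [hc _ hy, hc _ hy.le]
    exact hsucc y hy
  · rintro ⟨c, h0, hsucc, rfl⟩
    induction n with
    | zero => exact h0
    | succ n ih =>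
      exact Part.mem_bind_iff.2
        ⟨_, ih fun y hy => hsucc y (hy.trans n.lt_succ_self), hsucc n n.lt_succ_self⟩

theorem DefinablePartrec.prec {F G : ℕ →. ℕ} (hF : DefinablePartrec 𝓛 F)
    (hG : DefinablePartrec 𝓛 G) :
    DefinablePartrec 𝓛 (Nat.unpaired fun a n =>
      n.rec (F a) fun y IH => IH.bind fun i => G (Nat.pair a (Nat.pair y i))) := by
  have h : DefinablePred 𝓛 fun v : Fin 2 → ℤ => ∃ c, Nat.beta c 0 ∈ F (v 0).toNat.unpair.1 ∧
      (∀ y < (v 0).toNat.unpair.2, Nat.beta c (y + 1) ∈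
        G (Nat.pair (v 0).toNat.unpair.1 (Nat.pair y (Nat.beta c y)))) ∧
      Nat.beta c (v 0).toNat.unpair.2 = (v 1).toNat := by fun_prop
  unfold DefinablePartrec
  convert h
  exact mem_prec_iff_exists_beta F G _ _ _

theorem DefinablePartrec.rfind {F : ℕ →. ℕ} (hF : DefinablePartrec 𝓛 F) :
    DefinablePartrec 𝓛 fun a =>
      Nat.rfind fun n => (fun m => decide (m = 0)) <$> F (Nat.pair a n) := by
  have h : DefinablePred 𝓛 fun v : Fin 2 → ℤ => 0 ∈ F (Nat.pair (v 0).toNat (v 1).toNat) ∧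
      ∀ y < (v 1).toNat, ∃ z, z ∈ F (Nat.pair (v 0).toNat y) ∧ ¬ z = 0 := by fun_prop
  unfold DefinablePartrec
  convert h
  refine Nat.mem_rfind.trans ?_
  simp only [Part.map_eq_map, Part.mem_map_iff, decide_eq_true_eq, decide_eq_false_iff_not,
    exists_eq_right]

theorem definablePartrec_of_partrec {F : ℕ →. ℕ} (hF : Nat.Partrec F) : DefinablePartrec 𝓛 F := by
  induction hF with
  | zero =>
    simp only [DefinablePartrec, pure, PFun.pure, Part.mem_some_iff]
    fun_prop
  | succ =>
    simp only [DefinablePartrec, PFun.coe_val, Part.mem_some_iff, Nat.succ_eq_add_one]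
    fun_prop
  | left =>
    simp only [DefinablePartrec, PFun.coe_val, Part.mem_some_iff]
    fun_prop
  | right =>
    simp only [DefinablePartrec, PFun.coe_val, Part.mem_some_iff]
    fun_prop
  | @pair F G _ _ hF hG =>
    simp only [DefinablePartrec, Seq.seq, Part.map_eq_map, Part.mem_bind_iff, Part.mem_map_iff,
      exists_exists_and_eq_and]
    fun_prop
  | @comp F G _ _ hF hG =>
    have h : DefinablePred 𝓛 fun v : Fin 2 → ℤ =>
        ∃ k, k ∈ G (v 0).toNat ∧ (v 1).toNat ∈ F k := by fun_prop
    unfold DefinablePartrec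
    convert h
    exact Part.mem_bind_iff
  | prec _ _ hF hG => exact hF.prec hG
  | rfind _ hF => exact hF.rfind

theorem definablePred_of_rePred {P : ℕ → Prop} (hP : REPred P) :
    DefinablePred₁ 𝓛 fun x => P x.toNat := by
  have hF : DefinablePartrec 𝓛 fun n => (Part.assert (P n) fun _ => Part.some ()).map fun _ => 0 :=
    definablePartrec_of_partrec (Partrec.nat_iff.1 (hP.map (Computable.const 0).to₂))
  have h : DefinablePred 𝓛 fun v : Fin 1 → ℤ =>
      0 ∈ (Part.assert (P (v 0).toNat) fun _ => Part.some ()).map fun _ => 0 :=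
    hF.comp (by fun_prop) (by fun_prop)
  unfold DefinablePred₁
  convert h
  simp

end Arithmetic

section Reduction

open Nat.Partrec (Code)

/-- The symbol for addition. -/
def addSymbol : L.Functions 2 := ()

theorem expandsPresburger (g : ℤ → ℤ) : @ExpandsPresburger L (S g) := by
  let _ := S g
  let ltSymbol : L.Relations 2 := ()
  have hlt : (∅ : Set ℤ).Definable L {v : Fin 2 → ℤ | v 0 < v 1} :=
    Set.empty_definable_iff.2 ⟨ltSymbol.formula₂ (Term.var 0) (Term.var 1), rfl⟩
  exact ⟨hlt, Set.DefinableFun.fun_symbol addSymbol⟩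

theorem definableFun₁_symbol (g : ℤ → ℤ) : @DefinableFun₁ L (S g) g := by
  let _ := S g
  let gSymbol : L.Functions 1 := ()
  exact Set.DefinableFun.fun_symbol gSymbol

theorem primrec_encode_cons {α β : Type*} [Encodable α] [Primcodable β] {x : β → α}
    {l : β → List α} (hx : Primrec fun b => Encodable.encode (x b))
    (hl : Primrec fun b => Encodable.encode (l b)) :
    Primrec fun b => Encodable.encode (x b :: l b) :=
  Primrec.succ.comp (Primrec₂.natPair.comp hx hl)

/-- The term `x₀ + (x₀ + (⋯ + x₀))` with `n + 1` occurrences of `x₀`. It stands for `n + 1` once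
`x₀` is known to be `1`, which is definable although the language has no constants. -/
def succMulTerm : ℕ → L.Term (Empty ⊕ Fin 2)
  | 0 => &0
  | n + 1 => addSymbol.apply₂ (&0) (succMulTerm n)

theorem realize_succMulTerm (g : ℤ → ℤ) (n : ℕ) (v : Empty ⊕ Fin 2 → ℤ) :
    @Term.realize L ℤ (S g) _ v (succMulTerm n) = (n + 1) * v (Sum.inr 0) := by
  let _ := S g
  induction n with
  | zero => simp [succMulTerm]
  | succ n ih =>
    calc Term.realize v (succMulTerm (n + 1))
        = v (Sum.inr 0) + Term.realize v (succMulTerm n) := rfl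
      _ = ((n + 1 : ℕ) + 1) * v (Sum.inr 0) := by rw [ih]; push_cast; ring

theorem primrec_encode_succMulTerm : Primrec fun n => Encodable.encode (succMulTerm n) := by
  let x₀ : (Empty ⊕ Fin 2) ⊕ (Σ i, L.Functions i) := Sum.inl (Sum.inr 0)
  let plus : (Empty ⊕ Fin 2) ⊕ (Σ i, L.Functions i) := Sum.inr ⟨2, addSymbol⟩
  have listEncode_succ (n : ℕ) : (succMulTerm (n + 1)).listEncode =
      plus :: x₀ :: (succMulTerm n).listEncode := by
    simp [succMulTerm, Functions.apply₂, Term.listEncode, List.finRange_succ, x₀, plus]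
  let step (c : ℕ) : ℕ := Nat.succ (Nat.pair (Encodable.encode plus)
    (Nat.succ (Nat.pair (Encodable.encode x₀) c)))
  have hstep : Primrec step :=
    Primrec.succ.comp <| Primrec₂.natPair.comp (Primrec.const _) <|
      Primrec.succ.comp <| Primrec₂.natPair.comp (Primrec.const _) Primrec.id
  refine (Primrec.nat_rec₁ (Encodable.encode (succMulTerm 0)) (hstep.comp₂ Primrec₂.right)).of_eq
    fun n => ?_
  induction n with
  | zero => rfl
  | succ n ih => exact (congrArg step ih).trans (congrArg Encodable.encode (listEncode_succ n)).symm

/-- The sentence `∀ x₀ x₁, x₁ = (n + 1) * x₀ → ψ(x₀, x₁)`. -/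
def forallSuccMul (ψ : L.BoundedFormula Empty 2) (n : ℕ) : L.Sentence :=
  ∀' ∀' ((&1 =' succMulTerm n) ⟹ ψ)

theorem primrec_encode_forallSuccMul (ψ : L.BoundedFormula Empty 2) :
    Primrec fun n => Encodable.encode (forallSuccMul ψ n) := by
  have hterm : Primrec fun n => Encodable.encode (Sum.inl ⟨2, succMulTerm n⟩ :
      (Σ k, L.Term (Empty ⊕ Fin k)) ⊕ ((Σ n, L.Relations n) ⊕ ℕ)) :=
    Primrec.nat_mul.comp (Primrec.const 2)
      (Primrec₂.natPair.comp (Primrec.const 2) primrec_encode_succMulTerm)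
  exact primrec_encode_cons (Primrec.const _) <| primrec_encode_cons (Primrec.const _) <|
    primrec_encode_cons (Primrec.const _) <| primrec_encode_cons (Primrec.const _) <|
    primrec_encode_cons hterm (Primrec.const (Encodable.encode ψ.listEncode))

theorem realize_forallSuccMul (g : ℤ → ℤ) (ψ : L.BoundedFormula Empty 2) (n : ℕ) :
    @Sentence.Realize L ℤ (S g) (forallSuccMul ψ n) ↔
      ∀ x, @BoundedFormula.Realize L ℤ (S g) _ _ ψ default ![x, (n + 1) * x] := by
  let _ := S g
  have snoc_snoc (x y : ℤ) : (Fin.snoc (Fin.snoc default x) y : Fin 2 → ℤ) = ![x, y] := by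
    funext i
    fin_cases i <;> rfl
  have realize_iff : Sentence.Realize ℤ (forallSuccMul ψ n) ↔
      ∀ x y : ℤ, y = (n + 1) * x → ψ.Realize default ![x, y] := by
    refine forall_congr' fun x => forall_congr' fun y => BoundedFormula.realize_imp.trans <|
      imp_congr ?_ (iff_of_eq (congrArg₂ ψ.Realize (Subsingleton.elim _ _) (snoc_snoc x y)))
    rw [BoundedFormula.realize_bdEqual, realize_succMulTerm]
    rfl
  simpa only [forall_eq] using realize_iff

theorem mem_theoryCodes_encode {g : ℤ → ℤ} {φ : L.Sentence} :
    Encodable.encode φ ∈ theoryCodes g ↔ @Sentence.Realize L ℤ (S g) φ :=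
  ⟨fun ⟨_, e, h⟩ => Encodable.encode_injective e ▸ h, fun h => ⟨φ, rfl, h⟩⟩

theorem manyOneReducible_theoryCodes {g : ℤ → ℤ} {P : ℕ → Prop}
    (hP : @DefinablePred₁ L (S g) fun x => P x.toNat) : P ≤₀ (· ∈ theoryCodes g) := by
  let _ := S g
  have := expandsPresburger g
  have h : DefinablePred L fun v : Fin 2 → ℤ => v 0 = 1 → P (v 1 - 1).toNat := by
    exact .imp (by fun_prop) (hP.comp (f := fun v => v 1 - 1) (by fun_prop))
  obtain ⟨φ, hφ⟩ := Set.empty_definable_iff.1 h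
  let ψ : L.BoundedFormula Empty 2 := BoundedFormula.relabel (n := 2) Sum.inr φ
  have hψ (x y : ℤ) : ψ.Realize default ![x, y] ↔ (x = 1 → P (y - 1).toNat) := by
    have hφxy : (![x, y] ∈ {v : Fin 2 → ℤ | v 0 = 1 → P (v 1 - 1).toNat}) = φ.Realize ![x, y] :=
      congrArg (![x, y] ∈ ·) hφ
    refine Iff.trans ?_ hφxy.to_iff.symm
    rw [BoundedFormula.realize_relabel, Formula.Realize]
    exact iff_of_eq (congrArg₂ (BoundedFormula.Realize φ) rfl (Subsingleton.elim _ _))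
  refine ⟨fun n => Encodable.encode (forallSuccMul ψ n),
    (primrec_encode_forallSuccMul ψ).to_comp, fun n => ?_⟩
  simp only [mem_theoryCodes_encode, realize_forallSuccMul, hψ, forall_eq, mul_one,
    add_sub_cancel_right, Int.toNat_natCast]

theorem not_computablePred_theoryCodes {g : ℤ → ℤ} (hg : @ExpandsArithmetic L (S g)) :
    ¬ ComputablePred (· ∈ theoryCodes g) := by
  let _ := S g
  intro hcomp
  have hRE : REPred fun n => (Code.eval (Denumerable.ofNat Code n) 0).Dom :=
    (Code.eval_part.comp (Computable.ofNat Code) (Computable.const 0)).dom_re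
  have hhalt := ComputablePred.computable_of_manyOneReducible
    (manyOneReducible_theoryCodes (definablePred_of_rePred hRE)) hcomp
  refine ComputablePred.halting_problem 0 (ComputablePred.computable_of_manyOneReducible
    ⟨Encodable.encode, Computable.encode, fun c => ?_⟩ hhalt)
  rw [Denumerable.ofNat_encode]

end Reduction

section Kronecker

open Filter Topology

theorem exists_line_subset_of_isClosed {E : Type*} [NormedAddCommGroup E] [NormedSpace ℝ E]
    [ProperSpace E] {H : AddSubgroup E} (hH : IsClosed (H : Set E)) {v : ℕ → E}
    (hv : ∀ n, v n ∈ H) (hv₀ : ∀ n, v n ≠ 0) (hlim : Tendsto v atTop (𝓝 0)) :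
    ∃ d : E, d ≠ 0 ∧ ∀ t : ℝ, t • d ∈ H := by
  have norm_pos (n) : 0 < ‖v n‖ := norm_pos_iff.2 (hv₀ n)
  have unit_mem (n) : ‖v n‖⁻¹ • v n ∈ Metric.sphere (0 : E) 1 := by
    rw [mem_sphere_zero_iff_norm, norm_smul, norm_inv, norm_norm, inv_mul_cancel₀ (norm_pos n).ne']
  obtain ⟨d, hd, φ, hφ, hφd⟩ := (isCompact_sphere (0 : E) 1).tendsto_subseq unit_mem
  refine ⟨d, ne_zero_of_mem_unit_sphere ⟨d, hd⟩, fun t => ?_⟩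
  have hnorm : Tendsto (fun n => ‖v (φ n)‖) atTop (𝓝 0) := by
    simpa using (hlim.comp hφ.tendsto_atTop).norm
  have hfloor : Tendsto (fun n => ⌊t / ‖v (φ n)‖⌋ * ‖v (φ n)‖) atTop (𝓝 t) := by
    refine tendsto_of_tendsto_of_tendsto_of_le_of_le (by simpa using hnorm.const_sub t)
      tendsto_const_nhds (fun n => ?_) fun n => ?_
    · have h := Int.sub_one_lt_floor (t / ‖v (φ n)‖)
      rw [sub_lt_iff_lt_add, div_lt_iff₀ (norm_pos _)] at h
      dsimp only
      linarith
    · exact (le_div_iff₀ (norm_pos _)).1 (Int.floor_le _)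
  refine hH.mem_of_tendsto (hfloor.smul hφd) (Eventually.of_forall fun n => ?_)
  simpa only [Function.comp_apply, smul_smul, mul_assoc, mul_inv_cancel₀ (norm_pos (φ n)).ne',
    mul_one, Int.cast_smul_eq_zsmul, SetLike.mem_coe] using H.zsmul_mem (hv (φ n)) ⌊t / ‖v (φ n)‖⌋

theorem int_eq_zero_of_linearIndependent {a b : ℝ} (h : LinearIndependent ℚ ![1, a, b])
    {k l m : ℤ} (hklm : k + l * a + m * b = 0) : k = 0 ∧ l = 0 ∧ m = 0 := by
  have hzero := Fintype.linearIndependent_iff.1 h ![k, l, m]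
    (by simpa [Fin.sum_univ_three, Rat.smul_def] using hklm)
  exact ⟨by simpa using hzero 0, by simpa using hzero 1, by simpa using hzero 2⟩

theorem irrational_of_linearIndependent {a b : ℝ} (h : LinearIndependent ℚ ![1, a, b]) :
    Irrational a := by
  rintro ⟨q, rfl⟩
  have hrel : ((-q.num : ℤ) : ℝ) + (q.den : ℤ) * (q : ℝ) + (0 : ℤ) * b = 0 := by
    have := Rat.mul_den_eq_num q
    push_cast
    have h' : (q : ℝ) * q.den = q.num := by exact_mod_cast this
    linarith
  exact q.den_nz (by simpa using (int_eq_zero_of_linearIndependent h hrel).2.1)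

/-- The subgroup of the plane generated by `(a, b)` and the lattice `ℤ × ℤ`. -/
def kroneckerSubgroup (a b : ℝ) : AddSubgroup (ℝ × ℝ) where
  carrier := {v | ∃ n p q : ℤ, v = (a * n - p, b * n - q)}
  zero_mem' := ⟨0, 0, 0, by ext <;> simp⟩
  add_mem' := by
    rintro _ _ ⟨n, p, q, rfl⟩ ⟨n', p', q', rfl⟩
    exact ⟨n + n', p + p', q + q', by ext <;> simp <;> ring⟩
  neg_mem' := by
    rintro _ ⟨n, p, q, rfl⟩
    exact ⟨-n, -p, -q, by ext <;> simp <;> ring⟩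

theorem exists_tendsto_zero_kroneckerSubgroup {a : ℝ} (ha : Irrational a) (b : ℝ) :
    ∃ v : ℕ → ℝ × ℝ, (∀ n, v n ∈ kroneckerSubgroup a b) ∧ (∀ n, v n ≠ 0) ∧
      Tendsto v atTop (𝓝 0) := by
  let u (n : ℕ) : ℝ × ℝ := (Int.fract (a * n), Int.fract (b * n))
  have u_mem (n) : u n ∈ Set.Icc (0 : ℝ × ℝ) 1 :=
    ⟨⟨Int.fract_nonneg _, Int.fract_nonneg _⟩, (Int.fract_lt_one _).le, (Int.fract_lt_one _).le⟩
  obtain ⟨w, -, φ, hφ, hlim⟩ := isCompact_Icc.tendsto_subseq u_mem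
  refine ⟨fun n => u (φ (n + 1)) - u (φ n), fun n => ?_, fun n hn => ?_, ?_⟩
  · refine ⟨φ (n + 1) - φ n, ⌊a * φ (n + 1)⌋ - ⌊a * φ n⌋, ⌊b * φ (n + 1)⌋ - ⌊b * φ n⌋, ?_⟩
    ext <;> simp only [u, Int.fract, Prod.fst_sub, Prod.snd_sub] <;> push_cast <;> ring
  · have hfst : Int.fract (a * φ (n + 1)) = Int.fract (a * φ n) :=
      sub_eq_zero.1 (congrArg Prod.fst hn)
    obtain ⟨z, hz⟩ := Int.fract_eq_fract.1 hfst
    have hlt : (φ n : ℤ) < φ (n + 1) := mod_cast hφ n.lt_succ_self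
    refine (ha.mul_intCast (sub_ne_zero.2 hlt.ne')).ne_int z ?_
    push_cast
    linear_combination hz
  · simpa using! (hlim.comp (tendsto_add_atTop_nat 1)).sub hlim

theorem eq_top_or_exists_linear_relation {H : AddSubgroup (ℝ × ℝ)}
    (hH : IsClosed (H : Set (ℝ × ℝ))) {d : ℝ × ℝ} (hd : d ≠ 0) (hline : ∀ t : ℝ, t • d ∈ H) :
    H = ⊤ ∨ ∃ c : ℝ, ∀ w ∈ H, ∃ k : ℤ, k * c = d.1 * w.2 - d.2 * w.1 := by
  have hd' : d.1 ^ 2 + d.2 ^ 2 ≠ 0 := fun h0 => hd <| Prod.ext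
    (pow_eq_zero_iff two_ne_zero |>.1 (by nlinarith [sq_nonneg d.1, sq_nonneg d.2]))
    (pow_eq_zero_iff two_ne_zero |>.1 (by nlinarith [sq_nonneg d.1, sq_nonneg d.2]))
  -- `φ` vanishes on the line, and `φ e = 1`: membership in `H` depends on the value of `φ` only.
  let e : ℝ × ℝ := (-d.2 / (d.1 ^ 2 + d.2 ^ 2), d.1 / (d.1 ^ 2 + d.2 ^ 2))
  let φ (w : ℝ × ℝ) : ℝ := d.1 * w.2 - d.2 * w.1
  have mem_iff (w) : w ∈ H ↔ φ w • e ∈ H := by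
    have hdecomp : w = φ w • e + ((d.1 * w.1 + d.2 * w.2) / (d.1 ^ 2 + d.2 ^ 2)) • d := by
      ext <;> simp [φ, e] <;> field_simp <;> ring
    conv_lhs => rw [hdecomp, H.add_mem_cancel_right (hline _)]
  let A : AddSubgroup ℝ := H.comap (LinearMap.toSpanSingleton ℝ (ℝ × ℝ) e).toAddMonoidHom
  have hA : IsClosed (A : Set ℝ) := hH.preimage (by fun_prop : Continuous fun s : ℝ => s • e)
  rcases A.dense_or_cyclic with hdense | ⟨c, hc⟩
  · refine .inl (eq_top_iff.2 fun w _ => (mem_iff w).2 ?_)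
    have hw : φ w ∈ (A : Set ℝ) := by rw [← hA.closure_eq]; exact hdense (φ w)
    exact hw
  · refine .inr ⟨c, fun w hw => ?_⟩
    have hφw : φ w ∈ A := (mem_iff w).1 hw
    simpa [hc, AddSubgroup.mem_closure_singleton] using hφw

theorem dense_kroneckerSubgroup {a b : ℝ} (h : LinearIndependent ℚ ![1, a, b]) :
    Dense (kroneckerSubgroup a b : Set (ℝ × ℝ)) := by
  let H := (kroneckerSubgroup a b).topologicalClosure
  have hH : IsClosed (H : Set (ℝ × ℝ)) := AddSubgroup.isClosed_topologicalClosure _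
  have hle : kroneckerSubgroup a b ≤ H := AddSubgroup.le_topologicalClosure _
  obtain ⟨v, hv, hv₀, hlim⟩ :=
    exists_tendsto_zero_kroneckerSubgroup (irrational_of_linearIndependent h) b
  obtain ⟨d, hd, hline⟩ := exists_line_subset_of_isClosed hH (fun n => hle (hv n)) hv₀ hlim
  rcases eq_top_or_exists_linear_relation hH hd hline with htop | ⟨c, hc⟩
  · exact fun w => show w ∈ H from htop ▸ AddSubgroup.mem_top w
  · exfalso
    obtain ⟨k, hk⟩ := hc (1, 0) (hle ⟨0, -1, 0, by simp⟩)
    obtain ⟨l, hl⟩ := hc (0, 1) (hle ⟨0, 0, -1, by simp⟩)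
    obtain ⟨m, hm⟩ := hc (a, b) (hle ⟨1, 0, 0, by simp⟩)
    dsimp only at hk hl hm
    have hc₀ : c ≠ 0 := by
      rintro rfl
      exact hd (Prod.ext (by simpa using hl.symm) (by simpa using hk.symm))
    have hrel : ((-m : ℤ) : ℝ) + k * a + l * b = 0 := by
      refine mul_right_cancel₀ hc₀ ?_
      push_cast
      linear_combination a * hk + b * hl - hm
    obtain ⟨-, rfl, rfl⟩ := int_eq_zero_of_linearIndependent h hrel
    exact hd (Prod.ext (by simpa using hl.symm) (by simpa using hk.symm))

end Kronecker

section RoundErr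

open Filter Set Topology

/-- The integer nearest to `α * n`. -/
noncomputable def roundMul (α : ℝ) (n : ℤ) : ℤ := round (α * n)

/-- The signed distance from `α * n` to the nearest integer. -/
noncomputable def roundErr (α : ℝ) (n : ℤ) : ℝ := α * n - roundMul α n

/-- A set of integers is syndetic if it meets every interval of some fixed length. -/
def Syndetic (P : ℤ → Prop) : Prop := ∃ K : ℤ, ∀ m, ∃ k, |k| ≤ K ∧ P (m + k)

theorem Syndetic.mono {P Q : ℤ → Prop} (hP : Syndetic P) (h : ∀ n, P n → Q n) : Syndetic Q :=
  let ⟨K, hK⟩ := hP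
  ⟨K, fun m => (hK m).imp fun _ hk => ⟨hk.1, h _ hk.2⟩⟩

variable {α : ℝ} {m n : ℤ}

theorem roundErr_mem_Ico (α : ℝ) (n : ℤ) : roundErr α n ∈ Ico (-(1 / 2)) (1 / 2) := by
  have h := round_eq_iff.1 (rfl : roundMul α n = roundMul α n)
  constructor <;> unfold roundErr <;> linarith [h.1, h.2]

theorem abs_roundErr_le (α : ℝ) (n : ℤ) : |roundErr α n| ≤ 1 / 2 := abs_sub_round _

theorem roundMul_eq_of_mem_Ico {p : ℤ} (h : α * n - p ∈ Ico (-(1 / 2)) (1 / 2)) :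
    roundMul α n = p :=
  round_eq_iff.2 ⟨by linarith [h.1], by linarith [h.2]⟩

theorem roundErr_eq_of_mem_Ico {p : ℤ} (h : α * n - p ∈ Ico (-(1 / 2)) (1 / 2)) :
    roundErr α n = α * n - p := by
  rw [roundErr, roundMul_eq_of_mem_Ico h]

theorem roundMul_add_of_mem_Ico {c : ℤ}
    (h : roundErr α m + roundErr α n - c ∈ Ico (-(1 / 2)) (1 / 2)) :
    roundMul α (m + n) = roundMul α m + roundMul α n + c := by
  refine roundMul_eq_of_mem_Ico ?_
  convert h using 1
  simp only [roundErr, Int.cast_add]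
  ring

theorem roundMul_add (h : |roundErr α m + roundErr α n| < 1 / 2) :
    roundMul α (m + n) = roundMul α m + roundMul α n := by
  have h' := abs_lt.1 h
  simpa only [add_zero] using roundMul_add_of_mem_Ico (c := 0) (m := m) (n := n) (α := α)
    ⟨by push_cast; linarith, by push_cast; linarith⟩

theorem roundErr_add (h : |roundErr α m + roundErr α n| < 1 / 2) :
    roundErr α (m + n) = roundErr α m + roundErr α n := by
  simp only [roundErr, roundMul_add h, Int.cast_add]
  ring

theorem roundErr_ne_zero (hα : Irrational α) (hn : n ≠ 0) : roundErr α n ≠ 0 :=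
  sub_ne_zero.2 ((hα.mul_intCast hn).ne_int _)

theorem abs_roundErr_lt (hα : Irrational α) (n : ℤ) : |roundErr α n| < 1 / 2 := by
  refine (abs_roundErr_le α n).lt_of_ne fun h => ?_
  rcases eq_or_ne n 0 with rfl | hn
  · norm_num [roundErr, roundMul] at h
  · have hirr := (hα.mul_intCast hn).sub_intCast (roundMul α n)
    rcases (abs_eq (by norm_num)).1 h with h | h
    · exact hirr.ne_rat (1 / 2) (by push_cast; exact h)
    · exact hirr.ne_rat (-(1 / 2)) (by push_cast; exact h)

theorem roundErr_neg (hα : Irrational α) (n : ℤ) : roundErr α (-n) = -roundErr α n := by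
  have h : roundErr α (-n) = α * (-n : ℤ) - (-roundMul α n : ℤ) := by
    refine roundErr_eq_of_mem_Ico ?_
    have := abs_lt.1 (abs_roundErr_lt hα n)
    unfold roundErr at this
    constructor <;> push_cast <;> linarith
  rw [h, roundErr]
  push_cast
  ring

theorem roundErr_sub (hα : Irrational α) (h : |roundErr α m - roundErr α n| < 1 / 2) :
    roundErr α (m - n) = roundErr α m - roundErr α n := by
  simpa only [roundErr_neg hα, ← sub_eq_add_neg] using
    roundErr_add (α := α) (m := m) (n := -n) (by rwa [roundErr_neg hα, ← sub_eq_add_neg])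

theorem exists_abs_mul_sub_sub_lt (hα : Irrational α) (t : ℝ) {δ : ℝ} (hδ : 0 < δ) :
    ∃ k p : ℤ, |α * k - p - t| < δ := by
  have hdense := dense_addSubgroupClosure_pair_iff.2 (show Irrational (α / 1) by simpa using hα)
  obtain ⟨_, hx, hxt⟩ := Metric.dense_iff.1 hdense t δ hδ
  obtain ⟨k, p, rfl⟩ := AddSubgroup.mem_closure_pair.1 hxt
  refine ⟨k, -p, ?_⟩
  simpa [Real.dist_eq, mul_comm α] using hx

theorem exists_roundErr_mem_Ioo (hα : Irrational α) {a b : ℝ} (hab : a < b)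
    (ha : -(1 / 2) ≤ a) (hb : b ≤ 1 / 2) : ∃ k, roundErr α k ∈ Ioo a b := by
  obtain ⟨k, p, h⟩ := exists_abs_mul_sub_sub_lt hα ((a + b) / 2) (half_pos (sub_pos.2 hab))
  rw [abs_lt] at h
  have hkp : α * k - p ∈ Ioo a b := ⟨by linarith, by linarith⟩
  exact ⟨k, by rwa [roundErr_eq_of_mem_Ico ⟨ha.trans hkp.1.le, hkp.2.trans_le hb⟩]⟩

theorem syndetic_roundErr_mem_Ioo (hα : Irrational α) {a b : ℝ} (hab : a < b)
    (ha : -(1 / 2) ≤ a) (hb : b ≤ 1 / 2) : Syndetic fun n => roundErr α n ∈ Ioo a b := by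
  let U (k : ℤ) : Set ℝ := ⋃ p : ℤ, {s | s + (α * k - p) ∈ Ioo a b}
  have isOpen_U (k) : IsOpen (U k) :=
    isOpen_iUnion fun p => isOpen_Ioo.preimage (continuous_add_const (α * k - p))
  have cover : Icc (-(1 / 2) : ℝ) (1 / 2) ⊆ ⋃ k, U k := fun s _ => by
    obtain ⟨k, p, h⟩ := exists_abs_mul_sub_sub_lt hα ((a + b) / 2 - s) (half_pos (sub_pos.2 hab))
    rw [abs_lt] at h
    exact mem_iUnion₂.2 ⟨k, p, by constructor <;> linarith⟩
  obtain ⟨T, hT⟩ := isCompact_Icc.elim_finite_subcover U isOpen_U cover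
  obtain ⟨K, hK⟩ := (T.image fun k => |k|).exists_le
  refine ⟨K, fun m => ?_⟩
  obtain ⟨k, hkT, hk⟩ := mem_iUnion₂.1 (hT (Ico_subset_Icc_self (roundErr_mem_Ico α m)))
  obtain ⟨p, hp⟩ := mem_iUnion.1 hk
  refine ⟨k, hK _ (Finset.mem_image_of_mem _ hkT), ?_⟩
  have hsplit : α * (m + k : ℤ) - (roundMul α m + p : ℤ) = roundErr α m + (α * k - p) := by
    rw [roundErr]
    push_cast
    ring
  have hmk : α * (m + k : ℤ) - (roundMul α m + p : ℤ) ∈ Ioo a b := hsplit ▸ hp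
  rwa [← roundErr_eq_of_mem_Ico ⟨ha.trans hmk.1.le, hmk.2.trans_le hb⟩] at hmk

theorem exists_roundErr_roundMul_near (h : LinearIndependent ℚ ![1, α, α ^ 2]) {t δ : ℝ}
    (ht : |t| < 1 / 2) (hδ : 0 < δ) :
    ∃ x, |roundErr α x| < δ ∧ |roundErr α (roundMul α x) - t| < δ := by
  let η := min δ (1 / 2 - |t|)
  have hη : 0 < η := lt_min hδ (sub_pos.2 ht)
  obtain ⟨_, hx, x, p, q, rfl⟩ := Metric.dense_iff.1 (dense_kroneckerSubgroup h)
    (0, t) (η / (1 + |α|)) (by positivity)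
  have hle : η / (1 + |α|) ≤ η := div_le_self hη.le (by linarith [abs_nonneg α])
  rw [Metric.mem_ball, Prod.dist_eq, max_lt_iff, Real.dist_eq, Real.dist_eq, sub_zero] at hx
  obtain ⟨hxp, hxq⟩ := hx
  have hpq : |α * p - q - t| < η := calc
    |α * p - q - t| = |(α ^ 2 * x - q - t) - α * (α * x - p)| := by ring_nf
    _ ≤ |α ^ 2 * x - q - t| + |α| * |α * x - p| := by
      rw [← abs_mul]
      exact abs_sub _ _
    _ < η / (1 + |α|) + |α| * (η / (1 + |α|)) :=
      add_lt_add_of_lt_of_le hxq (mul_le_mul_of_nonneg_left hxp.le (abs_nonneg α))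
    _ = η := by field_simp
  have hη₁ : η ≤ δ := min_le_left _ _
  have hη₂ : η ≤ 1 / 2 - |t| := min_le_right _ _
  have hxp' := abs_lt.1 hxp
  have hpq' := abs_lt.1 hpq
  have ht' := abs_le.1 (le_refl |t|)
  have hx_mem : α * x - p ∈ Ico (-(1 / 2)) (1 / 2) := by
    constructor <;> linarith [abs_nonneg t]
  have hp_mem : α * p - q ∈ Ico (-(1 / 2)) (1 / 2) := by constructor <;> linarith
  refine ⟨x, ?_, ?_⟩
  · rw [roundErr_eq_of_mem_Ico hx_mem]
    linarith
  · rw [roundMul_eq_of_mem_Ico hx_mem, roundErr_eq_of_mem_Ico hp_mem]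
    linarith

/-- `α * n` is at distance less than `θ` from the nearest integer. -/
def SmallErr (α θ : ℝ) (n : ℤ) : Prop := |roundErr α n| < θ

variable {θ : ℝ}

theorem SmallErr.roundMul_add (hθ : θ ≤ 1 / 4) (hm : SmallErr α θ m) (hn : SmallErr α θ n) :
    roundMul α (m + n) = roundMul α m + roundMul α n :=
  Stmt0.roundMul_add ((abs_add_le _ _).trans_lt ((add_lt_add hm hn).trans_le (by linarith)))

theorem SmallErr.roundErr_add (hθ : θ ≤ 1 / 4) (hm : SmallErr α θ m) (hn : SmallErr α θ n) :
    roundErr α (m + n) = roundErr α m + roundErr α n :=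
  Stmt0.roundErr_add ((abs_add_le _ _).trans_lt ((add_lt_add hm hn).trans_le (by linarith)))

theorem SmallErr.roundErr_sub (hα : Irrational α) (hθ : θ ≤ 1 / 4) (hm : SmallErr α θ m)
    (hn : SmallErr α θ n) : roundErr α (m - n) = roundErr α m - roundErr α n :=
  Stmt0.roundErr_sub hα ((abs_sub _ _).trans_lt ((add_lt_add hm hn).trans_le (by linarith)))

theorem abs_roundErr_lt_iff (hα : Irrational α) (hθ : θ ≤ 1 / 4) {x y : ℤ}
    (hx : SmallErr α θ x) (hy : SmallErr α θ y) :
    |roundErr α x| < |roundErr α y| ↔ ∃ z, SmallErr α θ z ∧ SmallErr α θ (z + x) ∧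
      SmallErr α θ (z - x) ∧ (¬ SmallErr α θ (z + y) ∨ ¬ SmallErr α θ (z - y)) := by
  have shift_iff {z : ℤ} (hz : SmallErr α θ z) : (SmallErr α θ (z + x) ∧ SmallErr α θ (z - x) ∧
      (¬ SmallErr α θ (z + y) ∨ ¬ SmallErr α θ (z - y))) ↔
      |roundErr α z| + |roundErr α x| < θ ∧ θ ≤ |roundErr α z| + |roundErr α y| := by
    simp only [SmallErr, hz.roundErr_add hθ hx, hz.roundErr_sub hα hθ hx, hz.roundErr_add hθ hy,
      hz.roundErr_sub hα hθ hy]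
    grind
  constructor
  · intro hxy
    obtain ⟨z, hz⟩ := exists_roundErr_mem_Ioo hα (a := θ - |roundErr α y|)
      (b := θ - |roundErr α x|) (by linarith) (by linarith [hy.le])
      (by linarith [abs_nonneg (roundErr α x)])
    have hz₀ : |roundErr α z| = roundErr α z :=
      abs_of_nonneg ((sub_nonneg.2 hy.le).trans hz.1.le)
    have hzθ : SmallErr α θ z := by
      rw [SmallErr, hz₀]
      linarith [hz.2, abs_nonneg (roundErr α x)]
    exact ⟨z, hzθ, (shift_iff hzθ).2 (by constructor <;> linarith [hz.1, hz.2])⟩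
  · rintro ⟨z, hz, hzx⟩
    have h := (shift_iff hz).1 hzx
    linarith

/-- `α * x` is nearer to an integer than all the `α * k` with `0 < k ≤ |n|`. -/
def ReturnsCloser (α : ℝ) (n x : ℤ) : Prop :=
  ∀ k, 0 < k → k ≤ |n| → |roundErr α x| < |roundErr α k|

theorem abs_roundErr_mul_abs_le_one {x : ℤ} (h : ReturnsCloser α n x) :
    |roundErr α x| * |(n : ℝ)| ≤ 1 := by
  rcases eq_or_ne n 0 with rfl | hn
  · simp
  obtain ⟨p, k, hk, hkn, hkp⟩ := Real.exists_int_int_abs_mul_sub_le α (Int.natAbs_pos.2 hn)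
  rw [Int.natCast_natAbs] at hkn
  have hx : |roundErr α x| ≤ 1 / (|(n : ℝ)| + 1) := calc
    |roundErr α x| ≤ |roundErr α k| := (h k hk hkn).le
    _ ≤ |α * k - p| := round_le _ _
    _ ≤ 1 / (|(n : ℝ)| + 1) := by simpa [mul_comm α, Nat.cast_natAbs] using hkp
  calc |roundErr α x| * |(n : ℝ)| ≤ 1 / (|(n : ℝ)| + 1) * |(n : ℝ)| := by gcongr
    _ ≤ 1 := by
      rw [one_div_mul_eq_div, div_le_one (by positivity)]
      linarith

theorem eventually_forall_lt_abs_roundErr (hα : Irrational α) (n : ℤ) :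
    ∀ᶠ δ in 𝓝[>] (0 : ℝ), ∀ k, 0 < k → k ≤ n → δ < |roundErr α k| := by
  have h : ∀ᶠ δ in 𝓝[>] (0 : ℝ), ∀ k ∈ Finset.Ioc 0 n, δ < |roundErr α k| :=
    (eventually_all_finset _).2 fun k hk => (eventually_lt_nhds
      (abs_pos.2 (roundErr_ne_zero hα (Finset.mem_Ioc.1 hk).1.ne'))).filter_mono nhdsWithin_le_nhds
  exact h.mono fun δ hδ k hk hkn => hδ k (Finset.mem_Ioc.2 ⟨hk, hkn⟩)

/-- A simultaneous approximation `α * x ≈ p`, `α * p ≈ m + q` in integers `x, p, q`, with errors so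
small that they stay bounded when multiplied by `n`. -/
def IsKroneckerApprox (α θ : ℝ) (n m x : ℤ) : Prop :=
  SmallErr α θ x ∧ ReturnsCloser α n x ∧ SmallErr α θ (roundMul α x) ∧
    SmallErr α θ (roundMul α x - m) ∧ ReturnsCloser α n (roundMul α x - m)

theorem exists_isKroneckerApprox (h : LinearIndependent ℚ ![1, α, α ^ 2]) (hθ : θ ≤ 1 / 4)
    (hm : SmallErr α θ m) (n : ℤ) : ∃ x, IsKroneckerApprox α θ n m x := by
  unfold IsKroneckerApprox SmallErr at *
  have hα := irrational_of_linearIndependent h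
  obtain ⟨δ, hδn, hδθ, hδ⟩ := ((eventually_forall_lt_abs_roundErr hα |n|).and
    (((eventually_le_nhds (sub_pos.2 hm)).filter_mono nhdsWithin_le_nhds).and
      self_mem_nhdsWithin)).exists
  obtain ⟨x, hx, hxm⟩ := exists_roundErr_roundMul_near h (t := roundErr α m) (δ := δ)
    (by linarith) hδ
  have hsub : roundErr α (roundMul α x - m) = roundErr α (roundMul α x) - roundErr α m :=
    roundErr_sub hα (by linarith [abs_nonneg (roundErr α m)])
  have hδθ' : δ ≤ θ := by linarith [abs_nonneg (roundErr α m)]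
  refine ⟨x, hx.trans_le hδθ', fun k hk hkn => hx.trans (hδn k hk hkn), ?_, ?_, ?_⟩
  · linarith [abs_sub_abs_le_abs_sub (roundErr α (roundMul α x)) (roundErr α m)]
  · rw [hsub]
    exact hxm.trans_le hδθ'
  · intro k hk hkn
    rw [hsub]
    exact hxm.trans (hδn k hk hkn)

end RoundErr

section CoarselyDefinable

open Asymptotics Filter Set

variable {𝓛 : Language} [𝓛.Structure ℤ] {ι κ : Type} {X Y : Set (ι → ℤ)} {F G : (ι → ℤ) → ℝ}

/-- On the set `X`, the real-valued function `F` is at bounded distance from some definable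
integer-valued function. -/
def CoarselyDefinable (𝓛 : Language) [𝓛.Structure ℤ] (X : Set (ι → ℤ)) (F : (ι → ℤ) → ℝ) : Prop :=
  ∃ h : (ι → ℤ) → ℤ, DefinableFun 𝓛 ∅ h ∧ (fun v => (h v : ℝ) - F v) =O[𝓟 X] fun _ => (1 : ℝ)

theorem coarselyDefinable_intCast {h : (ι → ℤ) → ℤ} (hh : DefinableFun 𝓛 ∅ h) :
    CoarselyDefinable 𝓛 X fun v => h v :=
  ⟨h, hh, by simpa only [sub_self] using isBigO_zero _ _⟩

theorem CoarselyDefinable.congr (hF : CoarselyDefinable 𝓛 X F)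
    (hFG : (fun v => F v - G v) =O[𝓟 X] fun _ => (1 : ℝ)) : CoarselyDefinable 𝓛 X G :=
  let ⟨h, hh, hhF⟩ := hF
  ⟨h, hh, (hhF.add hFG).congr_left fun _ => sub_add_sub_cancel ..⟩

theorem CoarselyDefinable.comp [Finite κ] {X : Set (κ → ℤ)} {F : (κ → ℤ) → ℝ}
    (hF : CoarselyDefinable 𝓛 X F) {p : (ι → ℤ) → κ → ℤ}
    (hp : ∀ i, DefinableFun 𝓛 ∅ fun v => p v i) (hXY : MapsTo p Y X) :
    CoarselyDefinable 𝓛 Y fun v => F (p v) :=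
  let ⟨h, hh, hhF⟩ := hF
  ⟨fun v => h (p v), hh.comp hp, hhF.comp_tendsto (tendsto_principal_principal.2 hXY)⟩

theorem coarselyDefinable_mul_mul {c : ℝ}
    (hc : CoarselyDefinable 𝓛 univ fun v : Fin 1 → ℤ => c * v 0)
    (hF : CoarselyDefinable 𝓛 X F) : CoarselyDefinable 𝓛 X fun v => c * F v := by
  obtain ⟨h, hh, hhF⟩ := hF
  exact (hc.comp (p := fun v _ => h v) (fun _ => hh) (mapsTo_univ _ _)).congr
    ((hhF.const_mul_left c).congr_left fun v => mul_sub ..)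

theorem exists_definableFun₁_of_coarselyDefinable {c : ℝ}
    (hc : CoarselyDefinable 𝓛 univ fun v : Fin 1 → ℤ => c * v 0) :
    ∃ F : ℤ → ℤ, DefinableFun₁ 𝓛 F ∧ ∃ C, ∀ n, |F n - c * n| ≤ C := by
  obtain ⟨h, hh, hhc⟩ := hc
  obtain ⟨C, hC⟩ := isBigO_principal.1 hhc
  exact ⟨fun n => h fun _ => n, hh.comp (g := fun v _ => v 0) (fun _ => by fun_prop), C,
    fun n => by simpa using hC (fun _ => n) (mem_univ _)⟩

variable [ExpandsPresburger 𝓛]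

theorem CoarselyDefinable.add (hF : CoarselyDefinable 𝓛 X F) (hG : CoarselyDefinable 𝓛 X G) :
    CoarselyDefinable 𝓛 X fun v => F v + G v := by
  obtain ⟨h, hh, hhF⟩ := hF
  obtain ⟨k, hk, hkG⟩ := hG
  refine ⟨fun v => h v + k v, definableFun_add hh hk, (hhF.add hkG).congr_left fun v => ?_⟩
  push_cast
  ring

theorem CoarselyDefinable.sub (hF : CoarselyDefinable 𝓛 X F) (hG : CoarselyDefinable 𝓛 X G) :
    CoarselyDefinable 𝓛 X fun v => F v - G v := by
  obtain ⟨h, hh, hhF⟩ := hF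
  obtain ⟨k, hk, hkG⟩ := hG
  refine ⟨fun v => h v - k v, definableFun_sub hh hk, (hhF.sub hkG).congr_left fun v => ?_⟩
  push_cast
  ring

theorem coarselyDefinable_inv_mul {c : ℝ} (hc₀ : c ≠ 0)
    (hc : CoarselyDefinable 𝓛 univ fun v : Fin 1 → ℤ => c * v 0) :
    CoarselyDefinable 𝓛 univ fun v : Fin 1 → ℤ => c⁻¹ * v 0 := by
  obtain ⟨F, hF, C, hC⟩ := exists_definableFun₁_of_coarselyDefinable hc
  let K : ℤ := ⌈C + |c|⌉
  have exists_near (n : ℤ) : ∃ y, |F y - n| ≤ K := by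
    have hround : |c * (round (c⁻¹ * n) - c⁻¹ * n)| ≤ |c| := by
      rw [abs_mul, abs_sub_comm]
      exact mul_le_of_le_one_right (abs_nonneg c) ((abs_sub_round _).trans (by norm_num))
    rw [mul_sub, mul_inv_cancel_left₀ hc₀] at hround
    refine ⟨round (c⁻¹ * n), ?_⟩
    have h : |(F (round (c⁻¹ * n)) - n : ℝ)| ≤ K :=
      (abs_sub_le _ _ _).trans ((add_le_add (hC _) hround).trans (Int.le_ceil _))
    exact_mod_cast h
  obtain ⟨y, hy, hyK⟩ := exists_definableFun_choice (𝓛 := 𝓛)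
    (R := fun (v : Fin 1 → ℤ) y => |F y - v 0| ≤ K) (by fun_prop)
  refine ⟨y, hy, IsBigO.of_bound (|c|⁻¹ * (C + K)) (Eventually.of_forall fun v => ?_)⟩
  have hcy : |c * (y v - c⁻¹ * v 0)| ≤ C + K := by
    rw [mul_sub, mul_inv_cancel_left₀ hc₀]
    refine (abs_sub_le _ (F (y v) : ℝ) _).trans (add_le_add ?_ ?_)
    · rw [abs_sub_comm]
      exact hC _
    · exact_mod_cast hyK v (exists_near _)
  rwa [norm_one, mul_one, Real.norm_eq_abs, le_inv_mul_iff₀ (abs_pos.2 hc₀), ← abs_mul]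

/-- The field of the real numbers `c` for which multiplication by `c` is coarsely definable. -/
def coarseScalars (𝓛 : Language) [𝓛.Structure ℤ] [ExpandsPresburger 𝓛] : Subfield ℝ where
  carrier := {c | CoarselyDefinable 𝓛 univ fun v : Fin 1 → ℤ => c * v 0}
  zero_mem' := by simpa using coarselyDefinable_intCast (definableFun_int (𝓛 := 𝓛) 0)
  one_mem' := by
    simpa only [mem_ofPred_eq, one_mul] using
      coarselyDefinable_intCast (h := fun v => v 0) (by fun_prop)
  add_mem' hc hd := by simpa only [mem_ofPred_eq, add_mul] using hc.add hd
  neg_mem' hc := by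
    simpa using (coarselyDefinable_intCast (definableFun_int (𝓛 := 𝓛) 0)).sub hc
  mul_mem' hc hd := by simpa only [mem_ofPred_eq, mul_assoc] using coarselyDefinable_mul_mul hc hd
  inv_mem' c hc := by
    rcases eq_or_ne c 0 with rfl | hc₀
    · simpa using hc
    · exact coarselyDefinable_inv_mul hc₀ hc

theorem CoarselyDefinable.const_mul {c : ℝ} (hc : c ∈ coarseScalars 𝓛)
    (hF : CoarselyDefinable 𝓛 X F) : CoarselyDefinable 𝓛 X fun v => c * F v :=
  coarselyDefinable_mul_mul hc hF

end CoarselyDefinable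

section Slopes

open Asymptotics Filter Set

variable {𝓛 : Language} [𝓛.Structure ℤ] [ExpandsPresburger 𝓛] {E : ℤ → ℤ} {P Q : ℤ → Prop}

theorem definablePred₁_mem_finset (s : Finset ℤ) : DefinablePred₁ 𝓛 (· ∈ s) := by
  classical
  induction s using Finset.induction_on with
  | empty =>
    have h : DefinablePred 𝓛 fun v : Fin 1 → ℤ => v 0 < v 0 := by fun_prop
    simpa [DefinablePred₁] using h
  | insert k s _ ih =>
    simp only [Finset.mem_insert]
    unfold DefinablePred₁
    fun_prop

theorem DefinablePred₁.congr_of_lt_abs (hQ : DefinablePred₁ 𝓛 Q) {M : ℤ}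
    (hPQ : ∀ z, M < |z| → (P z ↔ Q z)) : DefinablePred₁ 𝓛 P := by
  classical
  have hfin := definablePred₁_mem_finset (𝓛 := 𝓛) ((Finset.Icc (-M) M).filter P)
  have h : DefinablePred₁ 𝓛 fun z => z ∈ (Finset.Icc (-M) M).filter P ∨ M < |z| ∧ Q z := by
    unfold DefinablePred₁
    fun_prop
  convert h using 2 with z
  rw [Finset.mem_filter, Finset.mem_Icc, ← abs_le, ← not_lt]
  grind

theorem ite_lt_mul_of_abs_sub_le {s q C x z : ℝ} (hz : C < (s - q) * |z|)
    (h : |x - s * z| ≤ C) : if 0 < z then q * z < x else x < q * z := by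
  rw [abs_le] at h
  split_ifs with hz₀
  · rw [abs_of_pos hz₀] at hz
    linarith
  · rw [abs_of_nonpos (not_lt.1 hz₀)] at hz
    linarith

theorem definablePred₁_of_slopes (hE : DefinableFun₁ 𝓛 E) {s₀ s₁ : ℝ} (hs : s₀ ≠ s₁)
    (h₁ : (fun z => E z - s₁ * z) =O[𝓟 {z | P z}] fun _ => (1 : ℝ))
    (h₀ : (fun z => E z - s₀ * z) =O[𝓟 {z | ¬ P z}] fun _ => (1 : ℝ)) : DefinablePred₁ 𝓛 P := by
  wlog hlt : s₀ < s₁ generalizing s₀ s₁ P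
  · have h := this (P := fun z => ¬ P z) hs.symm h₀ (by simpa only [not_not] using h₁)
      (hs.lt_or_gt.resolve_left hlt)
    simpa only [not_not] using h.not
  obtain ⟨q, hq₀, hq₁⟩ := exists_rat_btwn hlt
  obtain ⟨C₁, hC₁⟩ := isBigO_principal.1 h₁
  obtain ⟨C₀, hC₀⟩ := isBigO_principal.1 h₀
  simp only [mem_ofPred_eq, norm_one, mul_one, Real.norm_eq_abs] at hC₁ hC₀
  have lt_num_iff (z : ℤ) : q.num * z < q.den * E z ↔ (q : ℝ) * z < E z := by
    rw [← mul_lt_mul_iff_right₀ (Nat.cast_pos.2 q.den_pos : (0 : ℝ) < q.den), ← mul_assoc]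
    have hq : (q.den : ℝ) * q = q.num := mod_cast q.den_mul_eq_num
    rw [hq]
    norm_cast
  let M : ℤ := ⌈max (C₁ / (s₁ - q)) (C₀ / (q - s₀))⌉
  have hdef : DefinablePred₁ 𝓛 fun z =>
      (0 < z → q.num * z < q.den * E z) ∧ (q.num * z < q.den * E z → 0 < z) := by
    unfold DefinablePred₁
    fun_prop
  refine hdef.congr_of_lt_abs (M := M) fun z hz => ?_
  have hM : max (C₁ / (s₁ - q)) (C₀ / (q - s₀)) < |(z : ℝ)| :=
    (Int.le_ceil _).trans_lt (mod_cast hz)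
  rw [max_lt_iff, div_lt_iff₀' (sub_pos.2 hq₁), div_lt_iff₀' (sub_pos.2 hq₀)] at hM
  rw [← iff_def, lt_num_iff, ← Int.cast_pos (R := ℝ)]
  by_cases hPz : P z
  · have hE := ite_lt_mul_of_abs_sub_le hM.1 (hC₁ z hPz)
    exact iff_of_true hPz (by split_ifs at hE <;> grind)
  · have hE := ite_lt_mul_of_abs_sub_le (s := -s₀) (q := -q) (x := -E z) (C := C₀) (z := z)
      (by rw [neg_sub_neg]; exact hM.2)
      (by rw [neg_mul, neg_sub_neg, abs_sub_comm]; exact hC₀ z hPz)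
    simp only [neg_mul, neg_lt_neg_iff] at hE
    exact iff_of_false hPz (by split_ifs at hE <;> grind)

theorem mem_coarseScalars_of_slope (hE : DefinableFun₁ 𝓛 E) (hP : DefinablePred₁ 𝓛 P)
    (hsyn : Syndetic P) {s : ℝ} (h : (fun z => E z - s * z) =O[𝓟 {z | P z}] fun _ => (1 : ℝ)) :
    s ∈ coarseScalars 𝓛 := by
  obtain ⟨K, hK⟩ := hsyn
  obtain ⟨k, hk, hkP⟩ := exists_definableFun_choice (𝓛 := 𝓛)
    (R := fun (v : Fin 1 → ℤ) k => |k| ≤ K ∧ P (v 0 + k)) (by fun_prop)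
  obtain ⟨C, hC⟩ := isBigO_principal.1 h
  refine ⟨fun v => E (v 0 + k v), by fun_prop,
    IsBigO.of_bound (C + |s| * K) (Eventually.of_forall fun v => ?_)⟩
  obtain ⟨hkK, hkv⟩ := hkP v (hK (v 0))
  have hEs := hC _ hkv
  simp only [norm_one, mul_one, Real.norm_eq_abs, Int.cast_add] at hEs ⊢
  calc |(E (v 0 + k v) : ℝ) - s * v 0|
      = |(E (v 0 + k v) - s * (v 0 + k v)) + s * k v| := by ring_nf
    _ ≤ C + |s| * |(k v : ℝ)| := (abs_add_le _ _).trans (by rw [abs_mul]; gcongr)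
    _ ≤ C + |s| * K := by
      gcongr
      exact_mod_cast hkK

end Slopes

section Carry

open Asymptotics Filter Set

variable {𝓛 : Language} [𝓛.Structure ℤ] {α β C : ℝ} {f : ℤ → ℤ} {j z : ℤ}

/-- The failure of additivity of `f` at the pair `(m, n)`. -/
def addDefect (f : ℤ → ℤ) (m n : ℤ) : ℤ := f (m + n) - f m - f n

theorem abs_addDefect_sub_le (hfβ : ∀ n, |f n - β * n * roundMul α n| ≤ C) {m n c : ℤ}
    (hc : roundMul α (m + n) = roundMul α m + roundMul α n + c) :
    |addDefect f m n - β * (m * (roundMul α n + c) + n * (roundMul α m + c))| ≤ 3 * C := by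
  have hmn := hfβ (m + n)
  rw [hc] at hmn
  push_cast at hmn
  calc |addDefect f m n - β * (m * (roundMul α n + c) + n * (roundMul α m + c))|
      = |(f (m + n) - β * (m + n) * (roundMul α m + roundMul α n + c)) -
          (f m - β * m * roundMul α m) - (f n - β * n * roundMul α n)| := by
        simp only [addDefect]
        push_cast
        ring_nf
    _ ≤ C + C + C := (abs_sub _ _).trans (add_le_add ((abs_sub _ _).trans
        (add_le_add hmn (hfβ m))) (hfβ n))
    _ = 3 * C := by ring

theorem isBigO_addDefect_sub_slope_mul (hfβ : ∀ n, |f n - β * n * roundMul α n| ≤ C) (j c : ℤ) :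
    (fun z => addDefect f z j - β * (roundMul α j + α * j + c) * z)
      =O[𝓟 {z | roundMul α (z + j) = roundMul α z + roundMul α j + c}] fun _ => (1 : ℝ) := by
  refine isBigO_principal.2 ⟨3 * C + |β * j| * (|(c : ℝ)| + 1 / 2), fun z hz => ?_⟩
  rw [norm_one, mul_one, Real.norm_eq_abs]
  calc |addDefect f z j - β * (roundMul α j + α * j + c) * z|
      = |(addDefect f z j - β * (z * (roundMul α j + c) + j * (roundMul α z + c))) +
          β * j * (c - roundErr α z)| := by
        simp only [roundErr]
        ring_nf
    _ ≤ 3 * C + |β * j| * (|(c : ℝ)| + 1 / 2) := by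
        refine (abs_add_le _ _).trans (add_le_add (abs_addDefect_sub_le hfβ hz) ?_)
        rw [abs_mul]
        gcongr
        exact (abs_sub _ _).trans (add_le_add_right (abs_roundErr_le α z) _)

theorem roundMul_add_of_half_le (h : 1 / 2 ≤ roundErr α z + roundErr α j) :
    roundMul α (z + j) = roundMul α z + roundMul α j + 1 := by
  refine roundMul_add_of_mem_Ico ⟨?_, ?_⟩ <;> push_cast <;>
    linarith [(roundErr_mem_Ico α z).2, (roundErr_mem_Ico α j).2]

theorem roundMul_add_of_lt_half (hj : 0 ≤ roundErr α j) (h : roundErr α z + roundErr α j < 1 / 2) :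
    roundMul α (z + j) = roundMul α z + roundMul α j + 0 := by
  refine roundMul_add_of_mem_Ico ⟨?_, ?_⟩ <;> push_cast <;> linarith [(roundErr_mem_Ico α z).1]

variable [ExpandsPresburger 𝓛]

@[fun_prop]
theorem definableFun_addDefect {ι : Type} {a b : (ι → ℤ) → ℤ} (hf : DefinableFun₁ 𝓛 f)
    (ha : DefinableFun 𝓛 ∅ a) (hb : DefinableFun 𝓛 ∅ b) :
    DefinableFun 𝓛 ∅ fun v => addDefect f (a v) (b v) := by
  unfold addDefect
  fun_prop

theorem definablePred₁_carry (hf : DefinableFun₁ 𝓛 f)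
    (hfβ : ∀ n, |f n - β * n * roundMul α n| ≤ C) (hβ : β ≠ 0) (hj : 0 ≤ roundErr α j) :
    DefinablePred₁ 𝓛 fun z => 1 / 2 ≤ roundErr α z + roundErr α j :=
  definablePred₁_of_slopes (E := fun z => addDefect f z j)
    (definableFun_addDefect hf (by fun_prop) (by fun_prop)) (by simpa using hβ)
    ((isBigO_addDefect_sub_slope_mul hfβ j 1).mono
      (principal_mono.2 fun _ hz => roundMul_add_of_half_le hz))
    ((isBigO_addDefect_sub_slope_mul hfβ j 0).mono
      (principal_mono.2 fun _ hz => roundMul_add_of_lt_half hj (not_le.1 hz)))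

theorem mem_coarseScalars_of_carry (hα : Irrational α) (hf : DefinableFun₁ 𝓛 f)
    (hfβ : ∀ n, |f n - β * n * roundMul α n| ≤ C) (hβ : β ≠ 0) :
    α ∈ coarseScalars 𝓛 ∧ β ∈ coarseScalars 𝓛 := by
  obtain ⟨j, hj₀, hj⟩ := exists_roundErr_mem_Ioo hα (a := 0) (b := 1 / 2) (by norm_num)
    (by norm_num) le_rfl
  have hdefect : DefinableFun₁ 𝓛 fun z => addDefect f z j :=
    definableFun_addDefect hf (by fun_prop) (by fun_prop)
  have hcarry := definablePred₁_carry hf hfβ hβ hj₀.le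
  have carry_mem : β * (roundMul α j + α * j + (1 : ℤ)) ∈ coarseScalars 𝓛 := by
    refine mem_coarseScalars_of_slope hdefect hcarry ?_
      ((isBigO_addDefect_sub_slope_mul hfβ j 1).mono
        (principal_mono.2 fun _ hz => roundMul_add_of_half_le hz))
    exact (syndetic_roundErr_mem_Ioo hα (a := 1 / 2 - roundErr α j) (b := 1 / 2) (by linarith)
      (by linarith) le_rfl).mono fun z hz => by linarith [hz.1]
  have noCarry_mem : β * (roundMul α j + α * j + (0 : ℤ)) ∈ coarseScalars 𝓛 := by
    refine mem_coarseScalars_of_slope hdefect hcarry.not ?_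
      ((isBigO_addDefect_sub_slope_mul hfβ j 0).mono
        (principal_mono.2 fun _ hz => roundMul_add_of_lt_half hj₀.le (not_le.1 hz)))
    exact (syndetic_roundErr_mem_Ioo hα (a := -(1 / 2)) (b := 1 / 2 - roundErr α j) (by linarith)
      le_rfl (by linarith)).mono fun z hz => not_le.2 (by linarith [hz.2])
  have β_mem : β ∈ coarseScalars 𝓛 := by
    convert sub_mem carry_mem noCarry_mem using 1
    push_cast
    ring
  have hj' : (j : ℝ) ≠ 0 := by
    rintro h
    simp [roundErr, roundMul, h] at hj₀
  refine ⟨?_, β_mem⟩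
  convert div_mem (sub_mem (div_mem noCarry_mem β_mem) (intCast_mem _ (roundMul α j)))
    (intCast_mem _ j) using 1
  field_simp
  push_cast
  ring

theorem exists_definablePred₁_smallErr (hα : Irrational α) (hf : DefinableFun₁ 𝓛 f)
    (hfβ : ∀ n, |f n - β * n * roundMul α n| ≤ C) (hβ : β ≠ 0) :
    ∃ θ > 0, θ ≤ 1 / 4 ∧ DefinablePred₁ 𝓛 (SmallErr α θ) := by
  obtain ⟨j, hj₀, hj⟩ := exists_roundErr_mem_Ioo hα (a := 1 / 4) (b := 1 / 2) (by norm_num)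
    (by norm_num) le_rfl
  have hcarry := definablePred₁_carry hf hfβ hβ (by linarith : 0 ≤ roundErr α j)
  refine ⟨1 / 2 - roundErr α j, sub_pos.2 hj, by linarith, ?_⟩
  have hdef : DefinablePred₁ 𝓛 fun n => ¬ 1 / 2 ≤ roundErr α n + roundErr α j ∧
      ¬ 1 / 2 ≤ roundErr α (-n) + roundErr α j :=
    hcarry.not.and (hcarry.comp (definableFun_neg (by fun_prop))).not
  convert hdef using 2 with n
  rw [SmallErr, roundErr_neg hα, abs_lt]
  grind

theorem two_mul_add_ediv_eq_of_abs_sub_lt {h p N : ℤ} (hN : 0 < N)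
    (hp : |(h : ℝ) - N * p| < N / 2) : (2 * h + N) / (2 * N) = p := by
  have hp' := abs_lt.1 hp
  have hlo : -N < 2 * (h - N * p) := by
    have : -(N : ℝ) < 2 * (h - N * p) := by linarith
    exact_mod_cast this
  have hhi : 2 * (h - N * p) < N := by
    have : 2 * (h - N * p : ℝ) < N := by linarith
    exact_mod_cast this
  rw [Int.ediv_eq_iff_of_pos (by linarith)]
  constructor <;> linarith

theorem exists_definableFun₁_eq_roundMul (hα : α ∈ coarseScalars 𝓛) :
    ∃ q : ℤ → ℤ, DefinableFun₁ 𝓛 q ∧ ∀ n, SmallErr α (1 / 4) n → q n = roundMul α n := by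
  obtain ⟨F, hF, C, hC⟩ := exists_definableFun₁_of_coarselyDefinable hα
  obtain ⟨N, hN⟩ := exists_int_gt (max 0 (4 * C))
  rw [max_lt_iff] at hN
  have hN₀ : (0 : ℤ) < N := mod_cast hN.1
  refine ⟨fun n => (2 * F (N * n) + N) / (2 * N), ?_, fun n hn => ?_⟩
  · exact definableFun_ediv_const (by positivity) (by fun_prop)
  · refine two_mul_add_ediv_eq_of_abs_sub_lt hN₀ ?_
    have hF := hC (N * n)
    push_cast at hF
    calc |F (N * n) - N * (roundMul α n : ℝ)|
        = |(F (N * n) - α * (N * n)) + N * roundErr α n| := by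
          rw [roundErr]
          ring_nf
      _ ≤ C + N * |roundErr α n| := by
          refine (abs_add_le _ _).trans (add_le_add hF ?_)
          rw [abs_mul, abs_of_pos hN.1]
      _ < N / 2 := by
          rw [SmallErr] at hn
          nlinarith [hN.1, hN.2]

end Carry

section Multiplication

open Asymptotics Set

/-- The pairs of integers whose multiples by `α` are within `θ` of an integer. -/
def smallErrPairs (α θ : ℝ) : Set (Fin 2 → ℤ) := {v | SmallErr α θ (v 0) ∧ SmallErr α θ (v 1)}

variable {𝓛 : Language} [𝓛.Structure ℤ] {α β C θ : ℝ} {f q : ℤ → ℤ} {m n x : ℤ}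

theorem abs_addDefect_sub_add_mul_roundErr_le
    (hfβ : ∀ n, |f n - β * n * roundMul α n| ≤ C) (hα : Irrational α) (hθ : θ ≤ 1 / 4)
    (hn : SmallErr α θ n) (hm : SmallErr α θ m) (h : IsKroneckerApprox α θ n m x) :
    |addDefect f n (roundMul α x) - α * addDefect f n x + β * (n * roundErr α m)| ≤
      (1 + |α|) * (3 * C) + |β| * (3 / 2 + |α|) := by
  obtain ⟨hx, hnx, hp, -, hnpm⟩ := h
  have hDp := abs_addDefect_sub_le (c := 0) hfβ (by rw [hn.roundMul_add hθ hp, add_zero])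
  have hDx := abs_addDefect_sub_le (c := 0) hfβ (by rw [hn.roundMul_add hθ hx, add_zero])
  simp only [Int.cast_zero, add_zero] at hDp hDx
  have main_terms : n * roundMul α (roundMul α x) + roundMul α x * roundMul α n -
      α * (n * roundMul α x + x * roundMul α n) + n * roundErr α m =
      roundErr α n * roundErr α x -
        (roundErr α (roundMul α x - m) * n + α * (roundErr α x * n)) := by
    rw [hp.roundErr_sub hα hθ hm]
    simp only [roundErr]
    ring
  have main_le : |roundErr α n * roundErr α x -
      (roundErr α (roundMul α x - m) * n + α * (roundErr α x * n))| ≤ 1 / 2 + (1 + |α| * 1) := by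
    refine (abs_sub _ _).trans (add_le_add ?_ ((abs_add_le _ _).trans (add_le_add ?_ ?_)))
    · rw [abs_mul]
      nlinarith [abs_roundErr_le α n, abs_roundErr_le α x, abs_nonneg (roundErr α n)]
    · simpa only [abs_mul] using abs_roundErr_mul_abs_le_one hnpm
    · rw [abs_mul, abs_mul (roundErr α x)]
      gcongr
      exact abs_roundErr_mul_abs_le_one hnx
  calc |addDefect f n (roundMul α x) - α * addDefect f n x + β * (n * roundErr α m)|
      = |(addDefect f n (roundMul α x) -
            β * (n * roundMul α (roundMul α x) + roundMul α x * roundMul α n)) -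
          α * (addDefect f n x - β * (n * roundMul α x + x * roundMul α n)) +
          β * (roundErr α n * roundErr α x -
            (roundErr α (roundMul α x - m) * n + α * (roundErr α x * n)))| := by
        rw [← main_terms]
        ring_nf
    _ ≤ 3 * C + |α| * (3 * C) + |β| * (1 / 2 + (1 + |α| * 1)) := by
        refine (abs_add_le _ _).trans (add_le_add ((abs_sub _ _).trans (add_le_add hDp ?_)) ?_) <;>
          rw [abs_mul] <;> gcongr
    _ = (1 + |α|) * (3 * C) + |β| * (3 / 2 + |α|) := by ring

variable [ExpandsPresburger 𝓛]

theorem definablePred_returnsCloser {ι : Type} {a b : (ι → ℤ) → ℤ} (hα : Irrational α)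
    (hθ : θ ≤ 1 / 4) (hsmall : DefinablePred₁ 𝓛 (SmallErr α θ))
    (ha : DefinableFun 𝓛 ∅ a) (hb : DefinableFun 𝓛 ∅ b) :
    DefinablePred 𝓛 fun v => SmallErr α θ (b v) ∧ ReturnsCloser α (a v) (b v) := by
  have hdef : DefinablePred 𝓛 fun v : Fin 2 → ℤ => SmallErr α θ (v 1) ∧
      ∀ k, 0 < k → k ≤ |v 0| → ¬ SmallErr α θ k ∨ ∃ z, SmallErr α θ z ∧
        SmallErr α θ (z + v 1) ∧ SmallErr α θ (z - v 1) ∧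
          (¬ SmallErr α θ (z + k) ∨ ¬ SmallErr α θ (z - k)) := by
    fun_prop
  refine DefinablePred.comp₂ (R := fun n x => SmallErr α θ x ∧ ReturnsCloser α n x) ?_ ha hb
  convert hdef using 2 with v
  refine and_congr_right fun hx => forall₃_congr fun k _ _ => ?_
  by_cases hk : SmallErr α θ k
  · simpa only [hk, not_true_eq_false, false_or] using
      abs_roundErr_lt_iff hα hθ hx hk
  · simpa only [hk, not_false_eq_true, true_or, iff_true] using lt_of_lt_of_le hx (not_lt.1 hk)

theorem definablePred_isKroneckerApprox (hα : Irrational α) (hθ : θ ≤ 1 / 4)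
    (hsmall : DefinablePred₁ 𝓛 (SmallErr α θ)) (hq : DefinableFun₁ 𝓛 q)
    (hqα : ∀ n, SmallErr α (1 / 4) n → q n = roundMul α n) :
    DefinablePred 𝓛 fun w : Option (Fin 2) → ℤ =>
      IsKroneckerApprox α θ (w (some 0)) (w (some 1)) (w none) := by
  have hdef : DefinablePred 𝓛 fun w : Option (Fin 2) → ℤ =>
      (SmallErr α θ (w none) ∧ ReturnsCloser α (w (some 0)) (w none)) ∧
        SmallErr α θ (q (w none)) ∧ SmallErr α θ (q (w none) - w (some 1)) ∧
          ReturnsCloser α (w (some 0)) (q (w none) - w (some 1)) :=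
    (definablePred_returnsCloser hα hθ hsmall (by fun_prop) (by fun_prop)).and <|
      .and (by fun_prop) <|
        definablePred_returnsCloser hα hθ hsmall (by fun_prop) (by fun_prop)
  convert hdef using 2 with w
  rw [IsKroneckerApprox, ← and_assoc]
  exact and_congr_right fun hx => by rw [hqα _ (hx.1.trans_le hθ)]

theorem coarselyDefinable_mul_roundErr (hind : LinearIndependent ℚ ![1, α, α ^ 2])
    (hf : DefinableFun₁ 𝓛 f) (hfβ : ∀ n, |f n - β * n * roundMul α n| ≤ C) (hβ : β ≠ 0)
    (hθ : θ ≤ 1 / 4) (hsmall : DefinablePred₁ 𝓛 (SmallErr α θ)) :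
    CoarselyDefinable 𝓛 (smallErrPairs α θ) fun v => v 0 * roundErr α (v 1) := by
  have hα := irrational_of_linearIndependent hind
  obtain ⟨α_mem, β_mem⟩ := mem_coarseScalars_of_carry hα hf hfβ hβ
  obtain ⟨q, hq, hqα⟩ := exists_definableFun₁_eq_roundMul α_mem
  obtain ⟨x, hx, hxv⟩ := exists_definableFun_choice
    (R := fun v y => IsKroneckerApprox α θ (v 0) (v 1) y)
    (definablePred_isKroneckerApprox hα hθ hsmall hq hqα)
  have hdefect := (coarselyDefinable_intCast (𝓛 := 𝓛) (X := smallErrPairs α θ)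
    (h := fun v => addDefect f (v 0) (q (x v))) (by fun_prop)).sub
    ((coarselyDefinable_intCast (h := fun v => addDefect f (v 0) (x v)) (by fun_prop)).const_mul
      α_mem)
  refine (hdefect.const_mul (neg_mem (inv_mem β_mem))).congr (isBigO_principal.2
    ⟨|β⁻¹| * ((1 + |α|) * (3 * C) + |β| * (3 / 2 + |α|)), fun v ⟨hn, hm⟩ => ?_⟩)
  have hxv := hxv v (exists_isKroneckerApprox hind hθ hm (v 0))
  rw [hqα _ (hxv.1.trans_le hθ), norm_one, mul_one, Real.norm_eq_abs]
  calc |-β⁻¹ * (addDefect f (v 0) (roundMul α (x v)) - α * addDefect f (v 0) (x v)) -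
        v 0 * roundErr α (v 1)|
      = |β⁻¹| * |addDefect f (v 0) (roundMul α (x v)) - α * addDefect f (v 0) (x v) +
          β * (v 0 * roundErr α (v 1))| := by
        rw [← abs_mul, ← abs_neg, mul_add, inv_mul_cancel_left₀ hβ]
        ring_nf
    _ ≤ _ := by
        gcongr
        exact abs_addDefect_sub_add_mul_roundErr_le hfβ hα hθ hn hm hxv

theorem coarselyDefinable_mul_of_smallErr (hind : LinearIndependent ℚ ![1, α, α ^ 2])
    (hf : DefinableFun₁ 𝓛 f) (hfβ : ∀ n, |f n - β * n * roundMul α n| ≤ C) (hβ : β ≠ 0)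
    (hθ : θ ≤ 1 / 4) (hsmall : DefinablePred₁ 𝓛 (SmallErr α θ)) :
    CoarselyDefinable 𝓛 (smallErrPairs α θ) fun v => (v 0 * v 1 : ℝ) := by
  have hα := irrational_of_linearIndependent hind
  obtain ⟨α_mem, β_mem⟩ := mem_coarseScalars_of_carry hα hf hfβ hβ
  have hmul := coarselyDefinable_mul_roundErr hind hf hfβ hβ hθ hsmall
  have hswap : CoarselyDefinable 𝓛 (smallErrPairs α θ) fun v => v 1 * roundErr α (v 0) :=
    hmul.comp (p := fun v i => v i.rev) (fun i => by fun_prop) fun v hv => ⟨hv.2, hv.1⟩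
  have hdefect := (coarselyDefinable_intCast (𝓛 := 𝓛) (X := smallErrPairs α θ)
    (h := fun v => addDefect f (v 0) (v 1)) (by fun_prop)).const_mul (inv_mem β_mem)
  have two_mul_mem : (2 * α)⁻¹ ∈ coarseScalars 𝓛 := inv_mem (mul_mem (ofNat_mem _ 2) α_mem)
  refine (((hdefect.add hmul).add hswap).const_mul two_mul_mem).congr (isBigO_principal.2
    ⟨|(2 * α)⁻¹ * β⁻¹| * (3 * C), fun v ⟨hn, hm⟩ => ?_⟩)
  have hnm := abs_addDefect_sub_le (c := 0) hfβ (by rw [hn.roundMul_add hθ hm, add_zero])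
  rw [norm_one, mul_one, Real.norm_eq_abs]
  refine Eq.trans_le ?_ (mul_le_mul_of_nonneg_left hnm (abs_nonneg _))
  rw [← abs_mul]
  congr 1
  have hα₀ := hα.ne_zero
  simp only [roundErr]
  field_simp
  ring

end Multiplication

section Undecidability

open Asymptotics Set

variable {𝓛 : Language} [𝓛.Structure ℤ] [ExpandsPresburger 𝓛] {α β C θ : ℝ} {f : ℤ → ℤ}

theorem exists_definableFun₁_smallErr_add (hα : Irrational α) (hθ₀ : 0 < θ) (hθ : θ ≤ 1 / 4)
    (hsmall : DefinablePred₁ 𝓛 (SmallErr α θ)) :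
    ∃ d : ℤ → ℤ, DefinableFun₁ 𝓛 d ∧ ∃ K : ℤ, ∀ n, |d n| ≤ K ∧ SmallErr α θ (n + d n) := by
  obtain ⟨K, hK⟩ := syndetic_roundErr_mem_Ioo hα (a := -θ) (b := θ) (by linarith) (by linarith)
    (by linarith)
  obtain ⟨d, hd, hdK⟩ := exists_definableFun_choice (𝓛 := 𝓛)
    (R := fun (v : Fin 1 → ℤ) k => |k| ≤ K ∧ SmallErr α θ (v 0 + k)) (by fun_prop)
  refine ⟨fun n => d fun _ => n, hd.comp (g := fun v _ => v 0) fun _ => by fun_prop, K,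
    fun n => hdK (fun _ => n) ?_⟩
  exact (hK n).imp fun k hk => ⟨hk.1, abs_lt.2 hk.2⟩

theorem coarselyDefinable_mul (hind : LinearIndependent ℚ ![1, α, α ^ 2])
    (hf : DefinableFun₁ 𝓛 f) (hfβ : ∀ n, |f n - β * n * roundMul α n| ≤ C) (hβ : β ≠ 0) :
    CoarselyDefinable 𝓛 univ fun v : Fin 2 → ℤ => (v 0 * v 1 : ℝ) := by
  have hα := irrational_of_linearIndependent hind
  obtain ⟨θ, hθ₀, hθ, hsmall⟩ := exists_definablePred₁_smallErr hα hf hfβ hβ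
  obtain ⟨d, hd, K, hdK⟩ := exists_definableFun₁_smallErr_add hα hθ₀ hθ hsmall
  have hshift : CoarselyDefinable 𝓛 univ fun v : Fin 2 → ℤ =>
      ((v 0 + d (v 0) : ℤ) * (v 1 + d (v 1) : ℤ) : ℝ) :=
    (coarselyDefinable_mul_of_smallErr hind hf hfβ hβ hθ hsmall).comp
      (p := fun v i => v i + d (v i)) (fun i => by fun_prop) fun v _ => ⟨(hdK _).2, (hdK _).2⟩
  have hbdd (i : Fin 2) {k : (Fin 2 → ℤ) → ℤ} (hk : DefinableFun 𝓛 ∅ k) :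
      DefinableFun 𝓛 ∅ fun v => d (v i) * k v :=
    definableFun_mul_of_bounded (by fun_prop) (fun v => (hdK (v i)).1) hk
  have hcorr : DefinableFun 𝓛 ∅ fun v : Fin 2 → ℤ =>
      d (v 0) * v 1 + d (v 1) * (v 0 + d (v 0)) :=
    definableFun_add (hbdd 0 (by fun_prop)) (hbdd 1 (by fun_prop))
  convert hshift.sub (coarselyDefinable_intCast hcorr) using 2 with v
  push_cast
  ring

theorem expandsArithmetic_of_abs_sub_le (hind : LinearIndependent ℚ ![1, α, α ^ 2])
    (hf : DefinableFun₁ 𝓛 f) (hfβ : ∀ n, |f n - β * n * roundMul α n| ≤ C) (hβ : β ≠ 0) :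
    ExpandsArithmetic 𝓛 := by
  obtain ⟨h, hh, hhO⟩ := coarselyDefinable_mul hind hf hfβ hβ
  obtain ⟨D, hD⟩ := isBigO_principal.1 hhO
  obtain ⟨N, hN⟩ := exists_int_gt (max 0 (2 * D))
  rw [max_lt_iff] at hN
  have hN₀ : (0 : ℤ) < N := mod_cast hN.1
  have hscaled : DefinableFun 𝓛 ∅ fun v : Fin 2 → ℤ => h ![N * v 0, v 1] :=
    hh.comp (g := fun v => ![N * v 0, v 1])
      (Fin.forall_fin_two.2 ⟨definableFun_const_mul N (definableFun_var 𝓛 0), definableFun_var 𝓛 1⟩)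
  refine ⟨?_⟩
  convert definableFun_ediv_const (N := 2 * N) (by positivity)
    (definableFun_add (definableFun_const_mul 2 hscaled) (definableFun_int N)) using 2 with v
  refine (two_mul_add_ediv_eq_of_abs_sub_lt hN₀ ?_).symm
  have hv := hD ![N * v 0, v 1] (mem_univ _)
  simp only [Matrix.cons_val_zero, Matrix.cons_val_one, norm_one, mul_one, Real.norm_eq_abs,
    Int.cast_mul, mul_assoc] at hv ⊢
  linarith [hN.2]

end Undecidability

theorem undecidable_general (α β C : ℝ) (hβ : β ≠ 0)
    (hind : LinearIndependent ℚ ![(1 : ℝ), α, α ^ 2]) (g : ℤ → ℤ)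
    (hg : ∀ n : ℤ, |g n - β * n * round (α * n)| ≤ C) :
    ¬ ComputablePred (fun c => c ∈ theoryCodes g) :=
  letI := S g
  haveI := expandsPresburger g
  not_computablePred_theoryCodes <|
    expandsArithmetic_of_abs_sub_le hind (definableFun₁_symbol g) hg hβ

theorem undecidable (α β : ℝ) (hβ : β ≠ 0)
    (hind : LinearIndependent ℚ ![(1 : ℝ), α, α ^ 2])
    (g : ℤ → ℤ) (hg : ∀ n : ℤ, g n = round (β * n * round (α * n))) :
    ¬ ComputablePred (fun c => c ∈ theoryCodes g) := by
  refine undecidable_general α β (1 / 2) hβ hind g fun n => ?_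
  rw [hg, abs_sub_comm]
  exact abs_sub_round _

end Stmt0
end

section
/- Let α, β ∈ ℝ with β ≠ 0 and such that 1, α, α² are linearly independent over ℚ, and let g : ℤ → ℤ be given by g(n) = ⌊β·n·⌊α·n⌉⌉. Then the first-order theory of the structure (ℤ; +, 1, g) is undecidable; that is, the set of sentences of the first-order language with one binary function symbol +, one constant symbol 1, and one unary function symbol g that are true in ℤ (with the standard addition, the constant interpreted as 1, and g interpreted as above) is not a computable set of sentences (under an effective encoding of sentences). -/
/-!
STATEMENT 1: Let α, β ∈ ℝ with β ≠ 0 and 1, α, α² linearly independent over ℚ, and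
g : ℤ → ℤ given by g(n) = ⌊β·n·⌊α·n⌉⌉ (nearest integers). Then the first-order theory
of (ℤ; +, 1, g) is undecidable.
-/

open FirstOrder Language

namespace Stmt1

/-- The language with one constant `1`, one binary function `+`,
and one unary function `g`. -/
def L : Language :=
  ⟨fun n => match n with | 0 => Unit | 1 => Unit | 2 => Unit | _ => Empty,
   fun _ => Empty⟩

instance instEncF : (n : ℕ) → Encodable (L.Functions n)
  | 0 => inferInstanceAs (Encodable Unit)
  | 1 => inferInstanceAs (Encodable Unit)
  | 2 => inferInstanceAs (Encodable Unit)
  | (_ + 3) => inferInstanceAs (Encodable Empty)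

instance instEncR : (n : ℕ) → Encodable (L.Relations n) :=
  fun _ => inferInstanceAs (Encodable Empty)

/-- Partial inverse to `BoundedFormula.listEncode` on sentences. -/
def decodeSentence
    (l : List ((Σ k, L.Term (Empty ⊕ Fin k)) ⊕ ((Σ n, L.Relations n) ⊕ ℕ))) :
    Option L.Sentence :=
  (BoundedFormula.listDecode l)[0]?.bind
    (fun x => if h : x.1 = 0 then
      some (cast (congrArg (L.BoundedFormula Empty) h) x.2) else none)

/-- An effective encoding of sentences (via their encodings as lists of symbols). -/
instance instEncSentence : Encodable L.Sentence :=
  Encodable.ofLeftInjection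
    (fun φ => BoundedFormula.listEncode φ)
    decodeSentence
    (fun φ => by
      have h := BoundedFormula.listDecode_encode_list (L := L) (α := Empty) [⟨0, φ⟩]
      rw [List.flatMap_singleton] at h
      have h' : BoundedFormula.listDecode (BoundedFormula.listEncode φ) =
          [⟨0, φ⟩] := h
      simp [decodeSentence, h'])

/-- The structure on ℤ interpreting `+`, `1` and `g`. -/
def S (g : ℤ → ℤ) : L.Structure ℤ where
  funMap {n} f x :=
    match n, f with
    | 0, _ => 1
    | 1, _ => g (x 0)
    | 2, _ => x 0 + x 1
  RelMap {n} r _ := nomatch r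

/-- The first-order theory of (ℤ; +, 1, g), as a set of codes of sentences. -/
def theoryCodes (g : ℤ → ℤ) : Set ℕ :=
  {c | ∃ φ : L.Sentence, Encodable.encode φ = c ∧ @Sentence.Realize L ℤ (S g) φ}

/-!
Write `r(n) = α n - ⌊α n⌉`. The second differences of `g` single out the `n` for which `α n` is
close to `1 / 2` modulo `1`, and these let one compare the sizes of small residues `r(n)`. The
polarization `g(m + n) - g(m) - g(n)` is within a bounded error of `β W(m, n)` for
`W(m, n) = n ⌊α m⌉ + m ⌊α n⌉`, and replacing `m` by a large multiple magnifies any mistake in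
`W(m, n)` beyond that error, so `W` is definable for `m` of small residue. By Kronecker's theorem
for `(α, α ^ 2)`, as `α m` tends to `0` modulo `1` the maps `n ↦ α W(m, n)` modulo `1` come close
to every homomorphism `n ↦ n y`. Taking `y` small recovers the order of `ℤ`, and taking `y = 1 / k`
recovers divisibility by `k`. Finally `+` and `∣` define multiplication through
`n (n + 1) = lcm(n, n + 1)`, and arithmetic encodes the halting problem.
-/

section Definability

variable {𝓛 : Language} {M : Type*} {𝓢 : 𝓛.Structure M} {N : Type*}

/-- A copy of `N` inside the structure `𝓢` on `M` whose underlying set is definable without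
parameters. -/
structure DefinableDomain (𝓢 : 𝓛.Structure M) (N : Type*) where
  embed : N ↪ M
  definable_range : (∅ : Set M).Definable₁ 𝓛 (Set.range embed)

/-- The whole structure as a domain. -/
def DefinableDomain.univ (𝓢 : 𝓛.Structure M) : DefinableDomain 𝓢 M where
  embed := .refl M
  definable_range := by
    rw [Set.Definable₁]
    convert Set.definable_univ
    simp

/-- Definability of a property of valuations of the variables `0, 1, 2, …` in the domain `D`.
Quantifiers bind the variable `0` and shift the others up, as with de Bruijn indices. -/
def Definable (D : DefinableDomain 𝓢 N) (P : (ℕ → N) → Prop) : Prop :=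
  ∃ s : Set (ℕ → M), (∅ : Set M).Definable 𝓛 s ∧ ∀ v, D.embed ∘ v ∈ s ↔ P v

/-- Definability of a unary relation. -/
def Definable₁ (D : DefinableDomain 𝓢 N) (Q : N → Prop) : Prop :=
  Definable D fun v => Q (v 0)

/-- Definability of a binary relation. -/
def Definable₂ (D : DefinableDomain 𝓢 N) (Q : N → N → Prop) : Prop :=
  Definable D fun v => Q (v 0) (v 1)

/-- Definability of a ternary relation. -/
def Definable₃ (D : DefinableDomain 𝓢 N) (Q : N → N → N → Prop) : Prop :=
  Definable D fun v => Q (v 0) (v 1) (v 2)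

/-- Definability of the graph of a function of a valuation. -/
def DefinableFun (D : DefinableDomain 𝓢 N) (f : (ℕ → N) → N) : Prop :=
  Definable D fun v => v 0 = f fun i => v (i + 1)

/-- Definability of the graph of a unary function. -/
def DefinableFun₁ (D : DefinableDomain 𝓢 N) (F : N → N) : Prop :=
  Definable₂ D fun y x => y = F x

/-- Definability of the graph of a binary function. -/
def DefinableFun₂ (D : DefinableDomain 𝓢 N) (F : N → N → N) : Prop :=
  Definable₃ D fun z x y => z = F x y

variable {D : DefinableDomain 𝓢 N} {P Q : (ℕ → N) → Prop}

namespace Definable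

theorem congr (hP : Definable D P) (h : ∀ v, P v ↔ Q v) : Definable D Q :=
  funext (fun v => propext (h v)) ▸ hP

theorem not (hP : Definable D P) : Definable D fun v => ¬ P v :=
  let ⟨s, hs, h⟩ := hP
  ⟨sᶜ, hs.compl, fun v => (h v).not⟩

theorem and (hP : Definable D P) (hQ : Definable D Q) : Definable D fun v => P v ∧ Q v :=
  let ⟨s, hs, h⟩ := hP
  let ⟨t, ht, h'⟩ := hQ
  ⟨s ∩ t, hs.inter ht, fun v => (h v).and (h' v)⟩

theorem or (hP : Definable D P) (hQ : Definable D Q) : Definable D fun v => P v ∨ Q v :=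
  let ⟨s, hs, h⟩ := hP
  let ⟨t, ht, h'⟩ := hQ
  ⟨s ∪ t, hs.union ht, fun v => (h v).or (h' v)⟩

theorem imp (hP : Definable D P) (hQ : Definable D Q) : Definable D fun v => P v → Q v :=
  (hP.not.or hQ).congr fun _ => imp_iff_not_or.symm

theorem iff (hP : Definable D P) (hQ : Definable D Q) : Definable D fun v => P v ↔ Q v :=
  ((hP.imp hQ).and (hQ.imp hP)).congr fun _ => iff_def.symm

theorem relabel (hP : Definable D P) (σ : ℕ → ℕ) : Definable D fun v => P fun i => v (σ i) :=
  let ⟨_, hs, h⟩ := hP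
  ⟨_, hs.preimage_comp σ, fun v => h fun i => v (σ i)⟩

theorem ex {P : (ℕ → N) → N → Prop} (hP : Definable D fun v => P (fun i => v (i + 1)) (v 0)) :
    Definable D fun v => ∃ x, P v x := by
  obtain ⟨s, hs, h⟩ := hP
  let shift : ℕ → ℕ ⊕ Fin 1 := fun i => i.casesOn (.inr 0) .inl
  have hrange := D.definable_range.preimage_comp (Sum.inr : Fin 1 → ℕ ⊕ Fin 1)
  refine ⟨_, ((hs.preimage_comp shift).inter hrange).exists_of_finite, fun v => ?_⟩
  have mem_iff (x : N) (u : Fin 1 → M) (hx : D.embed x = u 0) :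
      Sum.elim (D.embed ∘ v) u ∘ shift ∈ s ↔ P v x := by
    have cons : Sum.elim (D.embed ∘ v) u ∘ shift = D.embed ∘ fun i => i.casesOn x v := by
      funext i
      cases i
      exacts [hx.symm, rfl]
    rw [cons]
    exact h _
  constructor
  · rintro ⟨u, hu, x, hx⟩
    exact ⟨x, (mem_iff x u hx).1 hu⟩
  · rintro ⟨x, hx⟩
    exact ⟨fun _ => D.embed x, (mem_iff x _ rfl).2 hx, x, rfl⟩

theorem all {P : (ℕ → N) → N → Prop} (hP : Definable D fun v => P (fun i => v (i + 1)) (v 0)) :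
    Definable D fun v => ∀ x, P v x :=
  (Definable.ex (P := fun v x => ¬ P v x) hP.not).not.congr fun _ => not_exists_not

theorem var_eq_var (D : DefinableDomain 𝓢 N) (i j : ℕ) : Definable D fun v => v i = v j := by
  refine ⟨_, Set.DefinableFun.ofPred_eq (.proj 𝓛 (i := i)) (.proj 𝓛 (i := j)), fun v => ?_⟩
  exact D.embed.apply_eq_iff_eq (v i) (v j)

end Definable

theorem DefinableFun.var (i : ℕ) : DefinableFun D fun v => v i :=
  .var_eq_var D 0 (i + 1)

theorem DefinableFun.shift {f : (ℕ → N) → N} (hf : DefinableFun D f) :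
    DefinableFun D fun v => f fun i => v (i + 1) :=
  hf.relabel fun i => if i = 0 then 0 else i + 1

theorem Definable₁.comp {Q : N → Prop} (hQ : Definable₁ D Q) {f : (ℕ → N) → N}
    (hf : DefinableFun D f) : Definable D fun v => Q (f v) :=
  (Definable.ex (P := fun v x => x = f v ∧ Q x) (hf.and hQ)).congr fun v => by simp

theorem Definable₂.comp {Q : N → N → Prop} (hQ : Definable₂ D Q) {f h : (ℕ → N) → N}
    (hf : DefinableFun D f) (hh : DefinableFun D h) : Definable D fun v => Q (f v) (h v) :=
  (Definable.ex (P := fun v y => y = h v ∧ ∃ x, x = f v ∧ Q x y) <| hh.and <|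
    Definable.ex (P := fun v x => x = f (fun i => v (i + 1)) ∧ Q x (v 0)) <|
      hf.shift.and hQ).congr fun v => by simp

theorem Definable₃.comp {Q : N → N → N → Prop} (hQ : Definable₃ D Q) {f h k : (ℕ → N) → N}
    (hf : DefinableFun D f) (hh : DefinableFun D h) (hk : DefinableFun D k) :
    Definable D fun v => Q (f v) (h v) (k v) :=
  (Definable.ex (P := fun v z => z = k v ∧ ∃ y, y = h v ∧ ∃ x, x = f v ∧ Q x y z) <| hk.and <|
    Definable.ex (P := fun v y => y = h (fun i => v (i + 1)) ∧
        ∃ x, x = f (fun i => v (i + 1)) ∧ Q x y (v 0)) <| hh.shift.and <|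
      Definable.ex (P := fun v x => x = f (fun i => v (i + 1 + 1)) ∧ Q x (v 0) (v 1)) <|
        hf.shift.shift.and hQ).congr fun v => by simp

theorem DefinableFun₁.comp {F : N → N} (hF : DefinableFun₁ D F) {f : (ℕ → N) → N}
    (hf : DefinableFun D f) : DefinableFun D fun v => F (f v) :=
  Definable₂.comp hF (.var 0) hf.shift

theorem DefinableFun₂.comp {F : N → N → N} (hF : DefinableFun₂ D F) {f h : (ℕ → N) → N}
    (hf : DefinableFun D f) (hh : DefinableFun D h) : DefinableFun D fun v => F (f v) (h v) :=
  Definable₃.comp hF (.var 0) hf.shift hh.shift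

theorem Definable.eq {f h : (ℕ → N) → N} (hf : DefinableFun D f) (hh : DefinableFun D h) :
    Definable D fun v => f v = h v :=
  Definable₂.comp (.var_eq_var D 0 1) hf hh

theorem DefinableFun.const {c : N} (hc : Definable₁ D (· = c)) : DefinableFun D fun _ => c :=
  hc.comp (.var 0)

/-- The domain given by an injection with definable range. -/
def DefinableDomain.ofEmbedding (f : N ↪ M)
    (hf : Definable₁ (.univ 𝓢) (· ∈ Set.range f)) : DefinableDomain 𝓢 N where
  embed := f
  definable_range := by
    obtain ⟨s, hs, h⟩ := hf
    have hpre : {x : Fin 1 → M | x 0 ∈ Set.range f} = (· ∘ fun _ : ℕ => (0 : Fin 1)) ⁻¹' s :=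
      Set.ext fun x => (h fun _ => x 0).symm
    rw [Set.Definable₁, hpre]
    exact hs.preimage_comp fun _ : ℕ => (0 : Fin 1)

theorem Definable.comp_embed {P : (ℕ → M) → Prop} (hP : Definable (.univ 𝓢) P)
    (D : DefinableDomain 𝓢 N) : Definable D fun v => P (D.embed ∘ v) :=
  let ⟨s, hs, h⟩ := hP
  ⟨s, hs, fun v => h (D.embed ∘ v)⟩

end Definability

section Recursion

theorem mem_rec_bind_iff {σ : Type*} {x : Part σ} {h : ℕ → σ → Part σ} {n : ℕ} {y : σ} :
    y ∈ (n.rec x fun k ih => ih.bind (h k) : Part σ) ↔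
      ∃ s : ℕ → σ, s 0 ∈ x ∧ (∀ j < n, s (j + 1) ∈ h j (s j)) ∧ y = s n := by
  induction n generalizing y with
  | zero => exact ⟨fun hy => ⟨fun _ => y, hy, by simp, rfl⟩, fun ⟨_, h0, _, hy⟩ => hy ▸ h0⟩
  | succ n ih =>
    simp only [Part.mem_bind_iff, ih]
    constructor
    · rintro ⟨_, ⟨s, h0, hs, rfl⟩, hy⟩
      refine ⟨fun k => if k ≤ n then s k else y, by simpa using h0, fun j hj => ?_, by simp⟩
      rcases Nat.lt_succ_iff_lt_or_eq.1 hj with hj | rfl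
      · simpa only [hj.le, Nat.succ_le_of_lt hj, if_true] using hs j hj
      · simpa using hy
    · rintro ⟨s, h0, hs, rfl⟩
      exact ⟨s n, ⟨s, h0, fun j hj => hs j (hj.trans n.lt_succ_self), rfl⟩, hs n n.lt_succ_self⟩

theorem exists_beta_eq (s : ℕ → ℕ) (n : ℕ) : ∃ c, ∀ i ≤ n, Nat.beta c i = s i := by
  refine ⟨Nat.unbeta ((List.range (n + 1)).map s), fun i hi => ?_⟩
  simpa using Nat.beta_unbeta_coe ((List.range (n + 1)).map s) ⟨i, by simp; omega⟩

theorem mem_rec_bind_iff_exists_beta {x : Part ℕ} {h : ℕ → ℕ → Part ℕ} {n y : ℕ} :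
    y ∈ (n.rec x fun k ih => ih.bind (h k) : Part ℕ) ↔
      ∃ c, Nat.beta c 0 ∈ x ∧ (∀ j < n, Nat.beta c (j + 1) ∈ h j (Nat.beta c j)) ∧
        y = Nat.beta c n := by
  rw [mem_rec_bind_iff]
  constructor
  · rintro ⟨s, h0, hs, rfl⟩
    obtain ⟨c, hc⟩ := exists_beta_eq s n
    refine ⟨c, by rwa [hc 0 n.zero_le], fun j hj => ?_, (hc n le_rfl).symm⟩
    rw [hc (j + 1) hj, hc j hj.le]
    exact hs j hj
  · rintro ⟨c, hc⟩
    exact ⟨Nat.beta c, hc⟩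

theorem beta_eq_iff {c i y : ℕ} : y = Nat.beta c i ↔
    ∃ a b, c = Nat.pair a b ∧ y < (i + 1) * b + 1 ∧ ∃ q, a = ((i + 1) * b + 1) * q + y := by
  constructor
  · rintro rfl
    exact ⟨c.unpair.1, c.unpair.2, c.pair_unpair.symm, Nat.mod_lt _ (Nat.succ_pos _),
      _, (Nat.div_add_mod _ _).symm⟩
  · rintro ⟨a, b, rfl, hlt, q, rfl⟩
    simp [Nat.beta, Nat.mod_eq_of_lt hlt]

theorem eq_unpair_fst_iff {n a : ℕ} : a = n.unpair.1 ↔ ∃ b, n = Nat.pair a b :=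
  ⟨fun h => ⟨n.unpair.2, by rw [h, Nat.pair_unpair]⟩, fun ⟨b, h⟩ => by rw [h, Nat.unpair_pair]⟩

theorem eq_unpair_snd_iff {n b : ℕ} : b = n.unpair.2 ↔ ∃ a, n = Nat.pair a b :=
  ⟨fun h => ⟨n.unpair.1, by rw [h, Nat.pair_unpair]⟩, fun ⟨a, h⟩ => by rw [h, Nat.unpair_pair]⟩

end Recursion

section Arithmetic

variable {𝓛 : Language} {M : Type*} {𝓢 : 𝓛.Structure M} {D : DefinableDomain 𝓢 ℕ}

/-- The structure `𝓢` defines addition and multiplication on a copy `D` of `ℕ`. -/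
structure DefinesArithmetic (D : DefinableDomain 𝓢 ℕ) : Prop where
  add : DefinableFun₂ D (· + ·)
  mul : DefinableFun₂ D (· * ·)

/-- Definability of the graph of a partial function. -/
def DefinablePFun (D : DefinableDomain 𝓢 ℕ) (f : ℕ →. ℕ) : Prop :=
  Definable₂ D fun x y => y ∈ f x

theorem definableFun_zero (hadd : DefinableFun₂ D (· + ·)) : DefinableFun D fun _ => 0 :=
  .const <| Definable.congr (.eq (hadd.comp (.var 0) (.var 0)) (.var 0)) fun v => by
    simp

theorem DefinablePFun.of_fun {F : ℕ → ℕ} (hF : DefinableFun₁ D F) : DefinablePFun D F :=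
  (Definable.eq (.var 1) (hF.comp (.var 0))).congr fun _ => Part.mem_some_iff.symm

namespace DefinesArithmetic

theorem zero (hD : DefinesArithmetic D) : DefinableFun D fun _ => 0 := definableFun_zero hD.add

theorem one (hD : DefinesArithmetic D) : DefinableFun D fun _ => 1 :=
  .const <| Definable.congr
    (.and (.eq (hD.mul.comp (.var 0) (.var 0)) (.var 0)) (.not (.eq (.var 0) hD.zero)))
    fun v => by
      rcases Nat.eq_zero_or_pos (v 0) with h | h
      · simp [h]
      · simp [h.ne']

theorem lt (hD : DefinesArithmetic D) : Definable₂ D (· < ·) :=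
  Definable.congr (P := fun v => ∃ z, v 0 + z + 1 = v 1)
    (.ex (.eq (hD.add.comp (hD.add.comp (.var 1) (.var 0)) hD.one) (.var 2)))
    fun v => ⟨fun ⟨z, hz⟩ => by omega, fun h => ⟨v 1 - v 0 - 1, by omega⟩⟩

theorem pair (hD : DefinesArithmetic D) : DefinableFun₂ D Nat.pair :=
  Definable.congr
    (P := fun v => (v 1 < v 2 ∧ v 0 = v 2 * v 2 + v 1) ∨ ¬ v 1 < v 2 ∧ v 0 = v 1 * v 1 + v 1 + v 2)
    (.or
      (.and (hD.lt.comp (.var 1) (.var 2))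
        (.eq (.var 0) (hD.add.comp (hD.mul.comp (.var 2) (.var 2)) (.var 1))))
      (.and (.not (hD.lt.comp (.var 1) (.var 2)))
        (.eq (.var 0) (hD.add.comp (hD.add.comp (hD.mul.comp (.var 1) (.var 1)) (.var 1))
          (.var 2)))))
    fun v => by by_cases h : v 1 < v 2 <;> simp [Nat.pair, h]

theorem beta (hD : DefinesArithmetic D) : DefinableFun₂ D Nat.beta :=
  have modulus (i b : ℕ) : DefinableFun D fun v => (v i + 1) * v b + 1 :=
    hD.add.comp (hD.mul.comp (hD.add.comp (.var i) hD.one) (.var b)) hD.one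
  Definable.congr
    (.ex <| .ex <| .and (.eq (.var 3) (hD.pair.comp (.var 1) (.var 0))) <|
      .and (hD.lt.comp (.var 2) (modulus 4 0)) <| .ex <|
        .eq (.var 2) (hD.add.comp (hD.mul.comp (modulus 5 1) (.var 0)) (.var 3)))
    fun _ => beta_eq_iff.symm

theorem unpair_fst (hD : DefinesArithmetic D) : DefinableFun₁ D fun n => n.unpair.1 :=
  Definable.congr (.ex (.eq (.var 2) (hD.pair.comp (.var 1) (.var 0))))
    fun _ => eq_unpair_fst_iff.symm

theorem unpair_snd (hD : DefinesArithmetic D) : DefinableFun₁ D fun n => n.unpair.2 :=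
  Definable.congr (.ex (.eq (.var 2) (hD.pair.comp (.var 0) (.var 1))))
    fun _ => eq_unpair_snd_iff.symm

theorem pfun_pair (hD : DefinesArithmetic D) {f k : ℕ →. ℕ} (hf : DefinablePFun D f)
    (hk : DefinablePFun D k) : DefinablePFun D fun n => Nat.pair <$> f n <*> k n :=
  Definable.congr (P := fun v => ∃ a, a ∈ f (v 0) ∧ ∃ b, b ∈ k (v 0) ∧ v 1 = Nat.pair a b)
    (.ex <| .and (Definable₂.comp hf (.var 1) (.var 0)) <| .ex <|
      .and (Definable₂.comp hk (.var 2) (.var 0)) <| .eq (.var 3) (hD.pair.comp (.var 1) (.var 0)))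
    fun _ => by simp [Seq.seq, eq_comm]

theorem pfun_prec (hD : DefinesArithmetic D) {f h : ℕ →. ℕ} (hf : DefinablePFun D f)
    (hh : DefinablePFun D h) : DefinablePFun D (Nat.unpaired fun a n => n.rec (f a) fun k ih => do
      let i ← ih
      h (Nat.pair a (Nat.pair k i))) :=
  have beta_zero : Definable D fun v => Nat.beta (v 0) 0 ∈ f (v 1).unpair.1 :=
    Definable₂.comp hf (hD.unpair_fst.comp (.var 1)) (hD.beta.comp (.var 0) hD.zero)
  have beta_succ : Definable D fun v => Nat.beta (v 1) (v 0 + 1) ∈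
      h (Nat.pair (v 2).unpair.1 (Nat.pair (v 0) (Nat.beta (v 1) (v 0)))) :=
    Definable₂.comp hh
      (hD.pair.comp (hD.unpair_fst.comp (.var 2))
        (hD.pair.comp (.var 0) (hD.beta.comp (.var 1) (.var 0))))
      (hD.beta.comp (.var 1) (hD.add.comp (.var 0) hD.one))
  Definable.congr
    (.ex <| .and beta_zero <|
      .and (.all <| .imp (hD.lt.comp (.var 0) (hD.unpair_snd.comp (.var 2))) beta_succ) <|
        .eq (.var 2) (hD.beta.comp (.var 0) (hD.unpair_snd.comp (.var 1))))
    fun _ => mem_rec_bind_iff_exists_beta.symm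

theorem pfun_rfind (hD : DefinesArithmetic D) {f : ℕ →. ℕ} (hf : DefinablePFun D f) :
    DefinablePFun D fun a =>
      Nat.rfind fun n => (fun m => decide (m = 0)) <$> f (Nat.pair a n) :=
  Definable.congr
    (P := fun v => 0 ∈ f (Nat.pair (v 0) (v 1)) ∧
      ∀ j, j < v 1 → ∃ z, z ∈ f (Nat.pair (v 0) j) ∧ z ≠ 0)
    (.and (Definable₂.comp hf (hD.pair.comp (.var 0) (.var 1)) hD.zero) <|
      .all <| .imp (hD.lt.comp (.var 0) (.var 2)) <| .ex <|
        .and (Definable₂.comp hf (hD.pair.comp (.var 2) (.var 1)) (.var 0))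
          (.not (.eq (.var 0) hD.zero)))
    fun _ => .trans (by simp [and_comm]) Nat.mem_rfind.symm

theorem partrec (hD : DefinesArithmetic D) {f : ℕ →. ℕ} (hf : Nat.Partrec f) :
    DefinablePFun D f := by
  induction hf with
  | zero => exact .of_fun (F := fun _ => 0) hD.zero
  | succ => exact .of_fun (.eq (.var 0) (hD.add.comp (.var 1) hD.one))
  | left => exact .of_fun hD.unpair_fst
  | right => exact .of_fun hD.unpair_snd
  | pair _ _ hf hk => exact hD.pfun_pair hf hk
  | comp _ _ hf hk =>
    exact Definable.congr
      (.ex <| .and (Definable₂.comp hk (.var 1) (.var 0)) (Definable₂.comp hf (.var 0) (.var 2)))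
      fun _ => Part.mem_bind_iff.symm
  | prec _ _ hf hh => exact hD.pfun_prec hf hh
  | rfind _ hf => exact hD.pfun_rfind hf

end DefinesArithmetic

theorem eq_mul_succ_iff_forall_dvd_iff {u n : ℕ} :
    u = n * (n + 1) ↔ ∀ w, u ∣ w ↔ n ∣ w ∧ n + 1 ∣ w := by
  have hlcm (w) : n ∣ w ∧ n + 1 ∣ w ↔ n * (n + 1) ∣ w :=
    ⟨fun h => Nat.Coprime.mul_dvd_of_dvd_of_dvd (by simp) h.1 h.2,
      fun h => ⟨(dvd_mul_right _ _).trans h, (dvd_mul_left _ _).trans h⟩⟩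
  simp only [hlcm]
  exact ⟨fun h w => h ▸ Iff.rfl, fun h => Nat.dvd_antisymm ((h _).2 dvd_rfl) ((h _).1 dvd_rfl)⟩

theorem eq_mul_iff_mul_succ {x y z : ℕ} : z = x * y ↔
    (x + y) * (x + y + 1) = x * (x + 1) + y * (y + 1) + (z + z) := by
  constructor <;> intro h <;> linarith

theorem DefinesArithmetic.of_add_dvd (hadd : DefinableFun₂ D (· + ·))
    (hdvd : Definable₂ D (· ∣ ·)) : DefinesArithmetic D := by
  have hone : DefinableFun D fun _ => 1 :=
    .const <| Definable.congr (.all (hdvd.comp (.var 1) (.var 0))) fun v =>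
      ⟨fun h => Nat.dvd_one.1 (h 1), fun h w => h ▸ one_dvd w⟩
  have hoblong : DefinableFun₁ D fun n => n * (n + 1) :=
    Definable.congr (.all <| (hdvd.comp (.var 1) (.var 0)).iff <|
      (hdvd.comp (.var 2) (.var 0)).and (hdvd.comp (hadd.comp (.var 2) hone) (.var 0)))
      fun _ => eq_mul_succ_iff_forall_dvd_iff.symm
  refine ⟨hadd, ?_⟩
  exact Definable.congr (.eq (hoblong.comp (hadd.comp (.var 1) (.var 2)))
    (hadd.comp (hadd.comp (hoblong.comp (.var 1)) (hoblong.comp (.var 2)))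
      (hadd.comp (.var 0) (.var 0)))) fun _ => eq_mul_iff_mul_succ.symm

end Arithmetic

section Undecidability

variable {g : ℤ → ℤ}

/-- The constant symbol of `L`. -/
def oneSymbol : L.Constants := (() : Unit)

/-- The unary function symbol of `L`. -/
def gSymbol : L.Functions 1 := (() : Unit)

/-- The addition symbol of `L`. -/
def addSymbol : L.Functions 2 := (() : Unit)

/-- The closed term `1 + (1 + ⋯)` with value `n + 1`; `L` has no closed term that denotes `0`
under every interpretation of `g`. -/
def numeral : ℕ → L.Term (Empty ⊕ Fin 1)
  | 0 => oneSymbol.term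
  | n + 1 => addSymbol.apply₂ oneSymbol.term (numeral n)

/-- The sentence `∀ x, x = n + 1 → φ x`. -/
def sentenceAt (φ : L.Formula (Fin 1)) (n : ℕ) : L.Sentence :=
  (((Term.var (.inr 0)).bdEqual (numeral n)).imp (BoundedFormula.relabel Sum.inr φ)).all

theorem realize_numeral (v : Empty ⊕ Fin 1 → ℤ) (n : ℕ) :
    @Term.realize L ℤ (S g) _ v (numeral n) = n + 1 := by
  induction n with
  | zero => rfl
  | succ n ih =>
    change 1 + @Term.realize L ℤ (S g) _ v (numeral n) = _
    rw [ih]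
    push_cast
    ring

theorem realize_sentenceAt (φ : L.Formula (Fin 1)) (n : ℕ) :
    @Sentence.Realize L ℤ (S g) (sentenceAt φ n) ↔
      @Formula.Realize L ℤ (S g) _ φ fun _ => (n + 1 : ℤ) := by
  let _ := S g
  have snoc_eq (u : Fin 0 → ℤ) (a : ℤ) : (Fin.snoc u a : Fin 1 → ℤ) = fun _ => a :=
    funext fun i => by simp [Fin.snoc]
  simp only [sentenceAt, Sentence.Realize, Formula.Realize, BoundedFormula.realize_all,
    BoundedFormula.realize_imp, BoundedFormula.realize_bdEqual, realize_numeral, snoc_eq]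
  exact forall_eq.trans (Formula.realize_relabel_sumInr φ)

theorem primrec_encode_cons {α : Type*} [Encodable α] {a : ℕ → α} {l : ℕ → List α}
    (ha : Primrec fun n => Encodable.encode (a n)) (hl : Primrec fun n => Encodable.encode (l n)) :
    Primrec fun n => Encodable.encode (a n :: l n) :=
  (Primrec.succ.comp (Primrec₂.natPair.comp ha hl)).of_eq fun _ =>
    (Encodable.encode_list_cons _ _).symm

theorem listEncode_numeral_succ (n : ℕ) :
    (numeral (n + 1)).listEncode =
      .inr ⟨2, addSymbol⟩ :: .inr ⟨0, oneSymbol⟩ :: (numeral n).listEncode := by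
  simp [numeral, Functions.apply₂, Constants.term,
    Term.listEncode, List.finRange_succ]

theorem primrec_encode_numeral : Primrec fun n => Encodable.encode (numeral n) := by
  let plus : (Empty ⊕ Fin 1) ⊕ Σ i, L.Functions i := .inr ⟨2, addSymbol⟩
  let one : (Empty ⊕ Fin 1) ⊕ Σ i, L.Functions i := .inr ⟨0, oneSymbol⟩
  have prepend (a : ℕ) : Primrec fun e => (Nat.pair a e).succ :=
    Primrec.succ.comp (Primrec₂.natPair.comp (.const a) .id)
  have step := (prepend (Encodable.encode plus)).comp (prepend (Encodable.encode one))
  refine (Primrec.nat_rec₁ (Encodable.encode (numeral 0)) (step.comp .snd).to₂).of_eq fun n => ?_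
  induction n with
  | zero => rfl
  | succ n ih =>
    change _ = Encodable.encode (numeral (n + 1)).listEncode
    rw [listEncode_numeral_succ, Encodable.encode_list_cons, Encodable.encode_list_cons]
    exact congrArg (fun e => (Nat.pair _ (Nat.pair _ e).succ).succ) ih

theorem listEncode_sentenceAt (φ : L.Formula (Fin 1)) (n : ℕ) :
    (sentenceAt φ n).listEncode =
      .inr (.inr 1) :: .inr (.inr 0) :: .inl ⟨1, .var (.inr 0)⟩ :: .inl ⟨1, numeral n⟩ ::
        (BoundedFormula.relabel (n := 1) Sum.inr φ : L.BoundedFormula Empty 1).listEncode := by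
  simp [sentenceAt, BoundedFormula.listEncode, Term.bdEqual]

theorem primrec_encode_sentenceAt (φ : L.Formula (Fin 1)) :
    Primrec fun n => Encodable.encode (sentenceAt φ n) := by
  change Primrec fun n => Encodable.encode (sentenceAt φ n).listEncode
  simp only [listEncode_sentenceAt]
  refine primrec_encode_cons (.const _) <| primrec_encode_cons (.const _) <|
    primrec_encode_cons (.const _) <| primrec_encode_cons ?_ (.const _)
  exact Primrec.nat_mul.comp (.const 2) (Primrec₂.natPair.comp (.const 1) primrec_encode_numeral)

theorem mem_theoryCodes_encode {φ : L.Sentence} :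
    Encodable.encode φ ∈ theoryCodes g ↔ @Sentence.Realize L ℤ (S g) φ :=
  ⟨fun ⟨_, h, h'⟩ => Encodable.encode_injective h ▸ h', fun h => ⟨φ, rfl, h⟩⟩

theorem Definable₁.exists_primrec_encode_sentence {D : DefinableDomain (S g) ℕ}
    (hD : ∀ n, D.embed n = n) {Q : ℕ → Prop} (hQ : Definable₁ D Q) :
    ∃ c : ℕ → ℕ, Primrec c ∧ ∀ n, c n ∈ theoryCodes g ↔ Q (n + 1) := by
  let _ := S g
  obtain ⟨s, hs, hsQ⟩ := hQ
  obtain ⟨φ, hφ⟩ := Set.empty_definable_iff.1 (hs.preimage_comp fun _ => (0 : Fin 1))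
  refine ⟨_, primrec_encode_sentenceAt φ, fun n => ?_⟩
  have hconst : (fun _ : ℕ => (n + 1 : ℤ)) = D.embed ∘ fun _ => n + 1 := by
    funext
    simp [hD]
  rw [mem_theoryCodes_encode, realize_sentenceAt]
  refine (Set.ext_iff.1 hφ _).symm.trans ?_
  change (fun _ : ℕ => (n + 1 : ℤ)) ∈ s ↔ _
  rw [hconst]
  exact hsQ _

theorem DefinesArithmetic.not_computablePred {D : DefinableDomain (S g) ℕ}
    (hD : ∀ n, D.embed n = n) (harith : DefinesArithmetic D) :
    ¬ ComputablePred fun c => c ∈ theoryCodes g := by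
  have hpartrec : Nat.Partrec fun n => (Denumerable.ofNat Nat.Partrec.Code n).eval 0 :=
    Partrec.nat_iff.1 <| Nat.Partrec.Code.eval_part.comp (.ofNat _) (.const 0)
  have hhalts : Definable₁ D fun n => ∃ m, n = m + 1 ∧
      ∃ y, y ∈ (Denumerable.ofNat Nat.Partrec.Code m).eval 0 :=
    .ex <| .and (.eq (.var 1) (harith.add.comp (.var 0) harith.one)) <|
      .ex <| Definable₂.comp (harith.partrec hpartrec) (.var 1) (.var 0)
  obtain ⟨c, hc, hmem⟩ := hhalts.exists_primrec_encode_sentence hD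
  refine fun h => ComputablePred.halting_problem 0 <| ComputablePred.computable_of_manyOneReducible
    ⟨_, (hc.comp .encode).to_comp, fun code => ?_⟩ h
  simp [hmem, Part.dom_iff_mem]

end Undecidability

section Kronecker

open MeasureTheory UnitAddTorus

variable {ι : Type*} [Fintype ι]

theorem mFourier_apply_add (k : ι → ℤ) (x y : UnitAddTorus ι) :
    mFourier k (x + y) = mFourier k x * mFourier k y := by
  simp only [mFourier, ContinuousMap.coe_mk, Pi.add_apply, fourier_apply, smul_add,
    AddCircle.toCircle_add, Circle.coe_mul, Finset.prod_mul_distrib]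

theorem ext_of_integral_mFourier_eq {μ ν : Measure (UnitAddTorus ι)} [IsFiniteMeasure μ]
    [IsFiniteMeasure ν] (h : ∀ k, ∫ y, mFourier k y ∂μ = ∫ y, mFourier k y ∂ν) : μ = ν := by
  have integrable (f : C(UnitAddTorus ι, ℂ)) (ρ : Measure (UnitAddTorus ι)) [IsFiniteMeasure ρ] :
      Integrable f ρ :=
    f.continuous.integrable_of_hasCompactSupport (.of_compactSpace _)
  have heq : ∀ f ∈ Submodule.span ℂ (Set.range (mFourier (d := ι))),
      ∫ y, f y ∂μ = ∫ y, f y ∂ν := by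
    intro f hf
    induction hf using Submodule.span_induction with
    | mem f hf =>
      obtain ⟨k, rfl⟩ := hf
      exact h k
    | zero => simp
    | add f g _ _ ihf ihg =>
      simp only [ContinuousMap.add_apply]
      rw [integral_add (integrable f μ) (integrable g μ),
        integral_add (integrable f ν) (integrable g ν), ihf, ihg]
    | smul c f _ ih => simp only [ContinuousMap.smul_apply, integral_smul, ih]
  refine ext_of_forall_mem_subalgebra_integral_eq_of_polish (𝕜 := ℂ)
    (A := (mFourierSubalgebra ι).comap (BoundedContinuousFunction.toContinuousMapStarₐ ℂ)) ?_
    fun f hf => heq f.toContinuousMap (mFourierSubalgebra_coe.le hf)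
  intro x y hxy
  obtain ⟨_, ⟨f, hf, rfl⟩, hne⟩ := mFourierSubalgebra_separatesPoints hxy
  exact ⟨_, ⟨f, ⟨.mkOfCompact f, hf, rfl⟩, rfl⟩, hne⟩

theorem integral_mFourier_eq_zero {μ : Measure (UnitAddTorus ι)} {x : UnitAddTorus ι} {k : ι → ℤ}
    (hμ : MeasurePreserving (· + x) μ μ) (hx : mFourier k x ≠ 1) : ∫ y, mFourier k y ∂μ = 0 := by
  have h := hμ.integral_comp (measurableEmbedding_addRight x) (mFourier k)
  simp only [mFourier_apply_add, integral_mul_const] at h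
  by_contra hne
  exact hx (mul_left_cancel₀ hne (h.trans (mul_one _).symm))

theorem eq_of_measurePreserving_add_right {μ ν : Measure (UnitAddTorus ι)} [IsProbabilityMeasure μ]
    [IsProbabilityMeasure ν] {x : UnitAddTorus ι} (hx : ∀ k ≠ 0, mFourier k x ≠ 1)
    (hμ : MeasurePreserving (· + x) μ μ) (hν : MeasurePreserving (· + x) ν ν) : μ = ν := by
  refine ext_of_integral_mFourier_eq fun k => ?_
  rcases eq_or_ne k 0 with rfl | hk
  · simp [mFourier_zero]
  · rw [integral_mFourier_eq_zero hμ (hx k hk), integral_mFourier_eq_zero hν (hx k hk)]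

/-- **Kronecker's theorem** -/
theorem dense_zmultiples {x : UnitAddTorus ι} (hx : ∀ k ≠ 0, mFourier k x ≠ 1) :
    Dense (AddSubgroup.zmultiples x : Set (UnitAddTorus ι)) := by
  -- Haar measure on the closure `H` of the multiples is invariant under `x`, hence equals Haar
  -- measure on the whole torus, so the open set `Hᶜ` is null.
  let H := (AddSubgroup.zmultiples x).topologicalClosure
  have hH : IsClosed (H : Set (UnitAddTorus ι)) := AddSubgroup.isClosed_topologicalClosure _
  have : CompactSpace H := isCompact_iff_compactSpace.1 hH.isCompact
  let xH : H := ⟨x, AddSubgroup.le_topologicalClosure _ (AddSubgroup.mem_zmultiples x)⟩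
  let μ : Measure (UnitAddTorus ι) := Measure.addHaarMeasure ⊤
  let ν : Measure H := Measure.addHaarMeasure ⊤
  have : IsProbabilityMeasure μ := ⟨Measure.addHaarMeasure_self⟩
  have : IsProbabilityMeasure ν := ⟨Measure.addHaarMeasure_self⟩
  have : IsProbabilityMeasure (ν.map Subtype.val) :=
    Measure.isProbabilityMeasure_map measurable_subtype_coe.aemeasurable
  have hν : MeasurePreserving (· + x) (ν.map Subtype.val) (ν.map Subtype.val) := by
    refine ⟨measurable_add_const x, ?_⟩
    rw [Measure.map_map (measurable_add_const x) measurable_subtype_coe]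
    conv_rhs => rw [← (measurePreserving_add_right ν xH).map_eq]
    rw [Measure.map_map measurable_subtype_coe (measurable_add_const xH)]
    rfl
  have hnull : μ (H : Set (UnitAddTorus ι))ᶜ = 0 := by
    rw [eq_of_measurePreserving_add_right hx (measurePreserving_add_right μ x) hν,
      Measure.map_apply measurable_subtype_coe hH.measurableSet.compl]
    have hpre : Subtype.val ⁻¹' (H : Set (UnitAddTorus ι))ᶜ = (∅ : Set H) :=
      Set.eq_empty_of_forall_notMem fun y hy => hy y.2
    rw [hpre, measure_empty]
  have hempty := (hH.isOpen_compl.measure_eq_zero_iff μ).1 hnull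
  exact dense_iff_closure_eq.2 (Set.compl_empty_iff.1 hempty)

theorem mFourier_coe_eq_one_iff {k : ι → ℤ} {θ : ι → ℝ} :
    mFourier k (fun i => (θ i : UnitAddCircle)) = 1 ↔ ∃ c : ℤ, ∑ i, k i * θ i = c := by
  simp only [mFourier, ContinuousMap.coe_mk, fourier_coe_apply, ← Complex.exp_sum,
    Complex.exp_eq_one_iff]
  refine exists_congr fun c => ?_
  have hsum : ∑ i, 2 * Real.pi * Complex.I * k i * θ i / (1 : ℝ) =
      (∑ i, k i * θ i : ℝ) * (2 * Real.pi * Complex.I) := by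
    push_cast
    rw [Finset.sum_mul]
    exact Finset.sum_congr rfl fun i _ => by ring
  rw [hsum, mul_left_inj' Complex.two_pi_I_ne_zero]
  norm_cast

end Kronecker

section NearestInteger

open Filter Topology

/-- The nearest integer to `α * n`. -/
noncomputable def nearest (α : ℝ) (n : ℤ) : ℤ :=
  round (α * n)

/-- The signed distance `α * n - nearest α n` from `α * n` to the nearest integer. -/
noncomputable def resid (α : ℝ) (n : ℤ) : ℝ :=
  α * n - nearest α n

/-- The class of `α * n` modulo `1`. Its norm is `|resid α n|`. -/
noncomputable def angle (α : ℝ) : ℤ →+ UnitAddCircle :=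
  zmultiplesHom UnitAddCircle (α : UnitAddCircle)

/-- The filter on `ℤ` of integers `n` for which `α * n` tends to `0` modulo `1`. -/
noncomputable def smallAngle (α : ℝ) : Filter ℤ :=
  comap (angle α) (𝓝 0)

variable {α x y ε : ℝ} {k m n : ℤ}

theorem angle_eq_coe (α : ℝ) (n : ℤ) : angle α n = ((α * n : ℝ) : UnitAddCircle) := by
  rw [mul_comm, ← zsmul_eq_mul]
  rfl

theorem angle_eq_coe_resid (α : ℝ) (n : ℤ) : angle α n = (resid α n : UnitAddCircle) := by
  rw [angle_eq_coe, ← sub_eq_zero, ← AddCircle.coe_sub, resid, sub_sub_cancel,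
    AddCircle.coe_eq_zero_iff]
  exact ⟨nearest α n, by simp⟩

theorem norm_angle (α : ℝ) (n : ℤ) : ‖angle α n‖ = |resid α n| := by
  rw [angle_eq_coe, UnitAddCircle.norm_eq]
  rfl

theorem norm_coe_eq_abs (hx : |x| ≤ 1 / 2) : ‖(x : UnitAddCircle)‖ = |x| :=
  (AddCircle.norm_coe_eq_abs_iff 1 one_ne_zero).2 (by simpa using hx)

theorem mem_smallAngle_iff {s : Set ℤ} :
    s ∈ smallAngle α ↔ ∃ ε > 0, ∀ n, ‖angle α n‖ < ε → n ∈ s :=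
  (NormedAddGroup.nhds_zero_basis_norm_lt.comap (angle α)).mem_iff

theorem abs_resid_lt (hα : Irrational α) (n : ℤ) : |resid α n| < 1 / 2 := by
  refine (abs_sub_round (α * n)).lt_of_ne fun h : |resid α n| = 1 / 2 => ?_
  rcases eq_or_ne n 0 with rfl | hn
  · simp [resid, nearest] at h
  · have hirr := (hα.mul_intCast hn).sub_intCast (nearest α n)
    rcases eq_or_eq_neg_of_abs_eq h with h | h
    · exact hirr.ne_rational 1 2 (h.trans (by norm_num))
    · exact hirr.ne_rational (-1) 2 (h.trans (by norm_num))

theorem nearest_eq (hα : Irrational α) (h : |α * n - k| ≤ 1 / 2) : nearest α n = k := by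
  have hlt : |((k - nearest α n : ℤ) : ℝ)| < 1 := by
    have hsub : ((k - nearest α n : ℤ) : ℝ) = resid α n - (α * n - k) := by
      push_cast [resid]
      ring
    rw [hsub]
    linarith [abs_sub (resid α n) (α * n - k), abs_resid_lt hα n]
  exact (sub_eq_zero.1 <| Int.abs_lt_one_iff.1 <| by exact_mod_cast hlt).symm

theorem nearest_add (hα : Irrational α) (h : |resid α m + resid α n| ≤ 1 / 2) :
    nearest α (m + n) = nearest α m + nearest α n := by
  refine nearest_eq hα ?_
  convert h using 2
  push_cast [resid]
  ring

theorem nearest_sub (hα : Irrational α) (h : |resid α m - resid α n| ≤ 1 / 2) :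
    nearest α (m - n) = nearest α m - nearest α n := by
  refine nearest_eq hα ?_
  convert h using 2
  push_cast [resid]
  ring

theorem nearest_mul (hα : Irrational α) (h : |k * resid α n| ≤ 1 / 2) :
    nearest α (k * n) = k * nearest α n := by
  refine nearest_eq hα ?_
  convert h using 2
  push_cast [resid]
  ring

theorem resid_eq (hα : Irrational α) (h : angle α n = (x : UnitAddCircle)) (hx : |x| ≤ 1 / 2) :
    resid α n = x := by
  rw [angle_eq_coe, ← sub_eq_zero, ← AddCircle.coe_sub, AddCircle.coe_eq_zero_iff] at h
  obtain ⟨k, hk⟩ := h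
  have hk : α * n - k = x := by simp at hk; linarith
  rw [resid, nearest_eq hα (hk ▸ hx), hk]

theorem resid_neg (hα : Irrational α) (n : ℤ) : resid α (-n) = -resid α n :=
  resid_eq hα (by rw [map_neg, angle_eq_coe_resid, AddCircle.coe_neg])
    ((abs_neg _).trans_le (abs_resid_lt hα n).le)

theorem resid_add (hα : Irrational α) (h : |resid α m + resid α n| ≤ 1 / 2) :
    resid α (m + n) = resid α m + resid α n :=
  resid_eq hα (by rw [map_add, angle_eq_coe_resid, angle_eq_coe_resid, AddCircle.coe_add]) h

theorem resid_sub (hα : Irrational α) (h : |resid α m - resid α n| ≤ 1 / 2) :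
    resid α (m - n) = resid α m - resid α n :=
  resid_eq hα (by rw [map_sub, angle_eq_coe_resid, angle_eq_coe_resid, AddCircle.coe_sub]) h

theorem resid_mul (hα : Irrational α) (h : |k * resid α n| ≤ 1 / 2) :
    resid α (k * n) = k * resid α n := by
  rw [resid, nearest_mul hα h, resid]
  push_cast
  ring

theorem denseRange_angle (hα : Irrational α) : DenseRange (angle α) :=
  AddCircle.denseRange_zsmul_coe_iff.2 (by simpa using hα)

theorem exists_resid_mem_Ioo (hα : Irrational α) (hxy : x < y) (hx : -(1 / 2) ≤ x)
    (hy : y ≤ 1 / 2) : ∃ n, resid α n ∈ Set.Ioo x y := by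
  obtain ⟨n, z, hz, hzn⟩ := (denseRange_angle hα).exists_mem_open
    (QuotientAddGroup.isOpenMap_coe _ isOpen_Ioo) ((Set.nonempty_Ioo.2 hxy).image _)
  refine ⟨n, ?_⟩
  rwa [resid_eq hα hzn.symm (abs_le.2 ⟨hx.trans hz.1.le, hz.2.le.trans hy⟩)]

theorem exists_norm_angle_mem_Ioo (hα : Irrational α) (hx : 0 ≤ x) (hx' : x < 1 / 2)
    (hxy : x < y) : ∃ n, ‖angle α n‖ ∈ Set.Ioo x y := by
  obtain ⟨n, hn⟩ := exists_resid_mem_Ioo hα (lt_min hxy hx') (by linarith) (min_le_right _ _)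
  refine ⟨n, ?_⟩
  rw [norm_angle, abs_of_pos (hx.trans_lt hn.1)]
  exact ⟨hn.1, hn.2.trans_le (min_le_left _ _)⟩

theorem irrational_of_linearIndependent (h : LinearIndependent ℚ ![(1 : ℝ), α, α ^ 2]) :
    Irrational α := by
  rintro ⟨q, rfl⟩
  have hcoeff := Fintype.linearIndependent_iff.1 h ![-q, 1, 0]
    (by simp [Fin.sum_univ_three, Rat.smul_def]) 1
  simp at hcoeff

end NearestInteger

section Integers

open Filter

variable {g : ℤ → ℤ} {f h : (ℕ → ℤ) → ℤ} {P Q : ℤ → Prop}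

theorem DefinableFun.realize {𝓛 : Language} {M : Type*} (𝓢 : 𝓛.Structure M) (t : 𝓛.Term ℕ) :
    DefinableFun (.univ 𝓢) fun v => t.realize v := by
  refine ⟨_, Set.DefinableFun.ofPred_eq (.proj 𝓛 (i := 0))
    (t.relabel (· + 1)).definableFun_realize, fun v => ?_⟩
  change v 0 = (t.relabel (· + 1)).realize v ↔ _
  rw [Term.realize_relabel]
  rfl

theorem definableFun_apply (g : ℤ → ℤ) : DefinableFun₁ (.univ (S g)) g :=
  DefinableFun.realize (S g) (gSymbol.apply₁ (.var 0))

theorem definableFun_add (g : ℤ → ℤ) : DefinableFun₂ (.univ (S g)) (· + ·) :=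
  DefinableFun.realize (S g) (addSymbol.apply₂ (.var 0) (.var 1))

namespace DefinableFun

theorem one (g : ℤ → ℤ) : DefinableFun (.univ (S g)) fun _ => 1 :=
  .realize (S g) oneSymbol.term

theorem apply (hf : DefinableFun (.univ (S g)) f) : DefinableFun (.univ (S g)) fun v => g (f v) :=
  (definableFun_apply g).comp hf

theorem add (hf : DefinableFun (.univ (S g)) f) (hh : DefinableFun (.univ (S g)) h) :
    DefinableFun (.univ (S g)) fun v => f v + h v :=
  (definableFun_add g).comp hf hh

theorem sub (hf : DefinableFun (.univ (S g)) f) (hh : DefinableFun (.univ (S g)) h) :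
    DefinableFun (.univ (S g)) fun v => f v - h v :=
  (Definable.eq ((var 0).add hh.shift) hf.shift).congr fun _ => eq_sub_iff_add_eq.symm

theorem const_mul (c : ℤ) (hf : DefinableFun (.univ (S g)) f) :
    DefinableFun (.univ (S g)) fun v => c * f v := by
  induction c with
  | zero => simpa using hf.sub hf
  | succ n ih => simpa only [add_mul, one_mul] using ih.add hf
  | pred n ih => simpa only [sub_mul, one_mul] using ih.sub hf

theorem intConst (g : ℤ → ℤ) (c : ℤ) : DefinableFun (.univ (S g)) fun _ => c := by
  simpa using (one g).const_mul c

theorem neg (hf : DefinableFun (.univ (S g)) f) : DefinableFun (.univ (S g)) fun v => -f v := by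
  simpa using hf.const_mul (-1)

end DefinableFun

theorem Definable₁.of_finite (g : ℤ → ℤ) {s : Set ℤ} (hs : s.Finite) :
    Definable₁ (.univ (S g)) (· ∈ s) := by
  induction s, hs using Set.Finite.induction_on with
  | empty => exact (Definable.eq (.var 0) (.var 0)).not.congr fun _ => by simp
  | insert _ _ ih => exact (Definable.eq (.var 0) (.intConst g _)).or ih

theorem Definable₁.congr_cofinite (hP : Definable₁ (.univ (S g)) P)
    (hPQ : ∀ᶠ x in cofinite, P x ↔ Q x) : Definable₁ (.univ (S g)) Q := by
  refine ((of_finite g (eventually_cofinite.1 hPQ)).not.and hP |>.or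
    (of_finite g ((eventually_cofinite.1 hPQ).subset (Set.sep_subset _ Q)))).congr fun v => ?_
  simp only [Set.mem_ofPred_eq]
  tauto

theorem finite_abs_le (C : ℝ) : {x : ℤ | |(x : ℝ)| ≤ C}.Finite :=
  (Set.finite_Icc (-⌊C⌋) ⌊C⌋).subset fun x hx => abs_le.1 (Int.le_floor.2 (by exact_mod_cast hx))

theorem DefinableFun.abs_le (hf : DefinableFun (.univ (S g)) f) (C : ℝ) :
    Definable (.univ (S g)) fun v => |(f v : ℝ)| ≤ C :=
  (Definable₁.of_finite g (finite_abs_le C)).comp hf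

end Integers

section SmallAngles

open Filter Topology

/-- The second difference of `g` with step `h`. -/
def secondDiff (g : ℤ → ℤ) (h n : ℤ) : ℤ :=
  g (n + h) + g (n - h) - 2 * g n

/-- The point of the circle antipodal to `0`. -/
noncomputable def antipode : UnitAddCircle :=
  ((1 / 2 : ℝ) : UnitAddCircle)

variable {α β C ε δ : ℝ} {g : ℤ → ℤ} {h m n t : ℤ}

theorem abs_secondDiff_sub_le {u : ℤ → ℤ} (hg : ∀ n, |g n - β * u n| ≤ C) (h n : ℤ) :
    |secondDiff g h n - β * secondDiff u h n| ≤ 4 * C := by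
  have hadd := abs_le.1 (hg (n + h))
  have hsub := abs_le.1 (hg (n - h))
  have hn := abs_le.1 (hg n)
  push_cast [secondDiff]
  rw [abs_le]
  constructor <;> linarith

theorem secondDiff_of_le (hα : Irrational α) (hh : 0 < resid α h)
    (hn : |resid α n| + resid α h ≤ 1 / 2) :
    secondDiff (fun n => n * nearest α n) h n = 2 * h * nearest α h := by
  have hbound := abs_le.1 (le_sub_iff_add_le.2 hn)
  have hadd : nearest α (n + h) = nearest α n + nearest α h :=
    nearest_add hα (abs_le.2 ⟨by linarith, by linarith⟩)
  have hsub : nearest α (n - h) = nearest α n - nearest α h :=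
    nearest_sub hα (abs_le.2 ⟨by linarith, by linarith⟩)
  simp only [secondDiff, hadd, hsub]
  ring

theorem secondDiff_of_lt_add (hα : Irrational α) (hlt : 1 / 2 < resid α n + resid α h) :
    secondDiff (fun n => n * nearest α n) h n = 2 * h * nearest α h + h + n := by
  have hnlt := abs_lt.1 (abs_resid_lt hα n)
  have hhlt := abs_lt.1 (abs_resid_lt hα h)
  have hadd : nearest α (n + h) = nearest α n + nearest α h + 1 := by
    refine nearest_eq hα (abs_le.2 ?_)
    unfold resid at *
    push_cast
    constructor <;> linarith
  have hsub : nearest α (n - h) = nearest α n - nearest α h :=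
    nearest_sub hα (abs_le.2 ⟨by linarith, by linarith⟩)
  simp only [secondDiff, hadd, hsub]
  ring

theorem secondDiff_of_lt_sub (hα : Irrational α) (hlt : 1 / 2 < -resid α n + resid α h) :
    secondDiff (fun n => n * nearest α n) h n = 2 * h * nearest α h + h - n := by
  have hnlt := abs_lt.1 (abs_resid_lt hα n)
  have hhlt := abs_lt.1 (abs_resid_lt hα h)
  have hadd : nearest α (n + h) = nearest α n + nearest α h :=
    nearest_add hα (abs_le.2 ⟨by linarith, by linarith⟩)
  have hsub : nearest α (n - h) = nearest α n - nearest α h - 1 := by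
    refine nearest_eq hα (abs_le.2 ?_)
    unfold resid at *
    push_cast
    constructor <;> linarith
  simp only [secondDiff, hadd, hsub]
  ring

theorem abs_secondDiff_sub_of_lt (hα : Irrational α) (hlt : 1 / 2 < |resid α n| + resid α h) :
    |secondDiff (fun n => n * nearest α n) h n - (2 * h * nearest α h + h)| = |n| := by
  rcases le_total 0 (resid α n) with hpos | hneg
  · rw [abs_of_nonneg hpos] at hlt
    rw [secondDiff_of_lt_add hα hlt, add_sub_cancel_left]
  · rw [abs_of_nonpos hneg] at hlt
    rw [secondDiff_of_lt_sub hα hlt, sub_sub_cancel_left, abs_neg]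

theorem antipode_eq_neg : antipode = ((-(1 / 2) : ℝ) : UnitAddCircle) := by
  rw [antipode, ← sub_eq_zero, ← AddCircle.coe_sub, AddCircle.coe_eq_zero_iff]
  exact ⟨1, by norm_num⟩

theorem norm_angle_sub_antipode (hα : Irrational α) (n : ℤ) :
    ‖angle α n - antipode‖ = 1 / 2 - |resid α n| := by
  have hn := abs_lt.1 (abs_resid_lt hα n)
  rcases le_total 0 (resid α n) with hpos | hneg
  · rw [angle_eq_coe_resid, antipode, ← AddCircle.coe_sub, norm_coe_eq_abs] <;> grind
  · rw [angle_eq_coe_resid, antipode_eq_neg, ← AddCircle.coe_sub, norm_coe_eq_abs] <;> grind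

theorem norm_angle_sub_antipode_lt_iff (hα : Irrational α) (hh : 0 < resid α h) :
    ‖angle α n - antipode‖ < ‖angle α h‖ ↔
      ¬ |resid α n| + resid α h ≤ 1 / 2 := by
  rw [norm_angle_sub_antipode hα, norm_angle, abs_of_pos hh, not_le, sub_lt_iff_lt_add']

theorem abs_le_of_abs_sub_mul_le {β x y c n B E : ℝ} (hβ : β ≠ 0) (hxy : |x - β * y| ≤ E)
    (hx : |x| ≤ B) (hyc : |y - c| = |n|) : |n| ≤ |c| + (B + E) / |β| := by
  have hy : |y| ≤ (B + E) / |β| := by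
    rw [le_div_iff₀ (abs_pos.2 hβ), mul_comm, ← abs_mul]
    grind
  rw [← hyc]
  linarith [abs_sub y c]

theorem definable_norm_angle_sub_antipode_lt (hα : Irrational α) (hβ : β ≠ 0)
    (hg : ∀ n : ℤ, |(g n : ℝ) - β * (n * nearest α n : ℤ)| ≤ C) (hh : 0 < resid α h) :
    Definable₁ (.univ (S g)) fun n =>
      ‖angle α n - antipode‖ < ‖angle α h‖ := by
  let c : ℝ := (2 * h * nearest α h : ℤ)
  let B : ℝ := 4 * C + |β * c|
  have hsecond : Definable₁ (.univ (S g)) fun n => ¬ |(secondDiff g h n : ℝ)| ≤ B :=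
    (((((DefinableFun.var 0).add (.intConst g h)).apply.add
      ((DefinableFun.var 0).sub (.intConst g h)).apply).sub
      ((DefinableFun.var 0).apply.const_mul 2)).abs_le B).not
  refine hsecond.congr_cofinite ?_
  filter_upwards [(finite_abs_le (|c + h| + (B + 4 * C) / |β|)).compl_mem_cofinite] with n hlarge
  have happrox := abs_secondDiff_sub_le hg h n
  rw [norm_angle_sub_antipode_lt_iff hα hh]
  refine not_congr ⟨fun hle => ?_, fun hle => ?_⟩
  · by_contra hn
    refine hlarge (abs_le_of_abs_sub_mul_le hβ happrox hle ?_)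
    have habs := congrArg (Int.cast (R := ℝ)) (abs_secondDiff_sub_of_lt hα (not_le.1 hn))
    push_cast at habs
    push_cast [c]
    exact habs
  · rw [secondDiff_of_le hα hh hle] at happrox
    calc |(secondDiff g h n : ℝ)| = |(secondDiff g h n - β * c) + β * c| := by rw [sub_add_cancel]
      _ ≤ B := (abs_add_le _ _).trans (add_le_add_left happrox _)

theorem norm_angle_lt_two_mul_iff (hα : Irrational α) {r : ℝ} :
    ‖angle α n‖ < 2 * r ↔ ∃ k, ‖angle α k - antipode‖ < r ∧
      ‖angle α (k + n) - antipode‖ < r := by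
  constructor
  · intro hn
    -- place `angle α k` and `angle α (k + n)` symmetrically about the antipode
    let x : UnitAddCircle := (resid α n / 2 : ℝ)
    have hangle : angle α n = x + x := by
      rw [← AddCircle.coe_add, add_halves, angle_eq_coe_resid]
    have hx : ‖x‖ = ‖angle α n‖ / 2 := by
      have hlt := abs_resid_lt hα n
      rw [norm_coe_eq_abs, norm_angle, abs_div, abs_two]
      rw [abs_div, abs_two]
      linarith
    obtain ⟨k, hk⟩ := (denseRange_angle hα).exists_dist_lt (antipode - x)
      (show 0 < r - ‖angle α n‖ / 2 by linarith)
    rw [dist_comm, dist_eq_norm] at hk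
    refine ⟨k, ?_, ?_⟩
    · calc ‖angle α k - antipode‖ = ‖(angle α k - (antipode - x)) - x‖ := by abel_nf
        _ ≤ _ := norm_sub_le _ _
        _ < r := by linarith
    · calc ‖angle α (k + n) - antipode‖ = ‖(angle α k - (antipode - x)) + x‖ := by
            rw [map_add, hangle]
            abel_nf
        _ ≤ _ := norm_add_le _ _
        _ < r := by linarith
  · rintro ⟨k, hk, hkn⟩
    rw [map_add] at hkn
    have := norm_sub_le (angle α k + angle α n - antipode)
      (angle α k - antipode)
    rw [sub_sub_sub_cancel_right, add_sub_cancel_left] at this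
    linarith

theorem definable_norm_angle_lt_two_mul (hα : Irrational α) (hβ : β ≠ 0)
    (hg : ∀ n : ℤ, |(g n : ℝ) - β * (n * nearest α n : ℤ)| ≤ C) (hh : 0 < resid α h) :
    Definable₁ (.univ (S g)) fun n => ‖angle α n‖ < 2 * resid α h := by
  have harc := definable_norm_angle_sub_antipode_lt hα hβ hg hh
  rw [norm_angle, abs_of_pos hh] at harc
  exact (Definable.ex (P := fun v k => ‖angle α k - antipode‖ < resid α h ∧
    ‖angle α (k + v 0) - antipode‖ < resid α h) <|
      harc.and (harc.comp ((DefinableFun.var 0).add (.var 1)))).congr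
    fun v => (norm_angle_lt_two_mul_iff hα).symm

theorem norm_angle_sub_two_mul_lt_iff (hα : Irrational α) (hh : resid α h < 1 / 8) :
    ‖angle α (n - 2 * h)‖ < 2 * resid α h ↔ resid α n ∈ Set.Ioo 0 (2 * (2 * resid α h)) := by
  have hcoe : angle α (n - 2 * h) = ((resid α n - 2 * resid α h : ℝ) : UnitAddCircle) := by
    rw [two_mul, two_mul, map_sub, map_add, angle_eq_coe_resid α n, angle_eq_coe_resid α h,
      AddCircle.coe_sub, AddCircle.coe_add]
  constructor
  · intro hlt
    rw [norm_angle] at hlt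
    have hbound := abs_lt.1 hlt
    have hn : resid α n = resid α (n - 2 * h) + 2 * resid α h := by
      refine resid_eq hα ?_ (abs_le.2 ⟨by linarith, by linarith⟩)
      rw [AddCircle.coe_add, ← angle_eq_coe_resid, hcoe, ← AddCircle.coe_add, sub_add_cancel,
        angle_eq_coe_resid]
    constructor <;> linarith
  · rintro ⟨hpos, hlt⟩
    have hbound : |resid α n - 2 * resid α h| < 2 * resid α h :=
      abs_lt.2 ⟨by linarith, by linarith⟩
    rwa [hcoe, norm_coe_eq_abs (by linarith)]

/-- Comparison of the sizes of two angles below the threshold `ε`. -/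
def AngleLT (α ε : ℝ) (m t : ℤ) : Prop :=
  ‖angle α m‖ < ‖angle α t‖ ∧ ‖angle α t‖ < ε

theorem exists_angleLT_iff (hα : Irrational α) :
    (∃ t, AngleLT α ε m t) ↔ ‖angle α m‖ < ε := by
  refine ⟨fun ⟨t, hmt, ht⟩ => hmt.trans ht, fun hm => ?_⟩
  exact exists_norm_angle_mem_Ioo hα (norm_nonneg _) (norm_angle α m ▸ abs_resid_lt hα m) hm

theorem abs_lt_abs_iff_mem_Ioo {x y : ℝ} (hx : |x| < ε) (hy : |y| < ε) :
    |x| < |y| ↔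
      (y ∈ Set.Ioo 0 (2 * ε) ∧ y - x ∈ Set.Ioo 0 (2 * ε) ∧ y + x ∈ Set.Ioo 0 (2 * ε)) ∨
      (-y ∈ Set.Ioo 0 (2 * ε) ∧ -y - x ∈ Set.Ioo 0 (2 * ε) ∧ -y + x ∈ Set.Ioo 0 (2 * ε)) := by
  have hx := abs_lt.1 hx
  have hy := abs_lt.1 hy
  simp only [lt_abs, abs_lt, Set.mem_Ioo]
  exact or_congr (by constructor <;> grind) (by constructor <;> grind)

theorem angleLT_iff (hα : Irrational α) (hε : ε ≤ 1 / 4) :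
    AngleLT α ε m t ↔ (‖angle α m‖ < ε ∧ ‖angle α t‖ < ε) ∧
      ((resid α t ∈ Set.Ioo 0 (2 * ε) ∧ resid α (t - m) ∈ Set.Ioo 0 (2 * ε) ∧
          resid α (t + m) ∈ Set.Ioo 0 (2 * ε)) ∨
        (resid α (-t) ∈ Set.Ioo 0 (2 * ε) ∧ resid α (-t - m) ∈ Set.Ioo 0 (2 * ε) ∧
          resid α (-t + m) ∈ Set.Ioo 0 (2 * ε))) := by
  by_cases hmt : ‖angle α m‖ < ε ∧ ‖angle α t‖ < ε
  · rw [AngleLT, and_iff_left hmt.2, and_iff_right hmt]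
    simp only [norm_angle] at hmt ⊢
    have hneg : resid α (-t) = -resid α t := resid_neg hα t
    rw [abs_lt_abs_iff_mem_Ioo hmt.1 hmt.2, resid_sub hα, resid_add hα, resid_sub hα,
      resid_add hα, hneg] <;> grind
  · exact iff_of_false (fun h => hmt ⟨h.1.trans h.2, h.2⟩) fun h => hmt h.1

theorem definable_angleLT_two_mul (hα : Irrational α) (hβ : β ≠ 0)
    (hg : ∀ n : ℤ, |(g n : ℝ) - β * (n * nearest α n : ℤ)| ≤ C) (hh : 0 < resid α h)
    (hsmall : resid α h < 1 / 8) :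
    Definable₂ (.univ (S g)) (AngleLT α (2 * resid α h)) := by
  have hlt := definable_norm_angle_lt_two_mul hα hβ hg hh
  have hpos {f : (ℕ → ℤ) → ℤ} (hf : DefinableFun (.univ (S g)) f) :
      Definable (.univ (S g)) fun v => resid α (f v) ∈ Set.Ioo 0 (2 * (2 * resid α h)) :=
    (hlt.comp (hf.sub (.intConst g (2 * h)))).congr fun v => by
      rw [norm_angle_sub_two_mul_lt_iff hα hsmall]
  have hm : DefinableFun (.univ (S g)) fun v => v 0 := .var 0
  have ht : DefinableFun (.univ (S g)) fun v => v 1 := .var 1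
  refine Definable.congr (.and ((hlt.comp hm).and (hlt.comp ht)) <| .or
    ((hpos ht).and <| (hpos (ht.sub hm)).and (hpos (ht.add hm)))
    ((hpos ht.neg).and <| (hpos (ht.neg.sub hm)).and (hpos (ht.neg.add hm)))) fun v =>
      (angleLT_iff hα (by linarith)).symm

theorem exists_definable_angleLT (hα : Irrational α) (hβ : β ≠ 0)
    (hg : ∀ n : ℤ, |(g n : ℝ) - β * (n * nearest α n : ℤ)| ≤ C) (hδ : 0 < δ) :
    ∃ ε, 0 < ε ∧ ε < δ ∧ Definable₂ (.univ (S g)) (AngleLT α ε) := by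
  have hmin : 0 < min (δ / 2) (1 / 8) := by positivity
  obtain ⟨h, hpos, hlt⟩ := exists_resid_mem_Ioo hα hmin (by norm_num)
    ((min_le_right _ _).trans (by norm_num))
  have hlt := lt_min_iff.1 hlt
  exact ⟨2 * resid α h, by linarith, by linarith,
    definable_angleLT_two_mul hα hβ hg hpos hlt.2⟩

theorem Definable.eventually_smallAngle {P : (ℕ → ℤ) → ℤ → Prop} (hα : Irrational α) (hε : 0 < ε)
    (hlt : Definable₂ (.univ (S g)) (AngleLT α ε))
    (hP : Definable (.univ (S g)) fun v => P (fun i => v (i + 1)) (v 0)) :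
    Definable (.univ (S g)) fun v => ∀ᶠ m in smallAngle α, P v m := by
  have hlt := hlt.comp (.var 0) (.var 1)
  have hquant := Definable.ex (P := fun v t =>
    (∃ m, AngleLT α ε m t) ∧ ∀ m, AngleLT α ε m t → P v m) <|
      .and (.ex hlt) <| .all <| hlt.imp (hP.relabel fun i => if i = 0 then 0 else i + 1)
  refine hquant.congr fun v => ⟨?_, fun h => ?_⟩
  · rintro ⟨t, ⟨m, hm, ht⟩, h⟩
    exact mem_smallAngle_iff.2 ⟨‖angle α t‖, (norm_nonneg _).trans_lt hm, fun n hn => h n ⟨hn, ht⟩⟩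
  · obtain ⟨δ, hδ, h⟩ := mem_smallAngle_iff.1 h
    obtain ⟨t, hpos, ht⟩ :=
      exists_norm_angle_mem_Ioo hα le_rfl one_half_pos (lt_min hδ hε)
    have ht := lt_min_iff.1 ht
    exact ⟨t, ⟨0, by simpa using hpos, ht.2⟩, fun m hm => h m (hm.1.trans ht.1)⟩

end SmallAngles

section Product

open Filter Topology

/-- The polarization of the quadratic-like function `n ↦ n * nearest α n`. -/
noncomputable def product (α : ℝ) (m n : ℤ) : ℤ :=
  n * nearest α m + m * nearest α n

/-- `T m n w` expresses `w = product α m n`, for `w` of angle smaller than `ε` and `m` of small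
angle, how small depending on `n`. -/
def RecognizesProduct (α ε : ℝ) (T : ℤ → ℤ → ℤ → Prop) : Prop :=
  ∀ n, ∀ᶠ m in smallAngle α, ∀ w, T m n w ↔ ‖angle α w‖ < ε ∧ w = product α m n

variable {α β C : ℝ} {g : ℤ → ℤ} {k m n w : ℤ}

theorem product_mul_left (h : nearest α (k * m) = k * nearest α m) (n : ℤ) :
    product α (k * m) n = k * product α m n := by
  rw [product, product, h]
  ring

theorem abs_polarization_sub_le (hg : ∀ n : ℤ, |(g n : ℝ) - β * (n * nearest α n : ℤ)| ≤ C)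
    (h : nearest α (m + n) = nearest α m + nearest α n) :
    |(g (m + n) - g m - g n : ℝ) - β * product α m n| ≤ 3 * C := by
  have hmn := abs_le.1 (hg (m + n))
  have hm := abs_le.1 (hg m)
  have hn := abs_le.1 (hg n)
  rw [h] at hmn
  push_cast [product] at *
  rw [abs_le]
  constructor <;> linarith

theorem exists_definable_abs_sub_mul_le (hα : Irrational α)
    (hg : ∀ n : ℤ, |(g n : ℝ) - β * (n * nearest α n : ℤ)| ≤ C) :
    ∃ (b : ℤ → ℤ) (E : ℝ), DefinableFun₁ (.univ (S g)) b ∧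
      ∀ x, ‖angle α x‖ < 1 / 10 → |(b x : ℝ) - β * x| ≤ E := by
  obtain ⟨h, hlo, hhi⟩ := exists_resid_mem_Ioo (x := 3 / 10) (y := 4 / 10) hα (by norm_num)
    (by norm_num) (by norm_num)
  let c : ℤ := 2 * h * nearest α h + 2 * h
  refine ⟨fun x => secondDiff g h (x + h), 4 * C + |β * c|, ?_, fun x hx => ?_⟩
  · have hx : DefinableFun (.univ (S g)) fun v => v 0 + h :=
      (DefinableFun.var 0).add (.intConst g h)
    exact ((hx.add (.intConst g h)).apply.add (hx.sub (.intConst g h)).apply).sub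
      (hx.apply.const_mul 2)
  · rw [norm_angle, abs_lt] at hx
    have hadd : resid α (x + h) = resid α x + resid α h :=
      resid_add hα (abs_le.2 ⟨by linarith, by linarith⟩)
    have hsecond := abs_secondDiff_sub_le hg h (x + h)
    rw [secondDiff_of_lt_add hα (by linarith)] at hsecond
    calc |(secondDiff g h (x + h) : ℝ) - β * x|
        = |(secondDiff g h (x + h) - β * (2 * h * nearest α h + h + (x + h) : ℤ)) + β * c| := by
          congr 1
          push_cast [c]
          ring
      _ ≤ 4 * C + |β * c| := (abs_add_le _ _).trans (add_le_add_left hsecond _)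

theorem abs_le_iff_eq_zero {D c E : ℝ} {j : ℤ} (hD : |D - c * j| ≤ E) (hc : 2 * E < |c|) :
    |D| ≤ E ↔ j = 0 := by
  constructor
  · intro h
    by_contra hj
    have hj : (1 : ℝ) ≤ |(j : ℝ)| := by exact_mod_cast Int.one_le_abs hj
    have hcj : |c| ≤ |c * j| := by
      rw [abs_mul]
      exact le_mul_of_one_le_right (abs_nonneg c) hj
    grind
  · rintro rfl
    simpa using hD

theorem eventually_nearest_mul (hα : Irrational α) (K n : ℤ) :
    ∀ᶠ m in smallAngle α, nearest α (K * m) = K * nearest α m ∧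
      nearest α (K * m + n) = nearest α (K * m) + nearest α n := by
  have hn : 0 < 1 / 2 - |resid α n| := sub_pos.2 (abs_resid_lt hα n)
  refine mem_smallAngle_iff.2
    ⟨(1 / 2 - |resid α n|) / (|(K : ℝ)| + 1), by positivity, fun m hm => ?_⟩
  have hm : |K * resid α m| ≤ 1 / 2 - |resid α n| := by
    rw [norm_angle, lt_div_iff₀ (by positivity)] at hm
    rw [abs_mul]
    linarith [abs_nonneg (resid α m)]
  have hmul : |K * resid α m| ≤ 1 / 2 := by linarith [abs_nonneg (resid α n)]
  refine ⟨nearest_mul hα hmul, nearest_add hα ?_⟩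
  rw [resid_mul hα hmul]
  linarith [abs_add_le (K * resid α m) (resid α n)]

theorem abs_sub_polarization_le_iff {b : ℤ → ℤ} {E : ℝ}
    (hg : ∀ n : ℤ, |(g n : ℝ) - β * (n * nearest α n : ℤ)| ≤ C)
    (hK : 2 * (E + 3 * C) < |β * k|) (hb : |(b (k * w) : ℝ) - β * (k * w : ℤ)| ≤ E)
    (hmul : nearest α (k * m) = k * nearest α m)
    (hadd : nearest α (k * m + n) = nearest α (k * m) + nearest α n) :
    |((b (k * w) - (g (k * m + n) - g (k * m) - g n) : ℤ) : ℝ)| ≤ E + 3 * C ↔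
      w = product α m n := by
  have hpolar := abs_polarization_sub_le hg hadd
  rw [product_mul_left hmul] at hpolar
  rw [abs_le_iff_eq_zero (c := β * k) (j := w - product α m n) ?_ hK, sub_eq_zero]
  rw [abs_le] at *
  push_cast at *
  constructor <;> linarith

theorem exists_definable_recognizesProduct (hα : Irrational α) (hβ : β ≠ 0)
    (hg : ∀ n : ℤ, |(g n : ℝ) - β * (n * nearest α n : ℤ)| ≤ C) :
    ∃ ε T, 0 < ε ∧ ε < 1 / 2 ∧ Definable₂ (.univ (S g)) (AngleLT α ε) ∧
      Definable₃ (.univ (S g)) T ∧ RecognizesProduct α ε T := by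
  obtain ⟨b, E, hb, hbE⟩ := exists_definable_abs_sub_mul_le hα hg
  -- The factor `K` magnifies an error in `w` beyond all bounded errors.
  obtain ⟨K, hK⟩ := exists_nat_gt (2 * (E + 3 * C) / |β|)
  have hKβ : 2 * (E + 3 * C) < |β * (K : ℤ)| := by
    rwa [Int.cast_natCast, abs_mul, Nat.abs_cast, ← div_lt_iff₀' (abs_pos.2 hβ)]
  have hδ : (0 : ℝ) < 1 / (10 * (K + 1)) := by positivity
  obtain ⟨ε, hε, hεK, hlt⟩ := exists_definable_angleLT hα hβ hg hδ
  have hεK : ε * (10 * (K + 1)) < 1 := (lt_div_iff₀ (by positivity)).1 hεK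
  have hεK' : 0 ≤ ε * K := by positivity
  refine ⟨ε, fun m n w => (∃ t, AngleLT α ε w t) ∧
      |((b (K * w) - (g (K * m + n) - g (K * m) - g n) : ℤ) : ℝ)| ≤ E + 3 * C,
    hε, by linarith, hlt, ?_, fun n => ?_⟩
  · have hm : DefinableFun (.univ (S g)) fun v => K * v 0 := (DefinableFun.var 0).const_mul K
    have hn : DefinableFun (.univ (S g)) fun v => v 1 := .var 1
    have hw : DefinableFun (.univ (S g)) fun v => K * v 2 := (DefinableFun.var 2).const_mul K
    exact .and (.ex <| hlt.comp (.var 3) (.var 0)) <|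
      ((hb.comp hw).sub (((hm.add hn).apply.sub hm.apply).sub hn.apply)).abs_le _
  · filter_upwards [eventually_nearest_mul hα K n] with m ⟨hmul, hadd⟩ w
    rw [exists_angleLT_iff hα]
    refine and_congr_right fun hw => abs_sub_polarization_le_iff hg hKβ (hbE _ ?_) hmul hadd
    rw [← nsmul_eq_mul, map_nsmul]
    calc ‖K • angle α w‖ ≤ K * ‖angle α w‖ := norm_nsmul_le
      _ ≤ K * ε := by gcongr
      _ < 1 / 10 := by linarith

end Product

section Equidistribution

open Filter Topology UnitAddTorus

variable {α : ℝ} {m n : ℤ}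

theorem mapClusterPt_add {ι G : Type*} [TopologicalSpace G] [AddGroup G] [ContinuousAdd G]
    {F : Filter ι} {u v : ι → G} {x y : G} (hu : MapClusterPt x F u) (hv : Tendsto v F (𝓝 y)) :
    MapClusterPt (x + y) F (u + v) := by
  refine mapClusterPt_iff_frequently.2 fun s hs => ?_
  obtain ⟨U, hU, V, hV, hUV⟩ := mem_nhds_prod_iff.1 (tendsto_add hs)
  exact ((hu.frequently hU).and_eventually (hv hV)).mono fun a ha => hUV (Set.mk_mem_prod ha.1 ha.2)

theorem mapClusterPt_zsmul_sq (h : LinearIndependent ℚ ![(1 : ℝ), α, α ^ 2]) (y : UnitAddCircle) :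
    MapClusterPt y (smallAngle α) fun m : ℤ => m • ((α ^ 2 : ℝ) : UnitAddCircle) := by
  let x : UnitAddTorus (Fin 2) := fun i => (![α, α ^ 2] i : ℝ)
  have hx : ∀ k ≠ 0, mFourier k x ≠ 1 := by
    intro k hk hone
    obtain ⟨c, hc⟩ := mFourier_coe_eq_one_iff.1 hone
    have hcoeff := Fintype.linearIndependent_iff.1 h ![-c, k 0, k 1] (by
      simp [Fin.sum_univ_three, Rat.smul_def] at hc ⊢
      linarith)
    refine hk (funext (Fin.forall_fin_two.2 ⟨?_, ?_⟩))
    · simpa using hcoeff 1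
    · simpa using hcoeff 2
  refine mapClusterPt_iff_frequently.2 fun s hs => frequently_iff.2 fun {U} hU => ?_
  obtain ⟨V, hV, hVU⟩ := mem_comap.1 hU
  have hnhds : {z : UnitAddTorus (Fin 2) | z 0 ∈ V ∧ z 1 ∈ s} ∈ 𝓝 ![0, y] :=
    ((continuous_apply (0 : Fin 2)).continuousAt.eventually_mem hV).and
      ((continuous_apply (1 : Fin 2)).continuousAt.eventually_mem hs)
  obtain ⟨_, ⟨m, rfl⟩, h0, h1⟩ := (dense_zmultiples hx).inter_nhds_nonempty hnhds
  exact ⟨m, hVU h0, h1⟩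

theorem angle_product_one (α : ℝ) (m : ℤ) :
    angle α (product α m 1) =
      m • ((α ^ 2 : ℝ) : UnitAddCircle) + ((-resid α 1 * resid α m : ℝ) : UnitAddCircle) := by
  rw [angle_eq_coe, ← AddCircle.coe_zsmul, ← AddCircle.coe_add, ← sub_eq_zero, ← AddCircle.coe_sub,
    AddCircle.coe_eq_zero_iff]
  refine ⟨nearest α 1 * nearest α m, ?_⟩
  simp only [zsmul_eq_mul, product, resid]
  push_cast
  ring

theorem angle_product (α : ℝ) (m n : ℤ) :
    angle α (product α m n) =
      n • angle α (product α m 1) + (nearest α n - n * nearest α 1) • angle α m := by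
  rw [← map_zsmul, ← map_zsmul, ← map_add]
  congr 1
  simp only [product, smul_eq_mul]
  ring

theorem tendsto_angle (α : ℝ) : Tendsto (angle α) (smallAngle α) (𝓝 0) :=
  tendsto_comap

theorem tendsto_resid (α : ℝ) : Tendsto (resid α) (smallAngle α) (𝓝 0) :=
  (tendsto_zero_iff_abs_tendsto_zero _).2 <|
    ((tendsto_zero_iff_norm_tendsto_zero.1 (tendsto_angle α))).congr fun m => norm_angle α m

theorem mapClusterPt_angle_product (h : LinearIndependent ℚ ![(1 : ℝ), α, α ^ 2])
    (y : UnitAddCircle) :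
    MapClusterPt (fun n : ℤ => n • y) (smallAngle α) fun m n => angle α (product α m n) := by
  have herr : Tendsto (fun m => ((-resid α 1 * resid α m : ℝ) : UnitAddCircle)) (smallAngle α)
      (𝓝 0) := by
    have hmul := (tendsto_resid α).const_mul (-resid α 1)
    rw [mul_zero] at hmul
    exact (AddCircle.continuous_mk' 1).tendsto' 0 0 (AddCircle.coe_zero 1) |>.comp hmul
  have hone : MapClusterPt y (smallAngle α) fun m => angle α (product α m 1) := by
    rw [funext (angle_product_one α), ← add_zero y]
    exact mapClusterPt_add (mapClusterPt_zsmul_sq h y) herr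
  have hpow : MapClusterPt (fun n : ℤ => n • y) (smallAngle α)
      fun m n => n • angle α (product α m 1) :=
    hone.continuousAt_comp (f := fun (y : UnitAddCircle) (n : ℤ) => n • y) (by fun_prop)
  have herr' : Tendsto (fun m n => (nearest α n - n * nearest α 1) • angle α m) (smallAngle α)
      (𝓝 0) :=
    tendsto_pi_nhds.2 fun n => by
      simpa using (tendsto_angle α).const_smul (nearest α n - n * nearest α 1)
  rw [funext₂ (angle_product α), ← add_zero fun n : ℤ => n • y]
  exact mapClusterPt_add hpow herr'

end Equidistribution

section Order

open Filter Topology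

variable {α ε : ℝ} {T : ℤ → ℤ → ℤ → Prop} {g : ℤ → ℤ} {n t x y : ℤ}

/-- For `m` of small angle, `angle α (product α m n)` is small whenever `angle α (product α m 1)` is
smaller than `angle α t`. Since `angle α (product α m n)` is nearly `n • angle α (product α m 1)`,
this bounds `|n|` by `ε / ‖angle α t‖`. -/
def UniformlySmall (α ε : ℝ) (t n : ℤ) : Prop :=
  ∀ᶠ m in smallAngle α, AngleLT α ε (product α m 1) t → ‖angle α (product α m n)‖ < ε

/-- Comparison of absolute values by means of `UniformlySmall`: it implies `|x| ≤ |y|`, and holds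
when `|x| < |y|` and `2 ≤ |y|`. -/
def AbsLT (α ε : ℝ) (x y : ℤ) : Prop :=
  ∃ t, UniformlySmall α ε t x ∧ ¬ UniformlySmall α ε t y

theorem RecognizesProduct.exists_angleLT_iff (hT : RecognizesProduct α ε T) (n : ℤ) :
    ∀ᶠ m in smallAngle α, ∀ t,
      (∃ w, T m n w ∧ AngleLT α ε w t) ↔ AngleLT α ε (product α m n) t := by
  filter_upwards [hT n] with m hm t
  simp only [hm]
  exact ⟨fun ⟨_, ⟨_, hw⟩, hlt⟩ => hw ▸ hlt, fun hlt => ⟨_, ⟨hlt.1.trans hlt.2, rfl⟩, hlt⟩⟩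

theorem RecognizesProduct.exists_iff (hT : RecognizesProduct α ε T) (n : ℤ) :
    ∀ᶠ m in smallAngle α, (∃ w, T m n w) ↔ ‖angle α (product α m n)‖ < ε := by
  filter_upwards [hT n] with m hm
  simp only [hm]
  exact ⟨fun ⟨_, hlt, hw⟩ => hw ▸ hlt, fun hlt => ⟨_, hlt, rfl⟩⟩

theorem uniformlySmall_of_lt (h : |(n : ℝ)| * ‖angle α t‖ < ε) : UniformlySmall α ε t n := by
  have herr : Tendsto (fun m => ‖(nearest α n - n * nearest α 1) • angle α m‖) (smallAngle α)
      (𝓝 0) := by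
    simpa using ((tendsto_angle α).const_smul (nearest α n - n * nearest α 1)).norm
  filter_upwards [herr.eventually_lt_const (sub_pos.2 h)] with m hm hlt
  calc ‖angle α (product α m n)‖
      ≤ ‖n • angle α (product α m 1)‖ + ‖(nearest α n - n * nearest α 1) • angle α m‖ := by
        rw [angle_product α m n]
        exact norm_add_le _ _
    _ < |(n : ℝ)| * ‖angle α t‖ + (ε - |(n : ℝ)| * ‖angle α t‖) := by
        refine add_lt_add_of_le_of_lt ((norm_zsmul_le _ _).trans ?_) hm
        exact mul_le_mul_of_nonneg_left hlt.1.le (abs_nonneg _)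
    _ = ε := add_sub_cancel _ _

theorem UniformlySmall.abs_mul_norm_le (h : LinearIndependent ℚ ![(1 : ℝ), α, α ^ 2])
    (hε : 0 < ε) (hε' : ε < 1 / 2) (hn : UniformlySmall α ε t n) (ht : ‖angle α t‖ < ε) :
    |(n : ℝ)| * ‖angle α t‖ ≤ ε := by
  by_contra! hlt
  have hn0 : 0 < |(n : ℝ)| := pos_of_mul_pos_left (hε.trans hlt) (norm_nonneg _)
  have hbetween : ε / |(n : ℝ)| < min ‖angle α t‖ (1 / 2 / |(n : ℝ)|) :=
    lt_min ((div_lt_iff₀' hn0).2 hlt) (div_lt_div_of_pos_right hε' hn0)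
  obtain ⟨l, hl, hl'⟩ := exists_between hbetween
  have hlpos : 0 < l := (div_pos hε hn0).trans hl
  rw [div_lt_iff₀' hn0] at hl
  rw [lt_min_iff, lt_div_iff₀' hn0] at hl'
  have hsmall : ‖(1 : ℤ) • (l : UnitAddCircle)‖ < ‖angle α t‖ := by
    rw [one_zsmul, norm_coe_eq_abs] <;> rw [abs_of_pos hlpos] <;> linarith
  have hlarge : ε < ‖n • (l : UnitAddCircle)‖ := by
    have habs : |n * l| = |(n : ℝ)| * l := by rw [abs_mul, abs_of_pos hlpos]
    rwa [← AddCircle.coe_zsmul, zsmul_eq_mul, norm_coe_eq_abs (habs ▸ hl'.2.le), habs]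
  have hcont (k : ℤ) : ContinuousAt (fun z : ℤ → UnitAddCircle => ‖z k‖)
      fun k => k • (l : UnitAddCircle) := (continuous_apply k).norm.continuousAt
  have hfreq := (mapClusterPt_angle_product h l).frequently <|
    ((hcont 1).eventually_lt_const hsmall).and ((hcont n).eventually_const_lt hlarge)
  obtain ⟨m, ⟨hone, hmn⟩, hm⟩ := (hfreq.and_eventually hn).exists
  exact (hm ⟨hone, ht⟩).not_gt hmn

theorem AbsLT.abs_le_abs (h : LinearIndependent ℚ ![(1 : ℝ), α, α ^ 2])
    (hε : 0 < ε) (hε' : ε < 1 / 2) (hxy : AbsLT α ε x y) : |x| ≤ |y| := by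
  obtain ⟨t, hx, hy⟩ := hxy
  have ht : ‖angle α t‖ < ε := by
    by_contra ht
    exact hy (.of_forall fun m hm => absurd hm.2 ht)
  have hy := not_lt.1 (mt uniformlySmall_of_lt hy)
  have hle := (hx.abs_mul_norm_le h hε hε' ht).trans hy
  exact_mod_cast le_of_mul_le_mul_right hle
    (pos_of_mul_pos_right (hε.trans_le hy) (abs_nonneg _))

theorem absLT_of_abs_lt (h : LinearIndependent ℚ ![(1 : ℝ), α, α ^ 2])
    (hε : 0 < ε) (hε' : ε < 1 / 2) (hxy : |x| < |y|) (hy : 2 ≤ |y|) : AbsLT α ε x y := by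
  have hy : (2 : ℝ) ≤ |(y : ℝ)| := by exact_mod_cast hy
  have hxy : |(x : ℝ)| < |(y : ℝ)| := by exact_mod_cast hxy
  have hmax : 0 < max |(x : ℝ)| 1 := by positivity
  obtain ⟨t, hlo, hhi⟩ := exists_norm_angle_mem_Ioo (irrational_of_linearIndependent h)
    (x := ε / |(y : ℝ)|) (y := ε / max |(x : ℝ)| 1) (by positivity)
    (by rw [div_lt_iff₀ (by linarith)]; linarith)
    (div_lt_div_of_pos_left hε hmax (max_lt hxy (by linarith)))
  rw [div_lt_iff₀' (by linarith)] at hlo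
  rw [lt_div_iff₀' hmax] at hhi
  have ht : ‖angle α t‖ < ε := by nlinarith [le_max_right |(x : ℝ)| 1, norm_nonneg (angle α t)]
  refine ⟨t, uniformlySmall_of_lt (lt_of_le_of_lt ?_ hhi), fun hsmall => ?_⟩
  · gcongr
    exact le_max_left _ _
  · exact (hsmall.abs_mul_norm_le h hε hε' ht).not_gt hlo

theorem nonneg_iff_absLT (h : LinearIndependent ℚ ![(1 : ℝ), α, α ^ 2])
    (hε : 0 < ε) (hε' : ε < 1 / 2) : 0 ≤ x ↔ AbsLT α ε (2 * x - 1) (2 * x + 2) :=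
  ⟨fun hx => absLT_of_abs_lt h hε hε' (by grind) (by grind),
    fun hx => by grind [hx.abs_le_abs h hε hε']⟩

theorem definable_uniformlySmall (hα : Irrational α) (hε : 0 < ε)
    (hlt : Definable₂ (.univ (S g)) (AngleLT α ε)) (hTdef : Definable₃ (.univ (S g)) T)
    (hT : RecognizesProduct α ε T) : Definable₂ (.univ (S g)) (UniformlySmall α ε) := by
  have hsmall := Definable.eventually_smallAngle
    (P := fun v m => (∃ w, T m 1 w ∧ AngleLT α ε w (v 0)) → ∃ w, T m (v 1) w) hα hε hlt <| .imp
      (.ex <| (hTdef.comp (.var 1) (.one g) (.var 0)).and (hlt.comp (.var 0) (.var 2)))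
      (.ex <| hTdef.comp (.var 1) (.var 3) (.var 0))
  refine hsmall.congr fun v => eventually_congr ?_
  filter_upwards [hT.exists_angleLT_iff 1, hT.exists_iff (v 1)] with m hone hn
  rw [hone, hn]

theorem definable_nonneg (h : LinearIndependent ℚ ![(1 : ℝ), α, α ^ 2])
    (hε : 0 < ε) (hε' : ε < 1 / 2) (hlt : Definable₂ (.univ (S g)) (AngleLT α ε))
    (hTdef : Definable₃ (.univ (S g)) T) (hT : RecognizesProduct α ε T) :
    Definable₁ (.univ (S g)) fun x => 0 ≤ x := by
  have hsmall := definable_uniformlySmall (irrational_of_linearIndependent h) hε hlt hTdef hT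
  have habs : Definable₂ (.univ (S g)) (AbsLT α ε) :=
    .ex <| (hsmall.comp (.var 0) (.var 1)).and (hsmall.comp (.var 0) (.var 2)).not
  have hx : DefinableFun (.univ (S g)) fun v => 2 * v 0 := (DefinableFun.var 0).const_mul 2
  exact (habs.comp (hx.sub (.one g)) (hx.add (.intConst g 2))).congr
    fun _ => (nonneg_iff_absLT h hε hε').symm

end Order

section Divisibility

open Filter Topology

variable {α ε : ℝ} {T : ℤ → ℤ → ℤ → Prop} {g : ℤ → ℤ} {k n : ℕ}

theorem one_le_mul_norm {u : UnitAddCircle} (hk : 0 < k) (hku : k • u = 0) (hu : u ≠ 0) :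
    1 ≤ k * ‖u‖ := by
  have horder : 1 ≤ addOrderOf u * ‖u‖ := by
    simpa using AddCircle.le_add_order_smul_norm_of_isOfFinAddOrder
      (isOfFinAddOrder_iff_nsmul_eq_zero.2 ⟨k, hk, hku⟩) hu
  refine horder.trans (mul_le_mul_of_nonneg_right ?_ (norm_nonneg u))
  exact_mod_cast Nat.le_of_dvd hk (addOrderOf_dvd_of_nsmul_eq_zero hku)

theorem exists_frequently_angleLT_iff_dvd (h : LinearIndependent ℚ ![(1 : ℝ), α, α ^ 2])
    (hε : 0 < ε) (hk : 0 < k) {s : Set ℤ} (hs : s.Finite) :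
    ∃ t, ∃ᶠ m in smallAngle α, ∀ x ∈ s, AngleLT α ε (product α m x) t ↔ (k : ℤ) ∣ x := by
  let y : UnitAddCircle := (1 / k : ℝ)
  have hy : addOrderOf y = k := AddCircle.addOrderOf_period_div hk
  have hk' : (0 : ℝ) < k := by exact_mod_cast hk
  obtain ⟨t, hpos, ht⟩ := exists_norm_angle_mem_Ioo (irrational_of_linearIndependent h) le_rfl
    one_half_pos (lt_min hε (one_div_pos.2 hk'))
  rw [lt_min_iff, lt_div_iff₀' hk'] at ht
  have hnhds (x : ℤ) : ∀ᶠ z : ℤ → UnitAddCircle in 𝓝 fun n => n • y,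
      ‖z x‖ < ‖angle α t‖ ↔ (k : ℤ) ∣ x := by
    have hcont : ContinuousAt (fun z : ℤ → UnitAddCircle => ‖z x‖) fun n => n • y :=
      (continuous_apply x).norm.continuousAt
    rw [← hy, addOrderOf_dvd_iff_zsmul_eq_zero]
    by_cases hx : x • y = 0
    · filter_upwards [hcont.eventually_lt_const (u := ‖angle α t‖) (by simpa [hx] using hpos)]
        with z hz using iff_of_true hz hx
    · have hle : 1 ≤ k * ‖x • y‖ := by
        refine one_le_mul_norm hk ?_ hx
        rw [smul_comm, addOrderOf_dvd_iff_nsmul_eq_zero.1 hy.dvd, smul_zero]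
      filter_upwards [hcont.eventually_const_lt (u := ‖angle α t‖)
        (lt_of_mul_lt_mul_left (ht.2.trans_le hle) hk'.le)] with z hz
        using iff_of_false hz.not_gt hx
  refine ⟨t, ((mapClusterPt_angle_product h y).frequently <|
    (eventually_all_finite hs).2 fun x _ => hnhds x).mono fun m hm x hx => ?_⟩
  rw [AngleLT, and_iff_left ht.1, hm x hx]

theorem dvd_of_descent {X : ℤ → Prop} (hk : 0 < k) (hpos : ∀ x : ℤ, 0 < x → x < k → ¬ X x)
    (hdescent : ∀ x : ℤ, k ≤ x → x ≤ n → X x → X (x - k)) (hn : X n) : k ∣ n := by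
  suffices ∀ x ≤ n, X x → k ∣ x from this n le_rfl hn
  intro x
  induction x using Nat.strong_induction_on with
  | h x ih =>
    intro hxn hx
    rcases lt_or_ge x k with hxk | hkx
    · obtain rfl : x = 0 := by
        by_contra hx0
        exact hpos x (by omega) (by omega) hx
      exact dvd_zero k
    · have hX : X (x - k : ℕ) := by
        push_cast [hkx]
        exact hdescent x (by omega) (by omega) hx
      rw [← Nat.sub_add_cancel hkx]
      exact (ih (x - k) (by omega) (by omega) hX).add dvd_rfl

theorem exists_definable_iff_dvd (h : LinearIndependent ℚ ![(1 : ℝ), α, α ^ 2])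
    (hε : 0 < ε) (hnonneg : Definable₁ (.univ (S g)) fun x => 0 ≤ x)
    (hlt : Definable₂ (.univ (S g)) (AngleLT α ε))
    (hTdef : Definable₃ (.univ (S g)) T) (hT : RecognizesProduct α ε T) :
    ∃ Q, Definable₂ (.univ (S g)) Q ∧ ∀ k n : ℕ, 0 < k → (Q k n ↔ k ∣ n) := by
  let X (m t x : ℤ) : Prop := ∃ w, T m x w ∧ AngleLT α ε w t
  refine ⟨fun k n => ∃ m t, (∀ x : ℤ, 0 < x → x < k → ¬ X m t x) ∧
    (∀ x : ℤ, k ≤ x → x ≤ n → X m t x → X m t (x - k)) ∧ X m t n, ?_, fun k n hk => ⟨?_, ?_⟩⟩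
  · have hXdef : Definable₃ (.univ (S g)) X :=
      .ex <| (hTdef.comp (.var 1) (.var 3) (.var 0)).and (hlt.comp (.var 0) (.var 2))
    have hle : Definable₂ (.univ (S g)) (· ≤ ·) :=
      (hnonneg.comp ((DefinableFun.var 1).sub (.var 0))).congr fun _ => sub_nonneg
    have hltInt : Definable₂ (.univ (S g)) (· < ·) :=
      (hle.comp (.var 1) (.var 0)).not.congr fun _ => not_le
    refine .ex <| .ex <| .and (.all ?_) <| .and (.all ?_) (hXdef.comp (.var 1) (.var 0) (.var 3))
    · exact (hltInt.comp (.intConst g 0) (.var 0)).imp <|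
        (hltInt.comp (.var 0) (.var 3)).imp (hXdef.comp (.var 2) (.var 1) (.var 0)).not
    · exact (hle.comp (.var 3) (.var 0)).imp <| (hle.comp (.var 0) (.var 4)).imp <|
        (hXdef.comp (.var 2) (.var 1) (.var 0)).imp <|
          hXdef.comp (.var 2) (.var 1) ((DefinableFun.var 0).sub (.var 3))
  · rintro ⟨m, t, hpos, hdescent, hn⟩
    exact dvd_of_descent hk hpos hdescent hn
  · intro hkn
    have hfin := Set.finite_Icc (0 : ℤ) (n + k)
    obtain ⟨t, hfreq⟩ := exists_frequently_angleLT_iff_dvd h hε hk hfin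
    obtain ⟨m, hm, hmT⟩ := (hfreq.and_eventually <| (eventually_all_finite hfin).2 fun x _ =>
      hT.exists_angleLT_iff x).exists
    have hX (x : ℤ) (hx : 0 ≤ x) (hxn : x ≤ n + k) : X m t x ↔ (k : ℤ) ∣ x :=
      (hmT x ⟨hx, hxn⟩ t).trans (hm x ⟨hx, hxn⟩)
    refine ⟨m, t, fun x hx hxk => ?_, fun x hkx hxn => ?_, ?_⟩
    · rw [hX x hx.le (by omega)]
      exact fun hdvd => (Int.le_of_dvd hx hdvd).not_gt hxk
    · rw [hX x (by omega) (by omega), hX (x - k) (by omega) (by omega)]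
      exact (dvd_sub_self_right).2
    · rw [hX n (by omega) (by omega)]
      exact_mod_cast hkn

end Divisibility

section Transfer

theorem not_computablePred_of_definable_dvd {g : ℤ → ℤ} {Q : ℤ → ℤ → Prop}
    (hnonneg : Definable₁ (.univ (S g)) fun x => 0 ≤ x) (hQ : Definable₂ (.univ (S g)) Q)
    (hdvd : ∀ k n : ℕ, 0 < k → (Q k n ↔ k ∣ n)) :
    ¬ ComputablePred fun c => c ∈ theoryCodes g := by
  have hrange : Definable₁ (.univ (S g)) (· ∈ Set.range (Nat.castEmbedding (R := ℤ))) :=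
    hnonneg.congr fun v => ⟨fun h => ⟨_, Int.toNat_of_nonneg h⟩, fun ⟨n, hn⟩ => hn ▸ n.cast_nonneg⟩
  let D := DefinableDomain.ofEmbedding _ hrange
  have hadd : DefinableFun₂ D (· + ·) :=
    (Definable.comp_embed (definableFun_add g) D).congr fun _ => Int.ofNat_inj
  have hzero := definableFun_zero hadd
  have hdvdD : Definable₂ D (· ∣ ·) := by
    refine (((Definable.eq (.var 0) hzero).and (.eq (.var 1) hzero)).or <|
      (Definable.eq (.var 0) hzero).not.and (hQ.comp_embed D)).congr fun v => ?_
    change v 0 = 0 ∧ v 1 = 0 ∨ v 0 ≠ 0 ∧ Q (v 0) (v 1) ↔ v 0 ∣ v 1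
    rcases (v 0).eq_zero_or_pos with h | h
    · simp [h]
    · simp [h.ne', hdvd _ _ h]
  exact (DefinesArithmetic.of_add_dvd hadd hdvdD).not_computablePred fun _ => rfl

end Transfer

theorem undecidable_general (α β C : ℝ) (hβ : β ≠ 0)
    (hind : LinearIndependent ℚ ![(1 : ℝ), α, α ^ 2])
    (g : ℤ → ℤ) (hg : ∀ n : ℤ, |g n - β * n * round (α * n)| ≤ C) :
    ¬ ComputablePred (fun c => c ∈ theoryCodes g) := by
  have hα := irrational_of_linearIndependent hind
  have hg' (n : ℤ) : |(g n : ℝ) - β * (n * nearest α n : ℤ)| ≤ C := by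
    rw [Int.cast_mul, ← mul_assoc]
    exact hg n
  obtain ⟨ε, T, hε, hε', hlt, hTdef, hT⟩ := exists_definable_recognizesProduct hα hβ hg'
  have hnonneg := definable_nonneg hind hε hε' hlt hTdef hT
  obtain ⟨Q, hQ, hdvd⟩ := exists_definable_iff_dvd hind hε hnonneg hlt hTdef hT
  exact not_computablePred_of_definable_dvd hnonneg hQ hdvd

theorem undecidable (α β : ℝ) (hβ : β ≠ 0)
    (hind : LinearIndependent ℚ ![(1 : ℝ), α, α ^ 2])
    (g : ℤ → ℤ) (hg : ∀ n : ℤ, g n = round (β * n * round (α * n))) :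
    ¬ ComputablePred (fun c => c ∈ theoryCodes g) :=
  undecidable_general α β (1 / 2) hβ hind g fun n => by
    rw [hg, abs_sub_comm]
    exact abs_sub_round _

end Stmt1
end
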